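/- For every prime ℓ and every integer a ≥ 1, the symplectic group Sp_{2a}(𝔽_ℓ) has exactly one irreducible complex character of ℓ-defect zero (namely the Steinberg character). -/

import Mathlib

namespace SpSt

/-- A class function vanishing at every element commuting with a nontrivial element of order `ℓ`. -/
def Good {G k : Type*} [Group G] [Field k] (ℓ : ℕ) (f : G → k) : Prop :=
  (∀ g h : G, f (h * g * h⁻¹) = f g) ∧
  (∀ g d : G, d ≠ 1 → d ^ ℓ = 1 → d * g = g * d → f g = 0)

/-- Coset sums of `f` along a subgroup. -/
noncomputable def cosetSum {G k : Type*} [Group G] [Finite G] [AddCommMonoid k] (U : Subgroup G)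
    (f : G → k) (g : G) : k := ∑ᶠ u : U, f (g * u)

lemma cosetSum_eq {G k : Type*} [Group G] [Finite G] [AddCommMonoid k] (U : Subgroup G) [Fintype U]
    (f : G → k) (g : G) : cosetSum U f g = ∑ u : U, f (g * u) := finsum_eq_sum_of_fintype _

/-- Convolution. -/
def conv {G k : Type*} [Group G] [Fintype G] [CommRing k] (f h : G → k) (g : G) : k :=
  ∑ x, f x * h (x⁻¹ * g)

/-- Left translation as an action on functions. -/
def lt {G k : Type*} [Group G] (u : G) (f : G → k) (g : G) : k := f (u⁻¹ * g)

/-- An `ℓ`-group acting linearly on a nonzero space of characteristic `ℓ` has a nonzero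
fixed vector. -/
lemma exists_fixed {H M : Type*} [Group H] [Finite H] {ℓ : ℕ} (hℓ : ℓ.Prime) (hH : IsPGroup ℓ H)
    [AddCommGroup M] [Module (ZMod ℓ) M] [DistribMulAction H M] (v : M) (hv : v ≠ 0) :
    ∃ w : M, w ∈ Submodule.span (ZMod ℓ) (Set.range fun h : H => h • v) ∧ w ≠ 0 ∧
      ∀ h : H, h • w = w := by
  classical
  haveI : Fact ℓ.Prime := ⟨hℓ⟩
  set S := Submodule.span (ZMod ℓ) (Set.range fun h : H => h • v) with hS
  have hsm : ∀ (h : H) (x : M), x ∈ S → h • x ∈ S := by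
    intro h x hx
    refine Submodule.span_induction (p := fun x _ => h • x ∈ S) ?_ ?_ ?_ ?_ hx
    · rintro _ ⟨h', rfl⟩
      refine Submodule.subset_span ⟨h * h', ?_⟩
      simp [mul_smul]
    · simp
    · intro x y _ _ hx hy
      rw [smul_add]; exact S.add_mem hx hy
    · intro c x _ hx
      have : h • (c • x) = c • (h • x) := by
        exact ZMod.map_smul (DistribSMul.toAddMonoidHom M h) c x
      rw [this]; exact S.smul_mem _ hx
  letI : MulAction H S :=
    { smul := fun h x => ⟨h • (x : M), hsm h x x.2⟩
      one_smul := fun x => Subtype.ext (one_smul H (x : M))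
      mul_smul := fun a b x => Subtype.ext (mul_smul a b (x : M)) }
  have hco : ∀ (h : H) (x : S), ((h • x : S) : M) = h • (x : M) := fun _ _ => rfl
  haveI : Module.Finite (ZMod ℓ) S :=
    Module.Finite.span_of_finite (ZMod ℓ) (Set.finite_range _)
  haveI : Finite S := Module.finite_of_finite (ZMod ℓ)
  haveI := Fintype.ofFinite S
  have hvS : v ∈ S := Submodule.subset_span ⟨1, by simp⟩
  have hcard : ℓ ∣ Nat.card S := by
    rw [Module.natCard_eq_pow_finrank (K := ZMod ℓ), Nat.card_zmod]
    refine dvd_pow_self _ ?_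
    intro h0
    have := Module.finrank_zero_iff.1 h0
    exact hv (congrArg Subtype.val (Subsingleton.elim (⟨v, hvS⟩ : S) 0))
  have h0 : (0 : S) ∈ MulAction.fixedPoints H S := by
    intro h; apply Subtype.ext; rw [hco]; simp
  obtain ⟨w, hw, hne⟩ := hH.exists_fixed_point_of_prime_dvd_card_of_fixed_point S hcard h0
  refine ⟨w, w.2, fun h => hne (Subtype.ext h.symm), fun h => ?_⟩
  rw [← hco, hw h]

section R1

variable {G k : Type*} [Group G] [Fintype G] [Field k]

lemma conv_lt {e : G → k} (he : ∀ g h : G, e (h * g * h⁻¹) = e g) (f : G → k) (u : G) :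
    conv e (lt u f) = lt u (conv e f) := by
  funext g
  unfold conv lt
  rw [← Equiv.sum_comp (MulAut.conj u).toEquiv]
  refine Finset.sum_congr rfl fun x _ => ?_
  have := he x u
  simp only [mul_assoc] at this
  simp [MulAut.conj_apply, mul_assoc, this]

lemma conv_add (e f h : G → k) : conv e (f + h) = conv e f + conv e h := by
  funext g; simp [conv, mul_add, Finset.sum_add_distrib]

lemma conv_smul (e f : G → k) (c : k) : conv e (c • f) = c • conv e f := by
  funext g; simp [conv, Finset.mul_sum, mul_left_comm]

lemma conv_cosetSum (U : Subgroup G) (e f : G → k) :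
    conv e (cosetSum U f) = cosetSum U (conv e f) := by
  classical
  funext g
  rw [cosetSum_eq]
  unfold conv
  rw [Finset.sum_comm]
  refine Finset.sum_congr rfl fun x _ => ?_
  rw [cosetSum_eq, Finset.mul_sum]
  simp [mul_assoc]

lemma cosetSum_ne_zero {ℓ : ℕ} (hℓ : ℓ.Prime) [CharP k ℓ] (U : Subgroup G) (hU : IsPGroup ℓ U)
    {e : G → k} (he : Good ℓ e) (hee : conv e e = e) (h0 : e ≠ 0) : cosetSum U e ≠ 0 := by
  classical
  intro hF
  haveI : Fact ℓ.Prime := ⟨hℓ⟩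
  letI : Module (ZMod ℓ) (G → k) := AddCommGroup.zmodModule (n := ℓ) (fun x => by
    funext g; simp)
  letI : DistribMulAction U (G → k) :=
    { smul := fun u f => lt (u : G) f
      one_smul := fun f => by
        show lt ((1 : U) : G) f = f
        funext g; simp [lt]
      mul_smul := fun a b f => by
        show lt ((a * b : U) : G) f = lt (a : G) (lt (b : G) f)
        funext g; simp [lt, mul_assoc]
      smul_zero := fun u => rfl
      smul_add := fun u f g => rfl }
  obtain ⟨w, hwS, hw0, hwf⟩ := exists_fixed hℓ hU e h0
  have hwf' : ∀ (u : U) (g : G), w ((u : G)⁻¹ * g) = w g := fun u g => congrFun (hwf u) g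
  have hew : conv e w = w := by
    let T : (G → k) →+ (G → k) :=
        { toFun := conv e, map_zero' := by funext g; simp [conv], map_add' := conv_add e }
    refine Submodule.span_induction (p := fun x _ => conv e x = x) ?_ ?_ ?_ ?_ hwS
    · rintro _ ⟨u, rfl⟩
      show conv e (lt (u : G) e) = lt (u : G) e
      rw [conv_lt he.1, hee]
    · exact T.map_zero
    · intro x y _ _ hx hy
      rw [conv_add, hx, hy]
    · intro c x _ hx
      have := ZMod.map_smul T c x
      exact this.trans (congrArg (c • ·) hx)
  -- choose orbit representatives for conjugation by `U`
  let s : Setoid G :=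
    { r := fun g h => ∃ u : U, h = (u : G) * g * (u : G)⁻¹
      iseqv := ⟨fun g => ⟨1, by simp⟩, fun {g h} ⟨u, hu⟩ => ⟨u⁻¹, by simp [hu, mul_assoc]⟩,
        fun {g h l} ⟨u, hu⟩ ⟨v, hv⟩ => ⟨v * u, by simp [hu, hv, mul_assoc]⟩⟩ }
  let rep : G → G := fun g => (Quotient.mk s g).out
  have hrep : ∀ g, ∃ u : U, g = (u : G) * rep g * (u : G)⁻¹ := fun g => Quotient.mk_out (s := s) g
  have hrepu : ∀ g (u : U), rep ((u : G)⁻¹ * g * u) = rep g := by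
    intro g u
    have : Quotient.mk s ((u : G)⁻¹ * g * u) = Quotient.mk s g :=
      Quotient.sound (s := s) (show ∃ v : U, g = (v : G) * ((u : G)⁻¹ * g * u) * (v : G)⁻¹ from
        ⟨u, by simp [mul_assoc]⟩)
    simp only [rep, this]
  let a : G → k := fun g => if g = rep g then e g else 0
  have hinv : ∀ (g : G) (u : U), e ((u : G)⁻¹ * g * u) = e g := by
    intro g u
    simpa using he.1 g (u : G)⁻¹
  have hea : ∀ g, e g = ∑ u : U, a ((u : G)⁻¹ * g * u) := by
    intro g
    have h1 : ∀ u : U, a ((u : G)⁻¹ * g * u) =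
        if (u : G)⁻¹ * g * u = rep g then e g else 0 := by
      intro u
      simp only [a, hrepu, hinv]
    simp only [h1]
    by_cases hc : ∃ d : U, d ≠ 1 ∧ (d : G) * g = g * d
    · obtain ⟨d, hd1, hd⟩ := hc
      have hz : e g = 0 := by
        obtain ⟨n, hn⟩ := (IsPGroup.iff_orderOf.1 hU) d
        have hn0 : n ≠ 0 := by
          rintro rfl
          exact hd1 (orderOf_eq_one_iff.1 (by simpa using hn))
        obtain ⟨m, rfl⟩ := Nat.exists_eq_succ_of_ne_zero hn0
        refine he.2 g ((d : G) ^ ℓ ^ m) ?_ ?_ ?_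
        · intro h
          have : d ^ ℓ ^ m = 1 := Subtype.ext (by simpa using h)
          have h2 := orderOf_dvd_of_pow_eq_one this
          rw [hn] at h2
          exact absurd (Nat.le_of_dvd (pow_pos hℓ.pos _) h2)
            (not_le.2 (Nat.pow_lt_pow_right hℓ.one_lt (Nat.lt_succ_self m)))
        · rw [← pow_mul, ← pow_succ]
          have := pow_orderOf_eq_one d
          rw [hn] at this
          simpa using congrArg Subtype.val this
        · have : Commute (d : G) g := hd
          exact this.pow_left _
      simp [hz]
    · push Not at hc
      obtain ⟨u0, hu0⟩ := hrep g
      rw [Finset.sum_eq_single u0]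
      · rw [if_pos]
        conv_lhs => rw [hu0]
        simp [mul_assoc]
      · intro v _ hv
        rw [if_neg]
        intro h
        have hne : v * u0⁻¹ ≠ 1 := fun h => hv (mul_inv_eq_one.1 h)
        refine hc (v * u0⁻¹) hne ?_
        have h3 : g = (v : G) * rep g * (v : G)⁻¹ := by rw [← h]; simp [mul_assoc]
        have h4 : rep g = (u0 : G)⁻¹ * g * u0 := by conv_rhs => rw [hu0]; 
                                                    simp [mul_assoc]
        rw [h4] at h3
        conv_rhs => rw [h3]
        simp [mul_assoc]
      · simp
  let b := conv a w
  have hwb : ∀ g, w g = ∑ u : U, b ((u : G)⁻¹ * g) := by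
    intro g
    conv_lhs => rw [← hew]
    unfold conv
    simp only [hea, Finset.sum_mul]
    rw [Finset.sum_comm]
    refine Finset.sum_congr rfl fun u _ => ?_
    simp only [b, conv]
    rw [← Equiv.sum_comp (MulAut.conj (u : G)).toEquiv]
    refine Finset.sum_congr rfl fun x _ => ?_
    have := hwf' u⁻¹ (x⁻¹ * ((u : G)⁻¹ * g))
    simp [MulAut.conj_apply, mul_assoc] at this ⊢
    exact Or.inl this
  apply hw0
  funext g
  conv_lhs => rw [← hew]
  have hF' : ∀ g, ∑ u : U, e (g * u) = 0 := fun g => by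
    rw [← cosetSum_eq, hF]; rfl
  calc conv e w g = ∑ x, ∑ u : U, e x * b ((u : G)⁻¹ * (x⁻¹ * g)) := by
        simp only [conv, hwb, Finset.mul_sum]
    _ = ∑ u : U, ∑ x, e x * b ((u : G)⁻¹ * (x⁻¹ * g)) := Finset.sum_comm
    _ = ∑ u : U, ∑ y, e (g * y⁻¹ * (u : G)⁻¹) * b y := by
        refine Finset.sum_congr rfl fun u _ => ?_
        rw [← Equiv.sum_comp ((Equiv.inv G).trans ((Equiv.mulLeft g).trans (Equiv.mulRight (u : G)⁻¹)))]
        refine Finset.sum_congr rfl fun x _ => ?_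
        simp [mul_assoc]
    _ = ∑ y, (∑ u : U, e (g * y⁻¹ * (u : G)⁻¹)) * b y := by
        rw [Finset.sum_comm]; simp only [Finset.sum_mul]
    _ = 0 := by
        refine Finset.sum_eq_zero fun y _ => ?_
        have : ∑ u : U, e (g * y⁻¹ * (u : G)⁻¹) = ∑ u : U, e (g * y⁻¹ * (u : G)) := by
          rw [← Equiv.sum_comp (Equiv.inv U)]; simp
        rw [this, hF', zero_mul]

theorem conv_ne_zero {ℓ : ℕ} (hℓ : ℓ.Prime) [CharP k ℓ] (U : Subgroup G) (hU : IsPGroup ℓ U)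
    (hprop : ∀ f1 f2 : G → k, Good ℓ f1 → Good ℓ f2 → ∀ g g', 
      cosetSum U f1 g * cosetSum U f2 g' = cosetSum U f1 g' * cosetSum U f2 g)
    {e1 e2 : G → k} (h1 : Good ℓ e1) (h2 : Good ℓ e2) (hee1 : conv e1 e1 = e1)
    (hee2 : conv e2 e2 = e2) (h10 : e1 ≠ 0) (h20 : e2 ≠ 0) : conv e1 e2 ≠ 0 := by
  intro h
  have n1 := cosetSum_ne_zero hℓ U hU h1 hee1 h10
  have n2 := cosetSum_ne_zero hℓ U hU h2 hee2 h20
  obtain ⟨g0, hg0⟩ := Function.ne_iff.1 n2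
  have hF : cosetSum U e1 = (cosetSum U e1 g0 / cosetSum U e2 g0) • cosetSum U e2 := by
    funext g
    have := hprop e1 e2 h1 h2 g g0
    simp at hg0
    simp only [Pi.smul_apply, smul_eq_mul]
    field_simp
    rw [this]
  apply n1
  have h3 : conv e1 (cosetSum U e1) = cosetSum U e1 := by rw [conv_cosetSum, hee1]
  rw [← h3, hF, conv_smul, conv_cosetSum, h]
  funext g
  simp [cosetSum]

end R1

end SpSt


namespace SpSt

section R2

open CategoryTheory

variable {G : Type} [Group G] [Fintype G]

lemma finrank_inv_eq (V : FDRep ℂ G) :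
    Module.finrank ℂ (V ⟶ V) = Module.finrank ℂ (Representation.linHom V.ρ V.ρ).invariants :=
  (LinearEquiv.finrank_eq (Representation.linHom.invariantsEquivFDRepHom V V)).symm

lemma mem_inv_iff (V : FDRep ℂ G) (T : V →ₗ[ℂ] V) :
    T ∈ (Representation.linHom V.ρ V.ρ).invariants ↔ ∀ g, T ∘ₗ V.ρ g = V.ρ g ∘ₗ T := by
  rw [Representation.mem_invariants]
  refine forall_congr' fun g => ?_
  rw [Representation.linHom_apply]
  constructor
  · intro h
    conv_lhs => rw [← h]
    rw [LinearMap.comp_assoc, LinearMap.comp_assoc]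
    congr 1
    have : V.ρ g⁻¹ ∘ₗ V.ρ g = LinearMap.id := by
      change V.ρ g⁻¹ * V.ρ g = 1
      rw [← map_mul]; simp
    rw [this]; rfl
  · intro h
    rw [← LinearMap.comp_assoc, ← h, LinearMap.comp_assoc]
    have : V.ρ g ∘ₗ V.ρ g⁻¹ = LinearMap.id := by
      change V.ρ g * V.ρ g⁻¹ = 1
      rw [← map_mul]; simp
    rw [this]; rfl

lemma finrank_pos_of_simple (V : FDRep ℂ G) [Simple V] : 0 < Module.finrank ℂ V := by
  by_contra h
  have h0 : Module.finrank ℂ V = 0 := by omega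
  have h1 : Module.finrank ℂ (V ⟶ V) = 1 := by
    rw [FDRep.finrank_hom_simple_simple, if_pos ⟨Iso.refl V⟩]
  rw [finrank_inv_eq] at h1
  have : Subsingleton V := Module.finrank_zero_iff.1 h0
  have : Subsingleton (Representation.linHom V.ρ V.ρ).invariants :=
    ⟨fun a b => Subtype.ext (LinearMap.ext fun v => Subsingleton.elim _ _)⟩
  rw [Module.finrank_zero_of_subsingleton] at h1
  omega

lemma schur (V : FDRep ℂ G) [Simple V] (T : V →ₗ[ℂ] V) (hT : ∀ g, T ∘ₗ V.ρ g = V.ρ g ∘ₗ T) :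
    ∃ c : ℂ, T = c • LinearMap.id := by
  have h1 : Module.finrank ℂ (V ⟶ V) = 1 := by
    rw [FDRep.finrank_hom_simple_simple, if_pos ⟨Iso.refl V⟩]
  rw [finrank_inv_eq] at h1
  let i : (Representation.linHom V.ρ V.ρ).invariants :=
    ⟨LinearMap.id, (mem_inv_iff V _).2 fun g => rfl⟩
  have hi : i ≠ 0 := by
    intro h
    have h2 : (LinearMap.id : V →ₗ[ℂ] V) = 0 := congrArg Subtype.val h
    have : Subsingleton V := ⟨fun a b => by
      have ha := LinearMap.congr_fun h2 a
      have hb := LinearMap.congr_fun h2 b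
      simp at ha hb
      rw [ha, hb]⟩
    have := finrank_pos_of_simple V
    rw [Module.finrank_zero_of_subsingleton] at this
    omega
  obtain ⟨c, hc⟩ := (finrank_eq_one_iff_of_nonzero' i hi).1 h1 ⟨T, (mem_inv_iff V _).2 hT⟩
  exact ⟨c, (congrArg Subtype.val hc).symm⟩

/-- Action of a function on a representation. -/
noncomputable def op (V : FDRep ℂ G) (f : G → ℂ) : V →ₗ[ℂ] V := ∑ x, f x • V.ρ x

lemma trace_mul_op (V : FDRep ℂ G) (f : G → ℂ) (g : G) :
    LinearMap.trace ℂ V (V.ρ g ∘ₗ op V f) = ∑ x, f x * V.character (g * x) := by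
  unfold op FDRep.character
  rw [show V.ρ g ∘ₗ (∑ x, f x • V.ρ x) = ∑ x, V.ρ g ∘ₗ (f x • V.ρ x) from Finset.mul_sum _ (fun x => (f x • V.ρ x : Module.End ℂ V)) (V.ρ g), map_sum]
  refine Finset.sum_congr rfl fun x _ => ?_
  rw [LinearMap.comp_smul, map_smul, map_mul]
  rfl

lemma op_comm (V : FDRep ℂ G) {f : G → ℂ} (hf : ∀ g h : G, f (h * g * h⁻¹) = f g) (g : G) :
    op V f ∘ₗ V.ρ g = V.ρ g ∘ₗ op V f := by
  unfold op
  rw [show V.ρ g ∘ₗ (∑ x, f x • V.ρ x) = ∑ x, V.ρ g ∘ₗ (f x • V.ρ x) from Finset.mul_sum _ (fun x => (f x • V.ρ x : Module.End ℂ V)) (V.ρ g),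
    show (∑ x, f x • V.ρ x) ∘ₗ V.ρ g = ∑ x, (f x • V.ρ x) ∘ₗ V.ρ g from Finset.sum_mul _ (fun x => (f x • V.ρ x : Module.End ℂ V)) (V.ρ g)]
  rw [← Equiv.sum_comp (MulAut.conj g).toEquiv]
  refine Finset.sum_congr rfl fun x _ => ?_
  have h1 : (MulAut.conj g).toEquiv x = g * x * g⁻¹ := rfl
  rw [h1, hf, LinearMap.comp_smul, LinearMap.smul_comp]
  congr 1
  change V.ρ (g * x * g⁻¹) * V.ρ g = V.ρ g * V.ρ x
  rw [← map_mul, ← map_mul]; simp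

lemma op_scalar (V : FDRep ℂ G) [Simple V] {f : G → ℂ} (hf : ∀ g h : G, f (h * g * h⁻¹) = f g) :
    op V f = ((∑ x, f x * V.character x) / (Module.finrank ℂ V : ℂ)) • LinearMap.id := by
  obtain ⟨c, hc⟩ := schur V (op V f) (op_comm V hf)
  have h1 := trace_mul_op V f 1
  simp only [one_mul, map_one] at h1
  have h0 : (Module.finrank ℂ V : ℂ) ≠ 0 := by
    exact_mod_cast (finrank_pos_of_simple V).ne'
  have h2 : c * (Module.finrank ℂ V : ℂ) = ∑ x, f x * V.character x := by
    rw [← h1, hc]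
    change _ = LinearMap.trace ℂ V (c • LinearMap.id)
    rw [map_smul, LinearMap.trace_id, smul_eq_mul]
  rw [hc, ← h2, mul_div_assoc, div_self h0, mul_one]

/-- The central idempotent attached to `V`. -/
noncomputable def cid (V : FDRep ℂ G) (g : G) : ℂ :=
  (Module.finrank ℂ V : ℂ) / (Nat.card G : ℂ) * V.character g⁻¹

lemma cid_class (V : FDRep ℂ G) (g h : G) : cid V (h * g * h⁻¹) = cid V g := by
  unfold cid
  have := V.char_conj g⁻¹ h
  rw [← this]; simp [mul_assoc]

open scoped Classical in
lemma conv_cid (V W : FDRep ℂ G) [Simple V] [Simple W] :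
    conv (cid W) (cid V) = if Nonempty (V ≅ W) then cid V else 0 := by
  have h0 : (Module.finrank ℂ V : ℂ) ≠ 0 := by
    exact_mod_cast (finrank_pos_of_simple V).ne'
  have hG : (Nat.card G : ℂ) ≠ 0 := by exact_mod_cast Nat.card_pos.ne'
  letI : Invertible (Nat.card G : ℂ) := invertibleOfNonzero hG
  have hs := op_scalar V (cid_class W)
  have ho := FDRep.char_orthonormal V W
  have h3 : (∑ x, cid W x * V.character x) = (Module.finrank ℂ W : ℂ) *
      (if Nonempty (V ≅ W) then 1 else 0) := by
    rw [← ho, Finset.mul_sum, Finset.mul_sum]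
    refine Finset.sum_congr rfl fun x _ => ?_
    unfold cid
    field_simp
  have h4 : ∀ g, conv (cid W) (cid V) g = (Module.finrank ℂ V : ℂ) / (Nat.card G : ℂ) *
      LinearMap.trace ℂ V (V.ρ g⁻¹ ∘ₗ op V (cid W)) := by
    intro g
    rw [trace_mul_op, Finset.mul_sum]
    refine Finset.sum_congr rfl fun x _ => ?_
    simp only [cid, mul_inv_rev, inv_inv]
    ring
  funext g
  rw [h4, hs, h3]
  split_ifs with hi
  · have : (Module.finrank ℂ W : ℂ) = Module.finrank ℂ V := by
      obtain ⟨i⟩ := hi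
      have := congrFun (FDRep.char_iso i) 1
      rw [FDRep.char_one, FDRep.char_one] at this
      exact this.symm
    rw [this, mul_one, div_self h0, one_smul, LinearMap.comp_id]
    rfl
  · simp

lemma isIntegral_class (V : FDRep ℂ G) [Simple V] (g : G) :
    ∃ w : ℂ, IsIntegral ℤ w ∧
      cid V g = ((Module.finrank ℂ V : ℂ) / (Nat.card G : ℂ)) ^ 2 *
        (Nat.card (Subgroup.centralizer {g}) : ℂ) * w := by
  classical
  have h0 : (Module.finrank ℂ V : ℂ) ≠ 0 := by
    exact_mod_cast (finrank_pos_of_simple V).ne'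
  have hG : (Nat.card G : ℂ) ≠ 0 := by exact_mod_cast Nat.card_pos.ne'
  let f : G → ℂ := fun x => if IsConj g⁻¹ x then 1 else 0
  have hf : ∀ x h : G, f (h * x * h⁻¹) = f x := by
    intro x h
    have : IsConj x (h * x * h⁻¹) := isConj_iff.2 ⟨h, rfl⟩
    have h2 : IsConj g⁻¹ (h * x * h⁻¹) ↔ IsConj g⁻¹ x :=
      ⟨fun h3 => h3.trans this.symm, fun h3 => h3.trans this⟩
    simp only [f, h2]
  have hs := op_scalar V hf
  set w := (∑ x, f x * V.character x) / (Module.finrank ℂ V : ℂ) with hw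
  have hwint : IsIntegral ℤ w := by
    let φ : MonoidAlgebra ℤ G →ₐ[ℤ] (Module.End ℂ V) := MonoidAlgebra.lift ℤ _ G V.ρ
    let y : MonoidAlgebra ℤ G := ∑ x, if IsConj g⁻¹ x then MonoidAlgebra.single x 1 else 0
    have hφ : φ y = op V f := by
      simp only [y, op, f, map_sum]
      refine Finset.sum_congr rfl fun x _ => ?_
      split_ifs
      · simp [φ, MonoidAlgebra.lift_single]
      · simp
    have h1 : IsIntegral ℤ (φ y) := by
      have : Module.Finite ℤ (MonoidAlgebra ℤ G) := inferInstance
      exact (IsIntegral.of_finite ℤ y).map φ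
    rw [hφ, hs] at h1
    have h2 : w • (LinearMap.id : V →ₗ[ℂ] V) = algebraMap ℂ (Module.End ℂ V) w := by
      rw [Algebra.algebraMap_eq_smul_one]; rfl
    rw [h2] at h1
    have hnt : Nontrivial V := Module.nontrivial_of_finrank_pos (finrank_pos_of_simple V)
    exact (isIntegral_algebraMap_iff (FaithfulSMul.algebraMap_injective ℂ (Module.End ℂ V))).1 h1
  refine ⟨w, hwint, ?_⟩
  have hsum : ∑ x, f x * V.character x = (Nat.card (MulAction.orbit (ConjAct G) g⁻¹) : ℂ) *
      V.character g⁻¹ := by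
    have h1 : ∀ x, f x * V.character x = if IsConj g⁻¹ x then V.character g⁻¹ else 0 := by
      intro x
      simp only [f]
      split_ifs with h
      · obtain ⟨c, rfl⟩ := isConj_iff.1 h
        rw [FDRep.char_conj]; simp
      · simp
    simp only [h1]
    rw [← Finset.sum_filter, Finset.sum_const, nsmul_eq_mul]
    congr 2
    rw [Nat.card_eq_fintype_card, ← Set.toFinset_card]
    congr 1
    ext x
    rw [Set.mem_toFinset, ConjAct.mem_orbit_conjAct, Finset.mem_filter]
    simp only [Finset.mem_univ, true_and]
    exact isConj_comm
  have hcard : Nat.card (MulAction.orbit (ConjAct G) g⁻¹) * Nat.card (Subgroup.centralizer {g})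
      = Nat.card G := by
    have h1 := MulAction.card_orbit_mul_card_stabilizer_eq_card_group (ConjAct G) g⁻¹
    rw [ConjAct.card] at h1
    rw [Nat.card_eq_fintype_card, Nat.card_eq_fintype_card (α := G), ← h1]
    congr 1
    rw [← Nat.card_eq_fintype_card]
    refine Nat.card_congr
      { toFun := fun x => ⟨ConjAct.toConjAct x.1, ?_⟩
        invFun := fun x => ⟨ConjAct.ofConjAct x.1, ?_⟩
        left_inv := fun x => rfl
        right_inv := fun x => rfl }
    · obtain ⟨x, hx⟩ := x
      rw [Subgroup.mem_centralizer_singleton_iff] at hx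
      rw [MulAction.mem_stabilizer_iff, ConjAct.toConjAct_smul]
      have h3 : Commute x g := hx
      have h4 : x * g⁻¹ = g⁻¹ * x := h3.inv_right
      change x * g⁻¹ * x⁻¹ = g⁻¹
      rw [h4]; simp
    · obtain ⟨x, hx⟩ := x
      rw [MulAction.mem_stabilizer_iff, ConjAct.smul_def] at hx
      rw [Subgroup.mem_centralizer_singleton_iff]
      have h2 := mul_inv_eq_iff_eq_mul.1 hx
      have h3 : Commute (ConjAct.ofConjAct x) g⁻¹ := h2
      exact Commute.inv_right_iff.1 h3
  have hcard' : (Nat.card (MulAction.orbit (ConjAct G) g⁻¹) : ℂ) *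
      (Nat.card (Subgroup.centralizer {g}) : ℂ) = Nat.card G := by exact_mod_cast hcard
  rw [hw, hsum]
  unfold cid
  field_simp
  rw [← hcard']
  ring

end R2

end SpSt


namespace SpSt

section R3

open CategoryTheory

variable {G : Type} [Group G] [Fintype G]

lemma exists_valuation {ℓ : ℕ} (hℓ : ℓ.Prime) : ∃ O : ValuationSubring ℂ, (ℓ : ℂ) ∈ O.nonunits := by
  let A : Subring ℂ := (Int.castRingHom ℂ).range
  let l : A := ⟨(ℓ : ℂ), ⟨(ℓ : ℤ), by simp⟩⟩
  have hI : Ideal.span {l} ≠ ⊤ := by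
    rw [Ne, Ideal.span_singleton_eq_top]
    intro h
    obtain ⟨⟨_, ⟨m, rfl⟩⟩, hm⟩ := isUnit_iff_exists_inv.1 h
    have h2 : (ℓ : ℂ) * (m : ℂ) = 1 := congrArg Subtype.val hm
    have h3 : (ℓ : ℤ) * m = 1 := by exact_mod_cast h2
    have h4 := Int.isUnit_iff.1 (IsUnit.of_mul_eq_one _ h3)
    have := hℓ.two_le
    omega
  obtain ⟨O, -, hO⟩ := Ideal.image_subset_nonunits_valuationSubring _ hI
  exact ⟨O, hO ⟨l, Ideal.subset_span rfl, rfl⟩⟩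

lemma mem_of_isIntegral (O : ValuationSubring ℂ) {x : ℂ} (hx : IsIntegral ℤ x) : x ∈ O := by
  have h1 : IsIntegral O x := hx.tower_top
  obtain ⟨y, hy⟩ := (IsIntegrallyClosed.isIntegral_iff (R := O) (K := ℂ)).1 h1
  rw [← hy]; exact y.2

lemma inv_mem {ℓ : ℕ} (O : ValuationSubring ℂ) (hO : (ℓ : ℂ) ∈ O.nonunits) {n : ℕ}
    (hn : Nat.Coprime n ℓ) : ((n : ℂ))⁻¹ ∈ O := by
  have hl : O.valuation (ℓ : ℂ) < 1 := hO
  rw [← O.valuation_le_one_iff]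
  by_contra hc
  rw [not_le] at hc
  have hn1 : O.valuation (n : ℂ) < 1 := by
    rw [map_inv₀] at hc
    exact (one_lt_inv₀ (by
      rw [zero_lt_iff]; intro h0; rw [h0, inv_zero] at hc; exact absurd hc (by simp))).1 hc
  have hb := Nat.gcd_eq_gcd_ab n ℓ
  rw [hn] at hb
  have hb' : (1 : ℂ) = n * (n.gcdA ℓ : ℤ) + ℓ * (n.gcdB ℓ : ℤ) := by exact_mod_cast hb
  have hz : ∀ z : ℤ, O.valuation (z : ℂ) ≤ 1 := fun z => by
    rw [O.valuation_le_one_iff]; exact mem_of_isIntegral O (by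
      simpa using (isIntegral_algebraMap (R := ℤ) (A := ℂ) (x := z)))
  have : O.valuation (1 : ℂ) < 1 := by
    conv_lhs => rw [hb']
    refine Valuation.map_add_lt _ ?_ ?_
    · rw [map_mul]; exact mul_lt_one_of_lt_of_le hn1 (hz _)
    · rw [map_mul]; exact mul_lt_one_of_lt_of_le hl (hz _)
  simp at this

lemma degree_div_mem {ℓ : ℕ} (hℓ : ℓ.Prime) (O : ValuationSubring ℂ) (hO : (ℓ : ℂ) ∈ O.nonunits)
    {d n : ℕ} (hn : n ≠ 0) (h : padicValNat ℓ d = padicValNat ℓ n) :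
    (d : ℂ) / (n : ℂ) ∈ O := by
  rcases eq_or_ne d 0 with rfl | hd
  · simp [O.zero_mem]
  haveI : Fact ℓ.Prime := ⟨hℓ⟩
  set v := padicValNat ℓ n
  obtain ⟨d', hd'⟩ : ℓ ^ v ∣ d := by rw [← h]; exact pow_padicValNat_dvd
  obtain ⟨n', hn'⟩ : ℓ ^ v ∣ n := pow_padicValNat_dvd
  have hc : Nat.Coprime n' ℓ := by
    rw [Nat.coprime_comm, Nat.Prime.coprime_iff_not_dvd hℓ]
    rintro ⟨m, rfl⟩
    apply pow_succ_padicValNat_not_dvd (p := ℓ) hn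
    exact ⟨m, hn'.trans (by rw [pow_succ]; ring)⟩
  have hl0 : ((ℓ : ℂ)) ^ v ≠ 0 := pow_ne_zero _ (by exact_mod_cast hℓ.ne_zero)
  have : (d : ℂ) / n = d' * (n' : ℂ)⁻¹ := by
    rw [hd', hn']; push_cast
    rw [mul_div_mul_left _ _ hl0, div_eq_mul_inv]
  rw [this]
  exact O.mul_mem _ _ (natCast_mem O d') (inv_mem O hO hc)

lemma cid_mem {ℓ : ℕ} (hℓ : ℓ.Prime) (O : ValuationSubring ℂ) (hO : (ℓ : ℂ) ∈ O.nonunits)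
    (V : FDRep ℂ G) [Simple V]
    (hV : padicValNat ℓ (Module.finrank ℂ V) = padicValNat ℓ (Nat.card G)) (g : G) :
    cid V g ∈ O := by
  obtain ⟨w, hw, h⟩ := isIntegral_class V g
  rw [h]
  have h1 := degree_div_mem hℓ O hO (Nat.card_pos (α := G)).ne' hV
  exact O.mul_mem _ _ (O.mul_mem _ _ (pow_mem h1 2) (natCast_mem O _)) (mem_of_isIntegral O hw)

lemma cid_mem_max {ℓ : ℕ} (hℓ : ℓ.Prime) (O : ValuationSubring ℂ) (hO : (ℓ : ℂ) ∈ O.nonunits)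
    (V : FDRep ℂ G) [Simple V]
    (hV : padicValNat ℓ (Module.finrank ℂ V) = padicValNat ℓ (Nat.card G)) (g d : G)
    (hd1 : d ≠ 1) (hd : d ^ ℓ = 1) (hdg : d * g = g * d) :
    O.valuation (cid V g) < 1 := by
  obtain ⟨w, hw, h⟩ := isIntegral_class V g
  have h1 := degree_div_mem hℓ O hO (Nat.card_pos (α := G)).ne' hV
  have hdvd : ℓ ∣ Nat.card (Subgroup.centralizer {g}) := by
    have ho : orderOf d = ℓ := by
      haveI : Fact ℓ.Prime := ⟨hℓ⟩
      exact orderOf_eq_prime hd hd1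
    let d' : Subgroup.centralizer {g} := ⟨d, Subgroup.mem_centralizer_singleton_iff.2 hdg⟩
    have : orderOf d' = ℓ := by rw [← ho]; exact (Subgroup.orderOf_mk d d'.2)
    rw [← this]
    exact orderOf_dvd_natCard d'
  obtain ⟨m, hm⟩ := hdvd
  have hl : O.valuation (ℓ : ℂ) < 1 := hO
  have h2 : ((Module.finrank ℂ V : ℂ) / (Nat.card G : ℂ)) ^ 2 * m * w ∈ O :=
    O.mul_mem _ _ (O.mul_mem _ _ (pow_mem h1 2) (natCast_mem O _)) (mem_of_isIntegral O hw)
  have h3 : cid V g = ℓ * (((Module.finrank ℂ V : ℂ) / (Nat.card G : ℂ)) ^ 2 * m * w) := by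
    rw [h, hm]; push_cast; ring
  rw [h3, map_mul]
  exact mul_lt_one_of_lt_of_le hl ((O.valuation_le_one_iff _).2 h2)

/-- The reduction of the central idempotent. -/
noncomputable def red {ℓ : ℕ} (hℓ : ℓ.Prime) (O : ValuationSubring ℂ) (hO : (ℓ : ℂ) ∈ O.nonunits)
    (V : FDRep ℂ G) [Simple V]
    (hV : padicValNat ℓ (Module.finrank ℂ V) = padicValNat ℓ (Nat.card G)) (g : G) :
    IsLocalRing.ResidueField O :=
  IsLocalRing.residue O ⟨cid V g, cid_mem hℓ O hO V hV g⟩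

lemma red_eq_zero {ℓ : ℕ} (hℓ : ℓ.Prime) (O : ValuationSubring ℂ) (hO : (ℓ : ℂ) ∈ O.nonunits)
    (V : FDRep ℂ G) [Simple V]
    (hV : padicValNat ℓ (Module.finrank ℂ V) = padicValNat ℓ (Nat.card G)) (g : G) :
    red hℓ O hO V hV g = 0 ↔ O.valuation (cid V g) < 1 := by
  unfold red
  rw [IsLocalRing.residue_eq_zero_iff, ValuationSubring.valuation_lt_one_iff]

lemma red_good {ℓ : ℕ} (hℓ : ℓ.Prime) (O : ValuationSubring ℂ) (hO : (ℓ : ℂ) ∈ O.nonunits)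
    (V : FDRep ℂ G) [Simple V]
    (hV : padicValNat ℓ (Module.finrank ℂ V) = padicValNat ℓ (Nat.card G)) :
    Good ℓ (red hℓ O hO V hV) := by
  constructor
  · intro g h
    unfold red
    congr 2
    exact cid_class V g h
  · intro g d h1 h2 h3
    rw [red_eq_zero]
    exact cid_mem_max hℓ O hO V hV g d h1 h2 h3

lemma red_conv {ℓ : ℕ} (hℓ : ℓ.Prime) (O : ValuationSubring ℂ) (hO : (ℓ : ℂ) ∈ O.nonunits)
    (V W : FDRep ℂ G) [Simple V] [Simple W]
    (hV : padicValNat ℓ (Module.finrank ℂ V) = padicValNat ℓ (Nat.card G))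
    (hW : padicValNat ℓ (Module.finrank ℂ W) = padicValNat ℓ (Nat.card G)) (g : G)
    (x : O) (hx : conv (cid W) (cid V) g = x) :
    conv (red hℓ O hO W hW) (red hℓ O hO V hV) g = IsLocalRing.residue O x := by
  have : x = ∑ y : G, (⟨cid W y, cid_mem hℓ O hO W hW y⟩ : O) *
      ⟨cid V (y⁻¹ * g), cid_mem hℓ O hO V hV (y⁻¹ * g)⟩ := by
    apply Subtype.ext
    rw [← hx]
    simp [conv]
  rw [this, map_sum]
  unfold conv red
  exact Finset.sum_congr rfl fun y _ => (map_mul _ _ _).symm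

lemma red_ne_zero {ℓ : ℕ} (hℓ : ℓ.Prime) (O : ValuationSubring ℂ) (hO : (ℓ : ℂ) ∈ O.nonunits)
    (V : FDRep ℂ G) [Simple V]
    (hV : padicValNat ℓ (Module.finrank ℂ V) = padicValNat ℓ (Nat.card G)) :
    red hℓ O hO V hV ≠ 0 := by
  intro h0
  have hlt : ∀ g, O.valuation (cid V g) < 1 := fun g =>
    (red_eq_zero hℓ O hO V hV g).1 (congrFun h0 g)
  obtain ⟨g0, hg0⟩ := Finite.exists_max (fun g => O.valuation (cid V g))
  have hG : (Nat.card G : ℂ) ≠ 0 := by exact_mod_cast Nat.card_pos.ne'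
  have hd : (Module.finrank ℂ V : ℂ) ≠ 0 := by
    exact_mod_cast (finrank_pos_of_simple V).ne'
  have h1 : cid V 1 ≠ 0 := by
    unfold cid
    rw [inv_one, FDRep.char_one]
    exact mul_ne_zero (div_ne_zero hd hG) hd
  have hM : O.valuation (cid V g0) ≠ 0 := by
    have h2 : 0 < O.valuation (cid V 1) := zero_lt_iff.2 (by simpa using h1)
    exact (h2.trans_le (hg0 1)).ne'
  have hcc : conv (cid V) (cid V) = cid V := by
    classical
    rw [conv_cid, if_pos ⟨Iso.refl V⟩]
  have : O.valuation (cid V g0) < O.valuation (cid V g0) := by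
    conv_lhs => rw [← hcc]
    unfold conv
    refine Valuation.map_sum_lt _ hM fun x _ => ?_
    rw [map_mul]
    calc _ ≤ O.valuation (cid V x) * O.valuation (cid V g0) := mul_le_mul_right (hg0 _) _
      _ < 1 * O.valuation (cid V g0) := mul_lt_mul_of_pos_right (hlt x) (zero_lt_iff.2 hM)
      _ = _ := one_mul _
  exact lt_irrefl _ this

theorem char_unique {ℓ : ℕ} (hℓ : ℓ.Prime) (U : Subgroup G) (hU : IsPGroup ℓ U)
    (hprop : ∀ (k : Type) [Field k] [CharP k ℓ] (f1 f2 : G → k), Good ℓ f1 → Good ℓ f2 → ∀ g g',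
      cosetSum U f1 g * cosetSum U f2 g' = cosetSum U f1 g' * cosetSum U f2 g)
    (V W : FDRep ℂ G) (sV : Simple V) (sW : Simple W)
    (hV : padicValNat ℓ (Module.finrank ℂ V) = padicValNat ℓ (Nat.card G))
    (hW : padicValNat ℓ (Module.finrank ℂ W) = padicValNat ℓ (Nat.card G)) :
    V.character = W.character := by
  classical
  by_contra hne
  have hiso : ¬ Nonempty (V ≅ W) := fun ⟨i⟩ => hne (FDRep.char_iso i)
  obtain ⟨O, hO⟩ := exists_valuation hℓ
  let k := IsLocalRing.ResidueField O
  haveI : CharP k ℓ := by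
    have h0 : ((ℓ : ℕ) : k) = 0 := by
      have : ((ℓ : ℕ) : k) = IsLocalRing.residue O ((ℓ : ℕ) : O) := by simp [k]
      rw [this, IsLocalRing.residue_eq_zero_iff, ValuationSubring.valuation_lt_one_iff]
      exact hO
    haveI : Fact ℓ.Prime := ⟨hℓ⟩
    exact (CharP.charP_iff_prime_eq_zero hℓ).2 h0
  have hid : ∀ (X : FDRep ℂ G) (sX : Simple X)
      (hX : padicValNat ℓ (Module.finrank ℂ X) = padicValNat ℓ (Nat.card G)),
      conv (red hℓ O hO X hX) (red hℓ O hO X hX) = red hℓ O hO X hX := by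
    intro X sX hX
    funext g
    rw [red_conv hℓ O hO X X hX hX g ⟨cid X g, cid_mem hℓ O hO X hX g⟩]
    · rfl
    · rw [conv_cid, if_pos ⟨Iso.refl X⟩]
  refine conv_ne_zero hℓ U hU (hprop k) (red_good hℓ O hO W hW) (red_good hℓ O hO V hV)
    (hid W sW hW) (hid V sV hV) (red_ne_zero hℓ O hO W hW) (red_ne_zero hℓ O hO V hV) ?_
  funext g
  rw [red_conv hℓ O hO V W hV hW g 0]
  · simp
  · rw [conv_cid, if_neg hiso]; rfl

end R3

end SpSt


open Matrix

namespace SpSt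

section Basics

variable {a : ℕ} {F : Type} [Field F]

/-- The index type. -/
abbrev Ix (a : ℕ) := Fin a ⊕ Fin a

/-- The symplectic group. -/
abbrev Sp (a : ℕ) (F : Type) [Field F] := symplecticGroup (Fin a) F

/-- Height function on indices. -/
def rh : Ix a → ℤ
  | Sum.inl i => (i : ℤ) - a
  | Sum.inr i => a - (i : ℤ)

@[simp] lemma rh_inl (i : Fin a) : rh (Sum.inl i) = (i : ℤ) - a := rfl
@[simp] lemma rh_inr (i : Fin a) : rh (Sum.inr i) = (a : ℤ) - i := rfl

lemma rh_swap (p : Ix a) : rh p.swap = - rh p := by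
  rcases p with i | i <;> simp

lemma rh_inj : Function.Injective (rh : Ix a → ℤ) := by
  intro p q h
  rcases p with i | i <;> rcases q with j | j <;> simp at h
  · congr 1; ext; omega
  · have := i.2; have := j.2; omega
  · have := i.2; have := j.2; omega
  · congr 1; ext; omega

/-- Sign of an index. -/
def sg (F : Type) [Field F] : Ix a → F
  | Sum.inl _ => 1
  | Sum.inr _ => -1

@[simp] lemma sg_inl (i : Fin a) : sg F (Sum.inl i) = 1 := rfl
@[simp] lemma sg_inr (i : Fin a) : sg F (Sum.inr i) = -1 := rfl
lemma sg_sq (p : Ix a) : sg F p * sg F p = 1 := by rcases p with i | i <;> simp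
lemma sg_ne (p : Ix a) : sg F p ≠ 0 := by rcases p with i | i <;> simp
lemma sg_swap (p : Ix a) : sg F p.swap = - sg F p := by rcases p with i | i <;> simp

lemma J_apply (p q : Ix a) : J (Fin a) F p q = if q = p.swap then - sg F p else 0 := by
  rcases p with i | i <;> rcases q with j | j <;>
    simp [J, Matrix.one_apply, eq_comm, apply_ite (Neg.neg : F → F)]

lemma J_mul_apply (M : Matrix (Ix a) (Ix a) F) (p q : Ix a) :
    (J (Fin a) F * M) p q = - sg F p * M p.swap q := by
  rw [Matrix.mul_apply]
  simp [J_apply]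

lemma mul_J_apply (M : Matrix (Ix a) (Ix a) F) (p q : Ix a) :
    (M * J (Fin a) F) p q = sg F q * M p q.swap := by
  rw [Matrix.mul_apply]
  rw [Finset.sum_eq_single q.swap]
  · simp [J_apply, sg_swap, mul_comm]
  · intro r _ hr
    rw [J_apply, if_neg, mul_zero]
    rintro rfl
    simp at hr
  · simp

lemma inv_apply (g : Sp a F) (p q : Ix a) :
    (g⁻¹ : Sp a F).1 p q = sg F p * sg F q * g.1 q.swap p.swap := by
  rw [SymplecticGroup.coe_inv, Matrix.mul_assoc, Matrix.neg_mul, Matrix.neg_apply, J_mul_apply, mul_J_apply]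
  simp
  ring

lemma coe_mul_inv (g : Sp a F) : g.1 * (g⁻¹ : Sp a F).1 = 1 :=
  congrArg Subtype.val (mul_inv_cancel g)

lemma coe_inv_mul (g : Sp a F) : (g⁻¹ : Sp a F).1 * g.1 = 1 :=
  congrArg Subtype.val (inv_mul_cancel g)

/-- Block upper triangular matrices. -/
def InL (τ : Ix a → ℤ) (M : Matrix (Ix a) (Ix a) F) : Prop := ∀ p q, τ q < τ p → M p q = 0

/-- Strictly block upper triangular matrices. -/
def InN (τ : Ix a → ℤ) (M : Matrix (Ix a) (Ix a) F) : Prop := ∀ p q, τ q ≤ τ p → M p q = 0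

lemma InN.inL {τ : Ix a → ℤ} {M : Matrix (Ix a) (Ix a) F} (h : InN τ M) : InL τ M :=
  fun p q hpq => h p q hpq.le

lemma InL.one (τ : Ix a → ℤ) : InL τ (1 : Matrix (Ix a) (Ix a) F) := by
  intro p q h
  rw [Matrix.one_apply_ne]
  rintro rfl; exact lt_irrefl _ h

lemma InL.add {τ : Ix a → ℤ} {M N : Matrix (Ix a) (Ix a) F} (hM : InL τ M) (hN : InL τ N) :
    InL τ (M + N) := fun p q h => by rw [Matrix.add_apply, hM p q h, hN p q h, add_zero]

lemma InN.add {τ : Ix a → ℤ} {M N : Matrix (Ix a) (Ix a) F} (hM : InN τ M) (hN : InN τ N) :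
    InN τ (M + N) := fun p q h => by rw [Matrix.add_apply, hM p q h, hN p q h, add_zero]

lemma InN.neg {τ : Ix a → ℤ} {M : Matrix (Ix a) (Ix a) F} (hM : InN τ M) :
    InN τ (-M) := fun p q h => by rw [Matrix.neg_apply, hM p q h, neg_zero]

lemma InL.mul {τ : Ix a → ℤ} {M N : Matrix (Ix a) (Ix a) F} (hM : InL τ M) (hN : InL τ N) :
    InL τ (M * N) := fun p q h => by
  rw [Matrix.mul_apply]
  refine Finset.sum_eq_zero fun r _ => ?_
  rcases lt_or_ge (τ r) (τ p) with h1 | h1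
  · rw [hM p r h1, zero_mul]
  · rw [hN r q (h.trans_le h1), mul_zero]

lemma InN.mulL {τ : Ix a → ℤ} {M N : Matrix (Ix a) (Ix a) F} (hM : InN τ M) (hN : InL τ N) :
    InN τ (M * N) := fun p q h => by
  rw [Matrix.mul_apply]
  refine Finset.sum_eq_zero fun r _ => ?_
  rcases le_or_gt (τ r) (τ p) with h1 | h1
  · rw [hM p r h1, zero_mul]
  · rw [hN r q (h.trans_lt h1), mul_zero]

lemma InL.mulN {τ : Ix a → ℤ} {M N : Matrix (Ix a) (Ix a) F} (hM : InL τ M) (hN : InN τ N) :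
    InN τ (M * N) := fun p q h => by
  rw [Matrix.mul_apply]
  refine Finset.sum_eq_zero fun r _ => ?_
  rcases lt_or_ge (τ r) (τ p) with h1 | h1
  · rw [hM p r h1, zero_mul]
  · rw [hN r q (h.trans h1), mul_zero]

/-- Odd functions on indices. -/
def Odd' (τ : Ix a → ℤ) : Prop := ∀ p, τ p.swap = - τ p

lemma InL.inv {τ : Ix a → ℤ} (hτ : Odd' τ) {g : Sp a F} (hg : InL τ g.1) :
    InL τ (g⁻¹ : Sp a F).1 := by
  intro p q h
  rw [inv_apply, hg q.swap p.swap (by rw [hτ, hτ]; omega), mul_zero]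

lemma InL_of_sub {τ : Ix a → ℤ} {M : Matrix (Ix a) (Ix a) F} (h : InN τ (M - 1)) : InL τ M := by
  have := h.inL.add (InL.one τ)
  simpa using this

/-- The parabolic subgroup attached to an odd function. -/
def Par (F : Type) [Field F] (τ : Ix a → ℤ) (hτ : Odd' τ) : Subgroup (Sp a F) where
  carrier := {g | InL τ g.1}
  mul_mem' := fun {g h} hg hh => InL.mul hg hh
  one_mem' := InL.one τ
  inv_mem' := fun {g} hg => InL.inv hτ hg

/-- Its unipotent radical. -/
def Rad (F : Type) [Field F] (τ : Ix a → ℤ) (hτ : Odd' τ) : Subgroup (Sp a F) where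
  carrier := {g | InN τ (g.1 - 1)}
  mul_mem' := fun {g h} hg hh => by
    have h1 : (g * h).1 - 1 = (g.1 - 1) * h.1 + (h.1 - 1) := by
      change g.1 * h.1 - 1 = _
      rw [sub_mul, one_mul]; abel
    change InN τ ((g * h).1 - 1)
    rw [h1]
    exact (InN.mulL hg (InL_of_sub hh)).add hh
  one_mem' := by
    change InN τ ((1 : Matrix (Ix a) (Ix a) F) - 1)
    intro p q _; simp
  inv_mem' := fun {g} hg => by
    have h1 : (g⁻¹ : Sp a F).1 - 1 = (g⁻¹ : Sp a F).1 * (-(g.1 - 1)) := by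
      rw [mul_neg, mul_sub, coe_inv_mul]; simp
    change InN τ ((g⁻¹ : Sp a F).1 - 1)
    rw [h1]
    exact (InL.inv hτ (InL_of_sub hg)).mulN hg.neg

lemma mem_Par {τ : Ix a → ℤ} {hτ : Odd' τ} {g : Sp a F} : g ∈ Par F τ hτ ↔ InL τ g.1 := Iff.rfl
lemma mem_Rad {τ : Ix a → ℤ} {hτ : Odd' τ} {g : Sp a F} : g ∈ Rad F τ hτ ↔ InN τ (g.1 - 1) := Iff.rfl

lemma Rad_le_Par {τ : Ix a → ℤ} (hτ : Odd' τ) : Rad F τ hτ ≤ Par F τ hτ := fun _ hg => InL_of_sub hg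

lemma Rad_conj {τ : Ix a → ℤ} {hτ : Odd' τ} {p u : Sp a F} (hp : p ∈ Par F τ hτ)
    (hu : u ∈ Rad F τ hτ) : p * u * p⁻¹ ∈ Rad F τ hτ := by
  rw [mem_Rad]
  have h1 : (p * u * p⁻¹).1 - 1 = p.1 * (u.1 - 1) * (p⁻¹ : Sp a F).1 := by
    rw [mul_sub, sub_mul, mul_one, coe_mul_inv]; rfl
  rw [h1]
  exact (InL.mulN hp hu).mulL (InL.inv hτ hp)

/-- The Borel subgroup. -/
def Bor (a : ℕ) (F : Type) [Field F] : Subgroup (Sp a F) := Par F rh rh_swap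
/-- Its unipotent radical. -/
def Uni (a : ℕ) (F : Type) [Field F] : Subgroup (Sp a F) := Rad F rh rh_swap

lemma mem_Bor {g : Sp a F} : g ∈ Bor a F ↔ InL rh g.1 := Iff.rfl
lemma mem_Uni {g : Sp a F} : g ∈ Uni a F ↔ InN rh (g.1 - 1) := Iff.rfl
lemma Uni_le_Bor : Uni a F ≤ Bor a F := Rad_le_Par _

lemma Bor_diag_ne {g : Sp a F} (hg : g ∈ Bor a F) (p : Ix a) : g.1 p p ≠ 0 := by
  intro h
  have h1 := congrFun (congrFun (coe_mul_inv g) p) p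
  rw [Matrix.mul_apply, Matrix.one_apply_eq] at h1
  rw [Finset.sum_eq_zero] at h1
  · exact zero_ne_one h1
  · intro r _
    rcases lt_trichotomy (rh r) (rh p) with h2 | h2 | h2
    · rw [hg p r h2, zero_mul]
    · rw [rh_inj h2, h, zero_mul]
    · rw [InL.inv rh_swap hg r p h2, mul_zero]

/-- An element of the Borel subgroup with unit diagonal is in `Uni`. -/
lemma mem_Uni_iff {g : Sp a F} : g ∈ Uni a F ↔ g ∈ Bor a F ∧ ∀ p, g.1 p p = 1 := by
  constructor
  · intro h
    refine ⟨Uni_le_Bor h, fun p => ?_⟩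
    have := h p p le_rfl
    rw [Matrix.sub_apply, Matrix.one_apply_eq] at this
    exact sub_eq_zero.1 this
  · rintro ⟨h1, h2⟩ p q h
    rcases h.lt_or_eq with h3 | h3
    · rw [Matrix.sub_apply, h1 p q h3, Matrix.one_apply_ne, sub_zero]
      rintro rfl; exact lt_irrefl _ h3
    · have := rh_inj h3
      subst this
      simp [h2]

/-- Successor index. -/
def sc (i : Fin a) : Ix a := if h : (i : ℕ) + 1 < a then Sum.inl ⟨i + 1, h⟩ else Sum.inr i

/-- Height function of the minimal parabolic. -/
def rhi (i : Fin a) (p : Ix a) : ℤ :=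
  if p = Sum.inl i then -((a : ℤ) - i - 1) else if p = Sum.inr i then (a : ℤ) - i - 1 else rh p

lemma rhi_swap (i : Fin a) (p : Ix a) : rhi i p.swap = - rhi i p := by
  rcases p with j | j <;> by_cases h : j = i <;> simp [rhi, h]

lemma rhi_mono (i : Fin a) {p q : Ix a} (h : rh p ≤ rh q) : rhi i p ≤ rhi i q := by
  have := i.2
  rcases p with j | j <;> rcases q with k | k <;>
    simp only [rhi, rh_inl, rh_inr, Sum.inl.injEq, Sum.inr.injEq, reduceCtorEq, if_false,
      Fin.ext_iff] at h ⊢ <;> have := j.2 <;> have := k.2 <;> split_ifs <;> omega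

lemma rh_lt_of_rhi (i : Fin a) {p q : Ix a} (h : rhi i p < rhi i q) : rh p < rh q := by
  by_contra hc
  exact absurd (rhi_mono i (not_lt.1 hc)) (not_le.2 h)

lemma rhi_cases (i : Fin a) {p q : Ix a} (h : rh q < rh p) (h2 : rhi i p ≤ rhi i q) :
    (p = sc i ∧ q = Sum.inl i) ∨ (p = Sum.inr i ∧ q = (sc i).swap) := by
  have := i.2
  by_cases hi : (i : ℕ) + 1 < a <;> rcases p with j | j <;> rcases q with k | k <;>
    simp only [sc, hi, dite_true, dite_false, rhi, rh_inl, rh_inr, Sum.inl.injEq, Sum.inr.injEq,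
      reduceCtorEq, if_false, Sum.swap_inl, Sum.swap_inr,
      Fin.ext_iff] at h h2 ⊢ <;> have := j.2 <;> have := k.2 <;> split_ifs at h2 <;> omega

lemma rhi_sc (i : Fin a) : rhi i (sc i) = rhi i (Sum.inl i) := by
  have := i.2
  unfold sc
  split_ifs <;> simp [rhi, Fin.ext_iff]
  · omega
  · omega

lemma rh_sc (i : Fin a) : rh (Sum.inl i) < rh (sc i) := by
  have := i.2
  unfold sc
  split_ifs <;> simp
  omega

/-- The minimal parabolic. -/
def Pi' (F : Type) [Field F] (i : Fin a) : Subgroup (Sp a F) := Par F (rhi i) (rhi_swap i)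
/-- Its radical. -/
def Ui (F : Type) [Field F] (i : Fin a) : Subgroup (Sp a F) := Rad F (rhi i) (rhi_swap i)

lemma Bor_le_Pi (i : Fin a) : Bor a F ≤ Pi' F i := fun _ hg p q h => hg p q (rh_lt_of_rhi i h)

lemma Ui_le_Uni (i : Fin a) : Ui F i ≤ Uni a F := fun _ hg p q h => hg p q (rhi_mono i h)

/-- No index lies strictly between `inl i` and `sc i`. -/
lemma no_between (i : Fin a) {r : Ix a} (h1 : rh (Sum.inl i) < rh r) (h2 : rh r < rh (sc i)) :
    False := by
  have := i.2
  unfold sc at h2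
  rcases r with j | j <;> split_ifs at h2 <;> simp at h1 h2 <;> omega

/-- An element of the minimal parabolic is in the Borel iff one entry vanishes. -/
lemma mem_Bor_of_Pi (i : Fin a) {g : Sp a F} (hg : g ∈ Pi' F i) (h0 : g.1 (sc i) (Sum.inl i) = 0) :
    g ∈ Bor a F := by
  -- first the inverse entry
  have hgi : InL (rhi i) (g⁻¹ : Sp a F).1 := InL.inv (rhi_swap i) hg
  have key : (g⁻¹ : Sp a F).1 (sc i) (Sum.inl i) = 0 := by
    by_contra hne
    -- rows of the product
    have e1 := congrFun (congrFun (coe_mul_inv g) (sc i)) (Sum.inl i)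
    have e2 := congrFun (congrFun (coe_mul_inv g) (sc i)) (sc i)
    rw [Matrix.mul_apply] at e1 e2
    have hz : ∀ r, r ≠ sc i → ∀ q, rhi i q = rhi i (sc i) →
        g.1 (sc i) r * (g⁻¹ : Sp a F).1 r q = 0 := by
      intro r hr q hq
      rcases lt_trichotomy (rhi i r) (rhi i (sc i)) with h | h | h
      · rw [hg _ _ h, zero_mul]
      · rcases lt_trichotomy (rh r) (rh (sc i)) with h3 | h3 | h3
        · rcases rhi_cases i h3 h.ge with ⟨-, h4⟩ | ⟨h4, h5⟩
          · rw [h4, h0, zero_mul]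
          · rw [h4] at h5
            simp at h5
            rw [h5, h0, zero_mul]
        · exact absurd (rh_inj h3) hr
        · rcases rhi_cases i h3 h.le with ⟨h4, h5⟩ | ⟨h4, h5⟩
          · exact absurd h4 hr
          · exfalso
            have h6 : sc i = (sc i).swap := h5
            have := congrArg (fun x => x.isLeft) h6
            rcases hsc : sc i with x | x <;> rw [hsc] at this <;> simp at this
      · rw [hgi r q (by omega), mul_zero]
    rw [Finset.sum_eq_single (sc i) (fun r _ hr => hz r hr _ (rhi_sc i).symm) (by simp)] at e1
    rw [Finset.sum_eq_single (sc i) (fun r _ hr => hz r hr _ rfl) (by simp)] at e2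
    rw [Matrix.one_apply_ne] at e1
    · rw [Matrix.one_apply_eq] at e2
      rcases mul_eq_zero.1 e1 with h | h
      · rw [h, zero_mul] at e2; exact zero_ne_one e2
      · exact hne h
    · intro h
      have := rh_sc i
      rw [h] at this; exact lt_irrefl _ this
  rw [inv_apply] at key
  have key' : g.1 (Sum.inr i) (sc i).swap = 0 := by
    rcases mul_eq_zero.1 key with h | h
    · exact absurd h (mul_ne_zero (sg_ne _) (sg_ne _))
    · simpa using h
  intro p q h
  rcases lt_or_ge (rhi i q) (rhi i p) with h2 | h2
  · exact hg p q h2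
  · rcases rhi_cases i h h2 with ⟨rfl, rfl⟩ | ⟨rfl, rfl⟩
    · exact h0
    · exact (key')

/-- An element of `Uni` is in the radical of the minimal parabolic iff one entry vanishes. -/
lemma mem_Ui_of_Uni (i : Fin a) {g : Sp a F} (hg : g ∈ Uni a F) (h0 : g.1 (Sum.inl i) (sc i) = 0) :
    g ∈ Ui F i := by
  have hB := Uni_le_Bor hg
  have hd := (mem_Uni_iff.1 hg).2
  have key : (g⁻¹ : Sp a F).1 (Sum.inl i) (sc i) = 0 := by
    have e1 := congrFun (congrFun (coe_mul_inv g) (Sum.inl i)) (sc i)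
    rw [Matrix.mul_apply, Finset.sum_eq_single (Sum.inl i)] at e1
    · rw [hd, one_mul, Matrix.one_apply_ne] at e1
      · exact e1
      · intro h
        have := rh_sc i
        rw [h] at this; exact lt_irrefl _ this
    · intro r _ hr
      rcases lt_trichotomy (rh r) (rh (Sum.inl i)) with h | h | h
      · rw [hB _ _ h, zero_mul]
      · exact absurd (rh_inj h) hr
      · rcases lt_trichotomy (rh r) (rh (sc i)) with h3 | h3 | h3
        · exact (no_between i h h3).elim
        · rw [rh_inj h3, h0, zero_mul]
        · rw [InL.inv rh_swap hB _ _ h3, mul_zero]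
    · simp
  rw [inv_apply] at key
  have key' : g.1 (sc i).swap (Sum.inr i) = 0 := by
    rcases mul_eq_zero.1 key with h | h
    · exact absurd h (mul_ne_zero (sg_ne _) (sg_ne _))
    · simpa using h
  intro p q h
  rcases le_or_gt (rh q) (rh p) with h2 | h2
  · exact hg p q h2
  · have hne : p ≠ q := by rintro rfl; exact lt_irrefl _ h2
    rw [Matrix.sub_apply, Matrix.one_apply_ne hne, sub_zero]
    rcases rhi_cases i h2 h with ⟨rfl, rfl⟩ | ⟨rfl, rfl⟩
    · exact h0
    · exact key'

end Basics

end SpSt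


open Matrix

namespace SpSt

section Emb

variable {a : ℕ} {F : Type} [Field F]

/-- Column matrix of a pair of indices. -/
def Pm (F : Type) [Field F] (p : Fin 2 → Ix a) : Matrix (Ix a) (Fin 2) F :=
  fun x k => if x = p k then 1 else 0

/-- Two by two block embedding. -/
def Em (p : Fin 2 → Ix a) (A : Matrix (Fin 2) (Fin 2) F) : Matrix (Ix a) (Ix a) F :=
  1 + Pm F p * (A - 1) * (Pm F p)ᵀ

lemma Pm_mul {p : Fin 2 → Ix a} (hp : Function.Injective p) : (Pm F p)ᵀ * Pm F p = 1 := by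
  ext k l
  rw [Matrix.mul_apply]
  simp [Pm, Matrix.one_apply, hp.eq_iff, eq_comm]

lemma Pm_mul_zero {p q : Fin 2 → Ix a} (h : ∀ k l, p k ≠ q l) : (Pm F p)ᵀ * Pm F q = 0 := by
  ext k l
  rw [Matrix.mul_apply]
  simp [Pm, fun k l => (h k l).symm]

lemma Em_mul {p : Fin 2 → Ix a} (hp : Function.Injective p) (A B : Matrix (Fin 2) (Fin 2) F) :
    Em p A * Em p B = Em p (A * B) := by
  unfold Em
  have h : Pm F p * (A - 1) * (Pm F p)ᵀ * (Pm F p * (B - 1) * (Pm F p)ᵀ) =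
      Pm F p * ((A - 1) * (B - 1)) * (Pm F p)ᵀ := by
    calc _ = Pm F p * (A - 1) * ((Pm F p)ᵀ * Pm F p) * (B - 1) * (Pm F p)ᵀ := by
          simp only [Matrix.mul_assoc]
      _ = _ := by rw [Pm_mul hp]; simp only [Matrix.mul_assoc, Matrix.one_mul]
  rw [add_mul, mul_add, mul_add, h]
  have h2 : A * B - 1 = (A - 1) + (B - 1) + (A - 1) * (B - 1) := by noncomm_ring
  rw [h2]
  simp only [Matrix.mul_add, Matrix.add_mul, Matrix.one_mul, Matrix.mul_one]
  abel

lemma Em_comm {p q : Fin 2 → Ix a} (h : ∀ k l, p k ≠ q l) (A B : Matrix (Fin 2) (Fin 2) F) :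
    Em p A * Em q B = Em q B * Em p A := by
  unfold Em
  have h1 : Pm F p * (A - 1) * (Pm F p)ᵀ * (Pm F q * (B - 1) * (Pm F q)ᵀ) = 0 := by
    calc _ = Pm F p * (A - 1) * ((Pm F p)ᵀ * Pm F q) * (B - 1) * (Pm F q)ᵀ := by
          simp only [Matrix.mul_assoc]
      _ = _ := by rw [Pm_mul_zero h]; simp
  have h2 : Pm F q * (B - 1) * (Pm F q)ᵀ * (Pm F p * (A - 1) * (Pm F p)ᵀ) = 0 := by
    calc _ = Pm F q * (B - 1) * ((Pm F q)ᵀ * Pm F p) * (A - 1) * (Pm F p)ᵀ := by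
          simp only [Matrix.mul_assoc]
      _ = _ := by rw [Pm_mul_zero fun k l => (h l k).symm]; simp
  rw [add_mul, mul_add, mul_add, add_mul, mul_add, mul_add, h1, h2]
  simp only [Matrix.one_mul, Matrix.mul_one]
  abel

lemma Em_transpose (p : Fin 2 → Ix a) (A : Matrix (Fin 2) (Fin 2) F) :
    (Em p A)ᵀ = Em p Aᵀ := by
  simp [Em, Matrix.transpose_mul, Matrix.mul_assoc, Matrix.transpose_sub]

lemma Em_one (p : Fin 2 → Ix a) : Em p (1 : Matrix (Fin 2) (Fin 2) F) = 1 := by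
  simp [Em]

lemma Em_sub_apply (p : Fin 2 → Ix a) (A : Matrix (Fin 2) (Fin 2) F) (x y : Ix a) :
    (Em p A - 1) x y = ∑ k, ∑ l, if x = p k ∧ y = p l then (A - 1) k l else 0 := by
  unfold Em
  rw [add_sub_cancel_left, Matrix.mul_apply, Finset.sum_comm]
  refine Finset.sum_congr rfl fun l _ => ?_
  rw [Matrix.mul_apply, Finset.sum_mul]
  refine Finset.sum_congr rfl fun k _ => ?_
  simp only [Pm, Matrix.transpose_apply]
  by_cases h1 : x = p k <;> by_cases h2 : y = p l <;> simp [h1, h2]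

lemma Em_inN {τ : Ix a → ℤ} {p : Fin 2 → Ix a} {A : Matrix (Fin 2) (Fin 2) F}
    (h : ∀ k l, τ (p l) ≤ τ (p k) → (A - 1) k l = 0) : InN τ (Em p A - 1) := by
  intro x y hxy
  rw [Em_sub_apply]
  refine Finset.sum_eq_zero fun k _ => Finset.sum_eq_zero fun l _ => ?_
  split_ifs with h1
  · obtain ⟨rfl, rfl⟩ := h1; exact h k l hxy
  · rfl

lemma Em_inL {τ : Ix a → ℤ} {p : Fin 2 → Ix a} {A : Matrix (Fin 2) (Fin 2) F}
    (h : ∀ k l, τ (p l) < τ (p k) → (A - 1) k l = 0) : InL τ (Em p A) := by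
  have : InL τ (Em p A - 1) := by
    intro x y hxy
    rw [Em_sub_apply]
    refine Finset.sum_eq_zero fun k _ => Finset.sum_eq_zero fun l _ => ?_
    split_ifs with h1
    · obtain ⟨rfl, rfl⟩ := h1; exact h k l hxy
    · rfl
  simpa using this.add (InL.one τ)

lemma Em_mulVec (p : Fin 2 → Ix a) (A : Matrix (Fin 2) (Fin 2) F) (hp : Function.Injective p)
    (k : Fin 2) (y : Ix a) : Em p A (p k) y = ∑ l, A k l * (1 : Matrix (Ix a) (Ix a) F) (p l) y := by
  have h := Em_sub_apply p A (p k) y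
  rw [Matrix.sub_apply, sub_eq_iff_eq_add] at h
  rw [h]
  rw [Finset.sum_eq_single k]
  · simp only [true_and, Fin.sum_univ_two, Matrix.one_apply, Matrix.sub_apply]
    by_cases h0 : y = p 0
    · have h1 : y ≠ p 1 := fun h => by simpa using hp (h0.symm.trans h)
      subst h0
      fin_cases k <;> simp [hp.eq_iff]
    · by_cases h1 : y = p 1
      · subst h1
        fin_cases k <;> simp [hp.eq_iff]
      · fin_cases k <;> simp [h0, h1, Ne.symm h0, Ne.symm h1]
  · intro b _ hb
    refine Finset.sum_eq_zero fun l _ => ?_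
    rw [if_neg]
    rintro ⟨h, -⟩
    exact hb (hp h).symm
  · simp

lemma Em_row_out (p : Fin 2 → Ix a) (A : Matrix (Fin 2) (Fin 2) F) {x : Ix a} (hx : ∀ k, x ≠ p k)
    (y : Ix a) : Em p A x y = (1 : Matrix (Ix a) (Ix a) F) x y := by
  have h := Em_sub_apply p A x y
  rw [Matrix.sub_apply, sub_eq_iff_eq_add] at h
  rw [h]
  simp [hx]

/-- First pair. -/
def p1 (i : Fin a) : Fin 2 → Ix a := ![Sum.inl i, sc i]
/-- Second pair. -/
def p2 (i : Fin a) : Fin 2 → Ix a := ![Sum.inr i, (sc i).swap]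

lemma sc_ne (i : Fin a) : Sum.inl i ≠ sc i := by
  intro h
  have := rh_sc i
  rw [h] at this; exact lt_irrefl _ this

lemma p1_inj (i : Fin a) : Function.Injective (p1 i) := by
  intro k l h
  fin_cases k <;> fin_cases l <;> simp [p1] at h ⊢
  · exact sc_ne i h
  · exact sc_ne i h.symm

lemma p2_eq (i : Fin a) (k : Fin 2) : p2 i k = (p1 i k).swap := by
  fin_cases k <;> simp [p1, p2]

lemma p2_inj (i : Fin a) : Function.Injective (p2 i) := by
  intro k l h
  rw [p2_eq, p2_eq] at h
  exact p1_inj i (Sum.swap_leftInverse.injective h)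

lemma p12 (i : Fin a) (hi : (i : ℕ) + 1 < a) (k l : Fin 2) : p1 i k ≠ p2 i l := by
  fin_cases k <;> fin_cases l <;> simp [p1, p2, sc, hi]

open scoped Classical in
/-- The rank one embedding. -/
noncomputable def Km (i : Fin a) (A : Matrix (Fin 2) (Fin 2) F) : Matrix (Ix a) (Ix a) F :=
  if (i : ℕ) + 1 < a then Em (p1 i) A * Em (p2 i) (A⁻¹)ᵀ else Em (p1 i) A

lemma Km_mul (i : Fin a) (A B : Matrix (Fin 2) (Fin 2) F) : Km i A * Km i B = Km i (A * B) := by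
  unfold Km
  split_ifs with hi
  · have h : Em (p1 i) A * Em (p2 i) (A⁻¹)ᵀ * (Em (p1 i) B * Em (p2 i) (B⁻¹)ᵀ) =
        (Em (p1 i) A * Em (p1 i) B) * (Em (p2 i) (A⁻¹)ᵀ * Em (p2 i) (B⁻¹)ᵀ) := by
      rw [Matrix.mul_assoc, ← Matrix.mul_assoc (Em (p2 i) (A⁻¹)ᵀ), ← Em_comm (p12 i hi)]
      simp only [Matrix.mul_assoc]
    rw [h, Em_mul (p1_inj i), Em_mul (p2_inj i), ← Matrix.transpose_mul, ← Matrix.mul_inv_rev]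
  · exact Em_mul (p1_inj i) A B

lemma Km_one (i : Fin a) : Km i (1 : Matrix (Fin 2) (Fin 2) F) = 1 := by
  unfold Km
  split_ifs <;> simp [Em_one]

lemma Km_transpose (i : Fin a) (A : Matrix (Fin 2) (Fin 2) F) : (Km i A)ᵀ = Km i Aᵀ := by
  unfold Km
  split_ifs with hi
  · rw [Matrix.transpose_mul, Em_transpose, Em_transpose, ← Em_comm (p12 i hi),
      Matrix.transpose_nonsing_inv]
  · exact Em_transpose _ _

/-- Conditions for the embedding to be symplectic. -/
def Ok (i : Fin a) (A : Matrix (Fin 2) (Fin 2) F) : Prop :=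
  IsUnit A.det ∧ (¬ (i : ℕ) + 1 < a → A.det = 1)

lemma Ok.mul {i : Fin a} {A B : Matrix (Fin 2) (Fin 2) F} (hA : Ok i A) (hB : Ok i B) :
    Ok i (A * B) := by
  refine ⟨?_, fun h => ?_⟩
  · rw [Matrix.det_mul]; exact hA.1.mul hB.1
  · rw [Matrix.det_mul, hA.2 h, hB.2 h, one_mul]

lemma Ok.of_det {i : Fin a} {A : Matrix (Fin 2) (Fin 2) F} (h : A.det = 1) : Ok i A :=
  ⟨by rw [h]; exact isUnit_one, fun _ => h⟩

lemma Ok.transpose {i : Fin a} {A : Matrix (Fin 2) (Fin 2) F} (h : Ok i A) : Ok i Aᵀ := by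
  unfold Ok; rw [Matrix.det_transpose]; exact h

/-- The standard two by two form. -/
def J2 (F : Type) [Field F] : Matrix (Fin 2) (Fin 2) F := !![0, -1; 1, 0]

lemma J_Pm1 (i : Fin a) (hi : (i : ℕ) + 1 < a) : J (Fin a) F * Pm F (p1 i) = Pm F (p2 i) := by
  ext x k
  rw [Matrix.mul_apply]
  fin_cases k <;> rcases x with x | x <;>
    simp [J_apply, Pm, p1, p2, sc, hi, sg, eq_comm]

lemma J_Pm2 (i : Fin a) (hi : (i : ℕ) + 1 < a) : J (Fin a) F * Pm F (p2 i) = - Pm F (p1 i) := by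
  rw [← J_Pm1 i hi, ← Matrix.mul_assoc, J_squared]; simp

lemma J_Pm (i : Fin a) (hi : ¬ (i : ℕ) + 1 < a) :
    J (Fin a) F * Pm F (p1 i) = Pm F (p1 i) * J2 F := by
  ext x k
  rw [Matrix.mul_apply]
  fin_cases k <;> rcases x with x | x <;>
    simp [J_apply, Pm, p1, sc, hi, sg, Matrix.mul_apply, J2, eq_comm]

lemma Km_mem (i : Fin a) {A : Matrix (Fin 2) (Fin 2) F} (hA : Ok i A) :
    Km i A ∈ symplecticGroup (Fin a) F := by
  rw [SymplecticGroup.mem_iff]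
  unfold Km
  split_ifs with hi
  · have t1 : (Pm F (p1 i))ᵀ * J (Fin a) F = - (Pm F (p2 i))ᵀ := by
      have := congrArg Matrix.transpose (J_Pm1 (F := F) i hi)
      rw [Matrix.transpose_mul, J_transpose] at this
      rw [← this]; simp
    have t2 : (Pm F (p2 i))ᵀ * J (Fin a) F = (Pm F (p1 i))ᵀ := by
      have := congrArg Matrix.transpose (J_Pm2 (F := F) i hi)
      rw [Matrix.transpose_mul, J_transpose, Matrix.transpose_neg] at this
      rw [← neg_inj, ← this]; simp
    have e1 : ∀ X : Matrix (Fin 2) (Fin 2) F, Em (p1 i) X * J (Fin a) F = J (Fin a) F * Em (p2 i) X := by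
      intro X
      unfold Em
      rw [add_mul, mul_add, Matrix.mul_assoc _ _ (J (Fin a) F), t1, ← Matrix.mul_assoc (J (Fin a) F),
        ← Matrix.mul_assoc (J (Fin a) F), J_Pm2 i hi]
      simp
    have e2 : ∀ X : Matrix (Fin 2) (Fin 2) F, Em (p2 i) X * J (Fin a) F = J (Fin a) F * Em (p1 i) X := by
      intro X
      unfold Em
      rw [add_mul, mul_add, Matrix.mul_assoc _ _ (J (Fin a) F), t2, ← Matrix.mul_assoc (J (Fin a) F),
        ← Matrix.mul_assoc (J (Fin a) F), J_Pm1 i hi]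
      simp
    have hu : IsUnit Aᵀ.det := by rw [Matrix.det_transpose]; exact hA.1
    calc _ = J (Fin a) F * (Em (p2 i) A * (Em (p1 i) (A⁻¹)ᵀ * (Em (p2 i) A⁻¹ * Em (p1 i) Aᵀ))) := by
          rw [Matrix.transpose_mul, Em_transpose, Em_transpose, Matrix.transpose_transpose,
            Matrix.mul_assoc (Em (p1 i) A), e2, ← Matrix.mul_assoc (Em (p1 i) A), e1]
          simp only [Matrix.mul_assoc]
      _ = J (Fin a) F * ((Em (p2 i) A * Em (p2 i) A⁻¹) * (Em (p1 i) (A⁻¹)ᵀ * Em (p1 i) Aᵀ)) := by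
          rw [← Matrix.mul_assoc (Em (p1 i) (A⁻¹)ᵀ), Em_comm (p12 i hi)]
          simp only [Matrix.mul_assoc]
      _ = _ := by
          rw [Em_mul (p1_inj i), Em_mul (p2_inj i), Matrix.mul_nonsing_inv _ hA.1,
            Matrix.transpose_nonsing_inv, Matrix.nonsing_inv_mul _ hu, Em_one, Em_one]
          simp
  · have t1 : (Pm F (p1 i))ᵀ * J (Fin a) F = J2 F * (Pm F (p1 i))ᵀ := by
      have := congrArg Matrix.transpose (J_Pm (F := F) i hi)
      rw [Matrix.transpose_mul, Matrix.transpose_mul, J_transpose] at this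
      rw [← neg_inj, ← Matrix.mul_neg, this, ← Matrix.neg_mul]
      congr 1
      ext k l; fin_cases k <;> fin_cases l <;> simp [J2]
    have e1 : Em (p1 i) A * J (Fin a) F = J (Fin a) F + Pm F (p1 i) * ((A - 1) * J2 F) * (Pm F (p1 i))ᵀ := by
      unfold Em
      rw [add_mul, Matrix.one_mul, Matrix.mul_assoc _ _ (J (Fin a) F), t1]
      simp only [Matrix.mul_assoc]
    have e2 : J (Fin a) F * Em (p1 i) Aᵀ =
        J (Fin a) F + Pm F (p1 i) * (J2 F * (Aᵀ - 1)) * (Pm F (p1 i))ᵀ := by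
      unfold Em
      rw [mul_add, Matrix.mul_one, ← Matrix.mul_assoc (J (Fin a) F),
        ← Matrix.mul_assoc (J (Fin a) F), J_Pm i hi]
      simp only [Matrix.mul_assoc]
    have e3 : ∀ X : Matrix (Fin 2) (Fin 2) F, Pm F (p1 i) * X * (Pm F (p1 i))ᵀ * Em (p1 i) Aᵀ =
        Pm F (p1 i) * (X * Aᵀ) * (Pm F (p1 i))ᵀ := by
      intro X
      unfold Em
      have h : Pm F (p1 i) * X * (Pm F (p1 i))ᵀ * (Pm F (p1 i) * (Aᵀ - 1) * (Pm F (p1 i))ᵀ) =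
          Pm F (p1 i) * (X * (Aᵀ - 1)) * (Pm F (p1 i))ᵀ := by
        calc _ = Pm F (p1 i) * X * ((Pm F (p1 i))ᵀ * Pm F (p1 i)) * (Aᵀ - 1) * (Pm F (p1 i))ᵀ := by
              simp only [Matrix.mul_assoc]
          _ = _ := by rw [Pm_mul (p1_inj i)]; simp only [Matrix.mul_assoc, Matrix.one_mul]
      rw [mul_add, h, Matrix.mul_one, ← Matrix.add_mul, ← Matrix.mul_add]
      congr 2
      noncomm_ring
    have e4 : A * J2 F * Aᵀ = J2 F := by
      have hd := hA.2 hi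
      rw [Matrix.det_fin_two] at hd
      ext k l
      fin_cases k <;> fin_cases l <;> simp [Matrix.mul_apply, Fin.sum_univ_two, J2]
      · ring
      · linear_combination -hd
      · linear_combination hd
      · ring
    rw [Em_transpose, e1, add_mul, e2, e3, add_assoc, ← Matrix.add_mul, ← Matrix.mul_add]
    have : J2 F * (Aᵀ - 1) + (A - 1) * J2 F * Aᵀ = 0 := by
      have h5 : J2 F * (Aᵀ - 1) + (A - 1) * J2 F * Aᵀ =
        A * J2 F * Aᵀ - J2 F := by noncomm_ring
      rw [h5, e4, sub_self]
    rw [this]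
    simp

end Emb

end SpSt


open Matrix

namespace SpSt

section Gen

variable {G k : Type*} [Group G] [Finite G] [Field k]

lemma cosetSum_mul_right (U : Subgroup G) (f : G → k) (g : G) {u : G} (hu : u ∈ U) :
    cosetSum U f (g * u) = cosetSum U f g := by
  have := Fintype.ofFinite U
  rw [cosetSum_eq, cosetSum_eq]
  refine Fintype.sum_equiv (Equiv.mulLeft (⟨u, hu⟩ : U)) _ _ fun v => ?_
  simp [mul_assoc]

lemma cosetSum_conj (U : Subgroup G) {f : G → k} (hf : ∀ g h : G, f (h * g * h⁻¹) = f g) (g : G) {d : G}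
    (hd : ∀ u, u ∈ U ↔ d * u * d⁻¹ ∈ U) :
    cosetSum U f (d * g * d⁻¹) = cosetSum U f g := by
  have := Fintype.ofFinite U
  rw [cosetSum_eq, cosetSum_eq]
  symm
  refine Fintype.sum_equiv ((MulAut.conj d).toEquiv.subtypeEquiv (fun u => by simpa using hd u)) _ _
    fun v => ?_
  rw [← hf _ d]
  congr 1
  simp [mul_assoc]

lemma cosetSum_mul_left (U : Subgroup G) {f : G → k} (hf : ∀ g h : G, f (h * g * h⁻¹) = f g) (g : G) {u : G}
    (hu : u ∈ U) : cosetSum U f (u * g) = cosetSum U f g := by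
  rw [← cosetSum_mul_right U f (u * g) (U.inv_mem hu)]
  refine cosetSum_conj U hf g fun v => ?_
  constructor
  · intro hv; exact U.mul_mem (U.mul_mem hu hv) (U.inv_mem hu)
  · intro hv
    have := U.mul_mem (U.mul_mem (U.inv_mem hu) hv) hu
    simpa [mul_assoc] using this

lemma cosetSum_zero {ℓ : ℕ} (hℓ : ℓ.Prime) [CharP k ℓ] (N : Subgroup G) {f : G → k} (hf : Good ℓ f)
    (g d : G) (hd1 : d ≠ 1) (hdl : d ^ ℓ = 1) (hd : ∀ u, u ∈ N ↔ d * u * d⁻¹ ∈ N)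
    (hg : g⁻¹ * d * g * d⁻¹ ∈ N) : cosetSum N f g = 0 := by
  classical
  have := Fintype.ofFinite G
  have := Fact.mk hℓ
  have e1 : cosetSum N f g = ∑ x ∈ Finset.univ.filter (fun x => g⁻¹ * x ∈ N), f x := by
    rw [cosetSum_eq]
    refine Finset.sum_bij (fun u _ => g * u) ?_ ?_ ?_ ?_
    · intro u _; simp
    · intro u _ v _ h; ext; simpa using h
    · intro x hx
      exact ⟨⟨g⁻¹ * x, (Finset.mem_filter.1 hx).2⟩, Finset.mem_univ _, by simp⟩
    · intro u _; rfl
  rw [e1, ← Finset.sum_fiberwise_of_maps_to (t := Finset.univ.image f) (g := f) (by simp)]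
  refine Finset.sum_eq_zero fun c _ => ?_
  rw [Finset.sum_congr rfl (g := fun _ => c) (by intro x hx; exact (Finset.mem_filter.1 hx).2),
    Finset.sum_const, nsmul_eq_mul]
  by_cases hc : c = 0
  · rw [hc, mul_zero]
  suffices h : ℓ ∣ (Finset.filter (fun x => f x = c) (Finset.univ.filter (fun x => g⁻¹ * x ∈ N))).card by
    rw [(CharP.cast_eq_zero_iff k ℓ _).2 h, zero_mul]
  have hiff : ∀ x, (g⁻¹ * x ∈ N ∧ f x = c) ↔ (g⁻¹ * (d * x * d⁻¹) ∈ N ∧ f (d * x * d⁻¹) = c) := by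
    intro x
    rw [hf.1]
    have : g⁻¹ * (d * x * d⁻¹) = (g⁻¹ * d * g * d⁻¹) * (d * (g⁻¹ * x) * d⁻¹) := by group
    rw [this, N.mul_mem_cancel_left hg, ← hd]
  let σ : Function.End {x : G // g⁻¹ * x ∈ N ∧ f x = c} :=
    fun x => ⟨d * x * d⁻¹, (hiff x).1 x.2⟩
  have hσ : ∀ (n : ℕ) x, ((σ ^ n) x : G) = d ^ n * x * (d ^ n)⁻¹ := by
    intro n
    induction n with
    | zero => intro x; rw [pow_zero, pow_zero]; change (x : G) = _; simp
    | succ n ih =>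
      intro x
      rw [pow_succ']
      change d * ((σ ^ n) x : G) * d⁻¹ = _
      rw [ih, pow_succ']
      group
  have hσl : σ ^ ℓ ^ 1 = 1 := by
    funext x
    apply Subtype.ext
    rw [pow_one, hσ, hdl]
    change _ = (x : G)
    simp
  have hmod := Equiv.Perm.card_fixedPoints_modEq hσl
  have h0 : Fintype.card (Function.fixedPoints σ) = 0 := by
    rw [Fintype.card_eq_zero_iff]
    refine ⟨fun ⟨x, hx⟩ => ?_⟩
    have hx' : d * (x : G) * d⁻¹ = x := congrArg Subtype.val hx
    have := hf.2 x d hd1 hdl (by rw [mul_inv_eq_iff_eq_mul] at hx'; exact hx')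
    rw [x.2.2] at this
    exact hc this
  rw [h0] at hmod
  have h3 := (Nat.modEq_zero_iff_dvd.1 hmod)
  rw [Finset.filter_filter, ← Fintype.card_subtype]
  exact h3

end Gen

section Kel

variable {a : ℕ} {F : Type} [Field F]

lemma p1_0 (i : Fin a) : p1 i 0 = Sum.inl i := rfl
lemma p1_1 (i : Fin a) : p1 i 1 = sc i := rfl

lemma Km_row (i : Fin a) (A : Matrix (Fin 2) (Fin 2) F) (k : Fin 2) (q : Ix a) :
    Km i A (p1 i k) q = ∑ l, A k l * (1 : Matrix (Ix a) (Ix a) F) (p1 i l) q := by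
  unfold Km
  split_ifs with hi
  · rw [Matrix.mul_apply]
    simp only [Em_mulVec _ _ (p1_inj i), Finset.sum_mul]
    rw [Finset.sum_comm]
    refine Finset.sum_congr rfl fun l _ => ?_
    simp only [mul_assoc]
    rw [← Finset.mul_sum, ← Matrix.mul_apply, Matrix.one_mul, Em_row_out]
    exact fun k => p12 i hi l k
  · exact Em_mulVec _ _ (p1_inj i) k q

lemma Km_mul_row (i : Fin a) (A : Matrix (Fin 2) (Fin 2) F) (M : Matrix (Ix a) (Ix a) F) (k : Fin 2)
    (q : Ix a) : (Km i A * M) (p1 i k) q = A k 0 * M (Sum.inl i) q + A k 1 * M (sc i) q := by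
  rw [Matrix.mul_apply]
  simp only [Km_row, Finset.sum_mul]
  rw [Finset.sum_comm]
  simp only [mul_assoc]
  simp only [← Finset.mul_sum, ← Matrix.mul_apply, Matrix.one_mul]
  rw [Fin.sum_univ_two]; rfl

lemma mul_Km_col (i : Fin a) (A : Matrix (Fin 2) (Fin 2) F) (M : Matrix (Ix a) (Ix a) F) (k : Fin 2)
    (q : Ix a) : (M * Km i A) q (p1 i k) = M q (Sum.inl i) * A 0 k + M q (sc i) * A 1 k := by
  have := Km_mul_row i Aᵀ Mᵀ k q
  rw [← Km_transpose, ← Matrix.transpose_mul] at this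
  simp only [Matrix.transpose_apply] at this
  rw [this]; ring

lemma Km_inL_rhi (i : Fin a) (A : Matrix (Fin 2) (Fin 2) F) : InL (rhi i) (Km i A) := by
  have h1 : ∀ k l : Fin 2, ¬ rhi i (p1 i l) < rhi i (p1 i k) := by
    intro k l
    fin_cases k <;> fin_cases l <;> simp [p1, rhi_sc]
  have h2 : ∀ k l : Fin 2, ¬ rhi i (p2 i l) < rhi i (p2 i k) := by
    intro k l
    rw [p2_eq, p2_eq, rhi_swap, rhi_swap]
    have := h1 l k
    omega
  unfold Km
  split_ifs with hi
  · exact (Em_inL fun k l h => (h1 k l h).elim).mul (Em_inL fun k l h => (h2 k l h).elim)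
  · exact Em_inL fun k l h => (h1 k l h).elim

lemma inv_10 {A : Matrix (Fin 2) (Fin 2) F} (h : A 1 0 = 0) : A⁻¹ 1 0 = 0 := by
  rw [Matrix.inv_def, Matrix.adjugate_fin_two]
  simp [h]

lemma Km_inL (i : Fin a) {A : Matrix (Fin 2) (Fin 2) F} (h : A 1 0 = 0) : InL rh (Km i A) := by
  have h1 : InL rh (Em (p1 i) A) := by
    refine Em_inL fun k l hkl => ?_
    have := rh_sc i
    fin_cases k <;> fin_cases l <;> simp [p1, h] at hkl ⊢
    simp at this; omega
  unfold Km
  split_ifs with hi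
  · refine h1.mul (Em_inL fun k l hkl => ?_)
    rw [p2_eq, p2_eq, rh_swap, rh_swap] at hkl
    have := rh_sc i
    fin_cases k <;> fin_cases l <;> simp [p1, inv_10 h] at hkl ⊢
    simp at this; omega
  · exact h1

/-- The rank one element as a symplectic matrix. -/
noncomputable def Ks (i : Fin a) (A : Matrix (Fin 2) (Fin 2) F) (hA : Ok i A) : Sp a F :=
  ⟨Km i A, Km_mem i hA⟩

lemma Ks_mul (i : Fin a) {A B : Matrix (Fin 2) (Fin 2) F} (hA : Ok i A) (hB : Ok i B) :
    Ks i A hA * Ks i B hB = Ks i (A * B) (hA.mul hB) := Subtype.ext (Km_mul i A B)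

lemma Ks_mem_Pi (i : Fin a) {A : Matrix (Fin 2) (Fin 2) F} (hA : Ok i A) : Ks i A hA ∈ Pi' F i :=
  Km_inL_rhi i A

lemma xok (i : Fin a) (c : F) : Ok i !![1, c; 0, 1] := Ok.of_det (by simp [Matrix.det_fin_two])
lemma sok (i : Fin a) : Ok i (!![0, 1; -1, 0] : Matrix (Fin 2) (Fin 2) F) :=
  Ok.of_det (by simp [Matrix.det_fin_two])

/-- Simple root elements. -/
noncomputable def xr (i : Fin a) (c : F) : Sp a F := Ks i !![1, c; 0, 1] (xok i c)
/-- Simple reflections. -/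
noncomputable def sr (F : Type) [Field F] (i : Fin a) : Sp a F := Ks i !![0, 1; -1, 0] (sok i)

lemma xr_add (i : Fin a) (c d : F) : xr i c * xr i d = xr i (c + d) := by
  unfold xr
  rw [Ks_mul]
  congr 1
  ext k l; fin_cases k <;> fin_cases l <;> simp [Matrix.mul_apply, Fin.sum_univ_two, add_comm]

lemma xr_zero (i : Fin a) : xr i (0 : F) = 1 := by
  apply Subtype.ext
  change Km i _ = 1
  rw [← Km_one i]
  congr 1
  ext k l; fin_cases k <;> fin_cases l <;> simp

lemma xr_neg (i : Fin a) (c : F) : xr i (-c) = (xr i c)⁻¹ := by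
  rw [eq_inv_iff_mul_eq_one, xr_add, neg_add_cancel, xr_zero]

lemma xr_pow (i : Fin a) (c : F) (n : ℕ) : xr i c ^ n = xr i (n * c) := by
  induction n with
  | zero => simp [xr_zero]
  | succ n ih => rw [pow_succ, ih, xr_add]; congr 1; push_cast; ring

lemma xr_apply (i : Fin a) (c : F) : (xr i c).1 (Sum.inl i) (sc i) = c := by
  have := Km_row i !![1, c; 0, 1] 0 (sc i)
  change Km i !![1, c; 0, 1] (p1 i 0) (sc i) = _
  rw [this, Fin.sum_univ_two, p1_0, p1_1, Matrix.one_apply_ne (sc_ne i)]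
  simp

lemma xr_mem (i : Fin a) (c : F) : xr i c ∈ Uni a F := by
  rw [mem_Uni]
  have h1 : InN rh (Em (p1 i) !![1, c; 0, 1] - 1) := by
    refine Em_inN fun k l hkl => ?_
    have := rh_sc i
    fin_cases k <;> fin_cases l <;> simp [p1] at hkl ⊢
    simp at this; omega
  change InN rh (Km i !![1, c; 0, 1] - 1)
  unfold Km
  split_ifs with hi
  · have h2 : InN rh (Em (p2 i) (!![1, c; 0, 1]⁻¹)ᵀ - 1) := by
      refine Em_inN fun k l hkl => ?_
      rw [p2_eq, p2_eq, rh_swap, rh_swap] at hkl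
      have := rh_sc i
      fin_cases k <;> fin_cases l <;>
        simp [p1, Matrix.inv_def, Matrix.adjugate_fin_two, Matrix.det_fin_two] at hkl ⊢
      simp at this; omega
    have : Em (p1 i) !![1, c; 0, 1] * Em (p2 i) (!![1, c; 0, 1]⁻¹)ᵀ - 1 =
      (Em (p1 i) !![1, c; 0, 1] - 1) * Em (p2 i) (!![1, c; 0, 1]⁻¹)ᵀ + (Em (p2 i) (!![1, c; 0, 1]⁻¹)ᵀ - 1) := by
      noncomm_ring
    rw [this]
    exact (h1.mulL (InL_of_sub h2)).add h2
  · exact h1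

lemma xr_mul_mem (i : Fin a) {u : Sp a F} (hu : u ∈ Uni a F) :
    xr i (-(u.1 (Sum.inl i) (sc i))) * u ∈ Ui F i := by
  apply mem_Ui_of_Uni i ((Uni a F).mul_mem (xr_mem i _) hu)
  have := Km_mul_row i !![1, -(u.1 (Sum.inl i) (sc i)); 0, 1] u.1 0 (sc i)
  change (Km i _ * u.1 : Matrix _ _ _) (p1 i 0) (sc i) = 0
  rw [this, (mem_Uni_iff.1 hu).2]
  simp

lemma cosetSum_Uni {k : Type*} [Field k] [Finite F] [Fintype F] (i : Fin a) (f : Sp a F → k) (g : Sp a F) :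
    cosetSum (Uni a F) f g = ∑ c : F, cosetSum (Ui F i) f (g * xr i c) := by
  have := Fintype.ofFinite (Uni a F)
  have := Fintype.ofFinite (Ui F i)
  simp only [cosetSum_eq]
  rw [← Fintype.sum_prod_type']
  symm
  refine Fintype.sum_bijective
    (fun x : F × Ui F i => (⟨xr i x.1 * x.2.1, (Uni a F).mul_mem (xr_mem i _) (Ui_le_Uni i x.2.2)⟩ : Uni a F))
    ⟨?_, ?_⟩ _ _ ?_
  · have key : ∀ x : F × Ui F i, (xr i x.1 * x.2.1).1 (Sum.inl i) (sc i) = x.1 := by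
      intro x
      have := Km_mul_row i !![1, x.1; 0, 1] x.2.1.1 0 (sc i)
      change (Km i _ * x.2.1.1 : Matrix _ _ _) (p1 i 0) (sc i) = _
      rw [this, (mem_Uni_iff.1 (Ui_le_Uni i x.2.2)).2]
      have h := x.2.2 (Sum.inl i) (sc i) (rhi_sc i).le
      rw [Matrix.sub_apply, Matrix.one_apply_ne (sc_ne i), sub_zero] at h
      rw [h]; simp
    rintro ⟨c, u⟩ ⟨c', u'⟩ h
    have h1 : xr i c * u.1 = xr i c' * u'.1 := congrArg Subtype.val h
    have h2 : c = c' := by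
      have e1 := key (c, u)
      have e2 := key (c', u')
      simp only at e1 e2
      rw [← e1, ← e2, h1]
    subst h2
    rw [mul_right_inj] at h1
    exact Prod.ext rfl (Subtype.ext h1)
  · intro u
    refine ⟨(u.1.1 (Sum.inl i) (sc i), ⟨_, xr_mul_mem i u.2⟩), ?_⟩
    apply Subtype.ext
    simp [xr_neg]
  · intro x
    simp [mul_assoc]

lemma Par_conj_iff {τ : Ix a → ℤ} {hτ : Odd' τ} {p : Sp a F} (hp : p ∈ Par F τ hτ) (u : Sp a F) :
    u ∈ Rad F τ hτ ↔ p * u * p⁻¹ ∈ Rad F τ hτ := by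
  refine ⟨Rad_conj hp, fun h => ?_⟩
  have := Rad_conj ((Par F τ hτ).inv_mem hp) h
  simpa [mul_assoc] using this

end Kel

end SpSt


open Matrix

namespace SpSt

section Tor

variable {a : ℕ} {F : Type} [Field F]

lemma diag_Em {p : Fin 2 → Ix a} {D : Ix a → F} (hD : ∀ k, D (p k) = 1) (A : Matrix (Fin 2) (Fin 2) F) :
    Matrix.diagonal D * Em p A = Em p A * Matrix.diagonal D := by
  have h1 : Matrix.diagonal D * Pm F p = Pm F p := by
    ext x k
    rw [Matrix.diagonal_mul]
    unfold Pm
    split_ifs with h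
    · rw [h, hD, one_mul]
    · rw [mul_zero]
  have h2 : (Pm F p)ᵀ * Matrix.diagonal D = (Pm F p)ᵀ := by
    have := congrArg Matrix.transpose h1
    rwa [Matrix.transpose_mul, Matrix.diagonal_transpose] at this
  unfold Em
  rw [mul_add, add_mul, ← Matrix.mul_assoc, ← Matrix.mul_assoc, h1, Matrix.mul_assoc _ _ (Matrix.diagonal D), h2]
  simp

lemma Em_diag {p : Fin 2 → Ix a} (hp : Function.Injective p) (u v : F) :
    Em p !![u, 0; 0, v] = Matrix.diagonal (fun x => if x = p 0 then u else if x = p 1 then v else 1) := by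
  have h01 : p 1 ≠ p 0 := fun h => by simpa using hp h
  ext x y
  by_cases h0 : x = p 0
  · subst h0
    rw [Em_mulVec _ _ hp, Fin.sum_univ_two, Matrix.diagonal_apply, Matrix.one_apply]
    simp
  by_cases h1 : x = p 1
  · subst h1
    rw [Em_mulVec _ _ hp, Fin.sum_univ_two, Matrix.diagonal_apply, Matrix.one_apply]
    simp [h01]
    simp [Matrix.one_apply]
  · rw [Em_row_out, Matrix.diagonal_apply, Matrix.one_apply]
    · simp [h0, h1]
    · intro k; fin_cases k
      · exact h0
      · exact h1

/-- Diagonal entries of torus elements. -/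
def tde (d : Fin a → Fˣ) : Ix a → F := Sum.elim (fun i => (d i : F)) (fun i => ((d i)⁻¹ : Fˣ))

lemma tor_mem (d : Fin a → Fˣ) : Matrix.diagonal (tde d) ∈ symplecticGroup (Fin a) F := by
  rw [SymplecticGroup.mem_iff]
  ext x y
  rw [Matrix.diagonal_transpose, Matrix.mul_diagonal, Matrix.diagonal_mul, J_apply]
  split_ifs with h
  · subst h
    rcases x with x | x <;> simp [tde]
  · simp

/-- Torus elements. -/
def tor (d : Fin a → Fˣ) : Sp a F := ⟨Matrix.diagonal (tde d), tor_mem d⟩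

lemma tor_mul (d e : Fin a → Fˣ) : tor d * tor e = tor (d * e) := by
  apply Subtype.ext
  change Matrix.diagonal (tde d) * Matrix.diagonal (tde e) = Matrix.diagonal (tde (d * e))
  rw [Matrix.diagonal_mul_diagonal]
  congr 1
  funext x
  rcases x with x | x <;> simp [tde, mul_comm]

lemma tor_one : tor (1 : Fin a → Fˣ) = 1 := by
  apply Subtype.ext
  change Matrix.diagonal (tde 1) = 1
  rw [← Matrix.diagonal_one]
  congr 1
  funext x
  rcases x with x | x <;> simp [tde]

lemma tor_inv (d : Fin a → Fˣ) : (tor d)⁻¹ = tor d⁻¹ := by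
  rw [inv_eq_iff_mul_eq_one, tor_mul, mul_inv_cancel, tor_one]

lemma tor_mem_Bor (d : Fin a → Fˣ) : tor d ∈ Bor a F := by
  intro p q h
  change Matrix.diagonal _ p q = 0
  rw [Matrix.diagonal_apply_ne]
  rintro rfl; exact lt_irrefl _ h

lemma tor_Km {i : Fin a} {d : Fin a → Fˣ} (h : ∀ k, tde d (p1 i k) = 1) (A : Matrix (Fin 2) (Fin 2) F) :
    (tor d).1 * Km i A = Km i A * (tor d).1 := by
  change Matrix.diagonal (tde d) * _ = _ * Matrix.diagonal (tde d)
  have h2 : ∀ k, tde d (p2 i k) = 1 := by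
    intro k
    have := h k
    rw [p2_eq]
    rcases hk : p1 i k with x | x <;> rw [hk] at this <;> simpa [tde] using this
  unfold Km
  split_ifs with hi
  · rw [← Matrix.mul_assoc, diag_Em h, Matrix.mul_assoc, diag_Em h2, Matrix.mul_assoc]
  · exact diag_Em h A

/-- Rank one torus element, last case. -/
lemma Km_diag_last {i : Fin a} (hi : ¬ (i : ℕ) + 1 < a) (u : Fˣ) :
    Km i !![(u : F), 0; 0, ((u⁻¹ : Fˣ) : F)] = (tor (Pi.mulSingle i u)).1 := by
  unfold Km
  rw [if_neg hi, Em_diag (p1_inj i)]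
  change _ = Matrix.diagonal (tde _)
  congr 1
  funext x
  rcases x with x | x <;> by_cases hx : x = i <;> simp [p1, sc, hi, tde, Pi.mulSingle_apply, hx]

lemma Km_diag {i : Fin a} (hi : (i : ℕ) + 1 < a) (u v : Fˣ) :
    Km i !![(u : F), 0; 0, (v : F)] = (tor (Pi.mulSingle i u * Pi.mulSingle ⟨i + 1, hi⟩ v)).1 := by
  unfold Km
  have hinv : (!![(u : F), 0; 0, (v : F)]⁻¹)ᵀ = !![((u⁻¹ : Fˣ) : F), 0; 0, ((v⁻¹ : Fˣ) : F)] := by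
    have : (!![(u : F), 0; 0, (v : F)])⁻¹ = !![((u⁻¹ : Fˣ) : F), 0; 0, ((v⁻¹ : Fˣ) : F)] := by
      apply Matrix.inv_eq_right_inv
      ext k l; fin_cases k <;> fin_cases l <;> simp [Matrix.mul_apply, Fin.sum_univ_two]
    rw [this]
    ext k l; fin_cases k <;> fin_cases l <;> simp
  rw [if_pos hi, hinv, Em_diag (p1_inj i), Em_diag (p2_inj i), Matrix.diagonal_mul_diagonal]
  change _ = Matrix.diagonal (tde _)
  congr 1
  have h3 : i ≠ ⟨(i : ℕ) + 1, hi⟩ := by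
    intro h
    have := congrArg Fin.val h
    simp at this
  funext x
  rcases x with x | x
  · by_cases hx : x = i
    · subst hx; simp [p1, p2, sc, hi, tde, Pi.mulSingle_apply, h3]
    by_cases hx2 : x = ⟨i + 1, hi⟩
    · subst hx2; simp [p1, p2, sc, hi, tde, Pi.mulSingle_apply, h3.symm, hx]
    · simp [p1, p2, sc, hi, tde, Pi.mulSingle_apply, hx2, hx]
  · by_cases hx : x = i
    · subst hx; simp [p1, p2, sc, hi, tde, Pi.mulSingle_apply, h3]
    by_cases hx2 : x = ⟨i + 1, hi⟩
    · subst hx2; simp [p1, p2, sc, hi, tde, Pi.mulSingle_apply, h3.symm, hx]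
    · simp [p1, p2, sc, hi, tde, Pi.mulSingle_apply, hx2, hx]

/-- The form as a group element. -/
def Je (a : ℕ) (F : Type) [Field F] : Sp a F := ⟨J (Fin a) F, SymplecticGroup.J_mem _ _⟩

lemma inv_mul_J (g : Sp a F) : (g⁻¹ : Sp a F).1 * J (Fin a) F = J (Fin a) F * g.1ᵀ := by
  have h := SymplecticGroup.mem_iff.1 g.2
  calc _ = (g⁻¹ : Sp a F).1 * (g.1 * J (Fin a) F * g.1ᵀ) := by rw [h]
    _ = ((g⁻¹ : Sp a F).1 * g.1) * J (Fin a) F * g.1ᵀ := by simp only [Matrix.mul_assoc]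
    _ = _ := by rw [coe_inv_mul, Matrix.one_mul]

lemma Ks_twist {i : Fin a} {R : Sp a F} (hR : ∀ A : Matrix (Fin 2) (Fin 2) F, R.1 * Km i A = Km i A * R.1)
    {A h : Matrix (Fin 2) (Fin 2) F} (hA : Ok i A) (hh : h.det = 1) (hAh : Ok i (hᵀ * A * h)) :
    (Ks i h (Ok.of_det hh))⁻¹ * (Je a F * R * Ks i A hA) * Ks i h (Ok.of_det hh) =
      Je a F * R * Ks i (hᵀ * A * h) hAh := by
  apply Subtype.ext
  change ((Ks i h (Ok.of_det hh))⁻¹ : Sp a F).1 * (J (Fin a) F * R.1 * Km i A) * Km i h = J (Fin a) F * R.1 * Km i (hᵀ * A * h)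
  calc _ = (((Ks i h (Ok.of_det hh))⁻¹ : Sp a F).1 * J (Fin a) F) * R.1 * Km i A * Km i h := by
        simp only [Matrix.mul_assoc]
    _ = J (Fin a) F * (Km i hᵀ * R.1) * Km i A * Km i h := by
        rw [inv_mul_J, ← Km_transpose]
        simp only [Matrix.mul_assoc]
        rfl
    _ = J (Fin a) F * R.1 * (Km i hᵀ * Km i A * Km i h) := by
        rw [← hR]; simp only [Matrix.mul_assoc]
    _ = _ := by rw [Km_mul, Km_mul]

lemma phi_conj [Finite F] {k : Type*} [Field k] {f : Sp a F → k} (hf : ∀ g h : Sp a F, f (h * g * h⁻¹) = f g)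
    {i : Fin a} {R : Sp a F} (hR : ∀ A : Matrix (Fin 2) (Fin 2) F, R.1 * Km i A = Km i A * R.1)
    {A h B : Matrix (Fin 2) (Fin 2) F} (hA : Ok i A) (hh : h.det = 1) (hB : Ok i B) (hAh : hᵀ * A * h = B) :
    cosetSum (Ui F i) f (Je a F * R * Ks i B hB) = cosetSum (Ui F i) f (Je a F * R * Ks i A hA) := by
  subst hAh
  rw [← Ks_twist hR hA hh hB]
  have := cosetSum_conj (Ui F i) hf (Je a F * R * Ks i A hA) (d := (Ks i h (Ok.of_det hh))⁻¹)
    (Par_conj_iff ((Pi' F i).inv_mem (Ks_mem_Pi i _)))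
  rwa [inv_inv] at this

lemma Km_inj (i : Fin a) {A : Matrix (Fin 2) (Fin 2) F} (h : Km i A = 1) : A = 1 := by
  ext k l
  have := Km_mul_row i A 1 k (p1 i l)
  rw [Matrix.mul_one, h] at this
  fin_cases k <;> fin_cases l <;> simp [p1_0, p1_1, Matrix.one_apply, sc_ne i, (sc_ne i).symm] at this ⊢ <;>
    first | exact this.symm | exact this

lemma Ks_pow (i : Fin a) {A : Matrix (Fin 2) (Fin 2) F} (hA : Ok i A) (n : ℕ) :
    (Ks i A hA ^ n).1 = Km i (A ^ n) := by
  induction n with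
  | zero => rw [pow_zero, pow_zero, Km_one]; rfl
  | succ n ih =>
    rw [pow_succ, pow_succ, ← Km_mul, ← ih]; rfl

lemma phi_zero [Finite F] {ℓ : ℕ} (hℓ : ℓ.Prime) {k : Type*} [Field k] [CharP k ℓ] {f : Sp a F → k} (hf : Good ℓ f)
    {i : Fin a} {R : Sp a F} (hR : ∀ A : Matrix (Fin 2) (Fin 2) F, R.1 * Km i A = Km i A * R.1)
    {A h : Matrix (Fin 2) (Fin 2) F} (hA : Ok i A) (hh : h.det = 1) (hAh : hᵀ * A * h = A)
    (h1 : h ≠ 1) (hl : h ^ ℓ = 1) :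
    cosetSum (Ui F i) f (Je a F * R * Ks i A hA) = 0 := by
  refine cosetSum_zero hℓ (Ui F i) hf _ (Ks i h (Ok.of_det hh)) ?_ ?_
    (Par_conj_iff (Ks_mem_Pi i _)) ?_
  · intro hc
    exact h1 (Km_inj i (congrArg Subtype.val hc))
  · apply Subtype.ext
    rw [Ks_pow, hl, Km_one]; rfl
  · have := Ks_twist hR hA hh (by rw [hAh]; exact hA)
    simp only [hAh] at this
    set g := Je a F * R * Ks i A hA
    set d := Ks i h (Ok.of_det hh)
    have h2 : g⁻¹ * d * g * d⁻¹ = 1 := by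
      rw [mul_inv_eq_one]
      rw [mul_assoc, inv_mul_eq_iff_eq_mul] at this
      rw [mul_assoc, inv_mul_eq_iff_eq_mul]
      exact this.symm
    rw [h2]; exact (Ui F i).one_mem

lemma upow {N : Matrix (Fin 2) (Fin 2) F} (hN : N * N = 0) (n : ℕ) : (1 + N) ^ n = 1 + (n : F) • N := by
  induction n with
  | zero => simp
  | succ n ih =>
    rw [pow_succ, ih, add_mul, mul_add, one_mul, one_mul, smul_mul_assoc, mul_add, hN, mul_one]
    push_cast
    rw [add_smul]
    simp only [add_zero, one_smul]
    abel

lemma quad_rep [Fintype F] (h2 : (2 : F) ≠ 0) {d1 d2 c e : F} (hd1 : d1 ≠ 0)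
    (hc : c ^ 2 ≠ 4 * d1 * d2) : ∃ x y : F, d1 * x ^ 2 + c * x * y + d2 * y ^ 2 = e := by
  have hm : 4 * d1 * d2 - c ^ 2 ≠ 0 := fun h => hc (sub_eq_zero.1 h).symm
  have hodd : Fintype.card F % 2 = 1 := by
    rcases Nat.mod_two_eq_zero_or_one (Fintype.card F) with h | h
    · exfalso
      apply h2
      have := FiniteField.even_card_iff_char_two.2 h
      have h3 := ringChar.Nat.cast_ringChar (R := F)
      rw [this] at h3
      exact_mod_cast h3
    · exact h
  obtain ⟨z, y, hzy⟩ := FiniteField.exists_root_sum_quadratic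
    (f := Polynomial.X ^ 2 - Polynomial.C (4 * d1 * e))
    (g := Polynomial.C (4 * d1 * d2 - c ^ 2) * Polynomial.X ^ 2)
    (Polynomial.degree_X_pow_sub_C (by norm_num) _)
    (by rw [Polynomial.degree_C_mul hm]; simp) hodd
  simp at hzy
  refine ⟨(z - c * y) / (2 * d1), y, ?_⟩
  field_simp
  have h4 : (4 : F) ≠ 0 := by
    have : (4 : F) = 2 * 2 := by norm_num
    rw [this]; exact mul_ne_zero h2 h2
  linear_combination hzy

lemma phi_tri [Fintype F] {ℓ : ℕ} (hℓ : ℓ.Prime) [CharP F ℓ] (h2 : (2 : F) ≠ 0) {k : Type*} [Field k] [CharP k ℓ]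
    {f : Sp a F → k} (hf : Good ℓ f)
    {i : Fin a} {R : Sp a F} (hR : ∀ A : Matrix (Fin 2) (Fin 2) F, R.1 * Km i A = Km i A * R.1)
    {d1 d2 e1 e2 : F} (c : F) (hd1 : d1 ≠ 0) (he1 : e1 ≠ 0) (hde : d1 * d2 = e1 * e2)
    (hA : Ok i !![d1, c; 0, d2]) (hB : Ok i !![e1, c; 0, e2]) :
    cosetSum (Ui F i) f (Je a F * R * Ks i _ hB) = cosetSum (Ui F i) f (Je a F * R * Ks i _ hA) := by
  by_cases hc : c ^ 2 = 4 * d1 * d2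
  · have hz : ∀ {d1 d2 : F} (_ : d1 ≠ 0) (_ : c ^ 2 = 4 * d1 * d2) (hA : Ok i !![d1, c; 0, d2]),
        cosetSum (Ui F i) f (Je a F * R * Ks i _ hA) = 0 := by
      clear hA hB hc hd1 hde d1 d2
      intro d1 d2 hd1 hc hA
      have hN : !![c * (2 * d1), c ^ 2; -(2 * d1) ^ 2, -(c * (2 * d1))] *
          !![c * (2 * d1), c ^ 2; -(2 * d1) ^ 2, -(c * (2 * d1))] = 0 := by
        ext k l; fin_cases k <;> fin_cases l <;> simp [Matrix.mul_apply, Fin.sum_univ_two] <;> ring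
      refine phi_zero hℓ hf hR (h := 1 + !![c * (2 * d1), c ^ 2; -(2 * d1) ^ 2, -(c * (2 * d1))]) hA ?_ ?_ ?_ ?_
      · simp [Matrix.det_fin_two]; ring
      · ext k l; fin_cases k <;> fin_cases l <;> simp [Matrix.mul_apply, Fin.sum_univ_two]
        · linear_combination (-4 * d1 ^ 3) * hc
        · linear_combination (d1 - 2 * d1 ^ 2 * c) * hc
        · linear_combination (d1 - 2 * d1 ^ 2 * c) * hc
        · linear_combination (c - d1 * c ^ 2) * hc
      · intro h
        have := congrFun (congrFun h 1) 0
        simp [h2, hd1] at this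
      · rw [upow hN, CharP.cast_eq_zero]; simp
    rw [hz hd1 hc hA, hz he1 (by rw [hc, mul_assoc, mul_assoc, hde]) hB]
  · obtain ⟨x, y, hxy⟩ := quad_rep (e := e1) h2 hd1 hc
    refine phi_conj hf.1 hR (h := !![x, -(d2 * y) / e1; y, (d1 * x + c * y) / e1]) hA ?_ hB ?_
    · rw [Matrix.det_fin_two]; simp; field_simp; linear_combination hxy
    · ext k l; fin_cases k <;> fin_cases l <;> simp [Matrix.mul_apply, Fin.sum_univ_two]
      · linear_combination hxy
      · field_simp; linear_combination c * hxy
      · field_simp; ring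
      · field_simp; linear_combination d1 * d2 * hxy + e1 * hde

lemma phi_sum [Fintype F] {ℓ : ℕ} (hℓ : ℓ.Prime) [CharP F ℓ] (h2 : (2 : F) ≠ 0) {k : Type*} [Field k] [CharP k ℓ]
    {f : Sp a F → k} (hf : Good ℓ f)
    {i : Fin a} {R : Sp a F} (hR : ∀ A : Matrix (Fin 2) (Fin 2) F, R.1 * Km i A = Km i A * R.1)
    {d1 d2 e1 e2 : F} (hd1 : d1 ≠ 0) (he1 : e1 ≠ 0) (hde : d1 * d2 = e1 * e2)
    (hA : Ok i !![d1, 0; 0, d2]) (hB : Ok i !![e1, 0; 0, e2]) :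
    cosetSum (Uni a F) f (Je a F * R * Ks i _ hB) = cosetSum (Uni a F) f (Je a F * R * Ks i _ hA) := by
  have ok : ∀ {d1 d2 : F} (_ : Ok i !![d1, 0; 0, d2]) (c : F), Ok i !![d1, c; 0, d2] := by
    intro d1 d2 h c
    unfold Ok at h ⊢
    simpa [Matrix.det_fin_two] using h
  have key : ∀ {d1 d2 : F} (_ : d1 ≠ 0) (h : Ok i !![d1, 0; 0, d2]),
      cosetSum (Uni a F) f (Je a F * R * Ks i _ h) =
        ∑ c : F, cosetSum (Ui F i) f (Je a F * R * Ks i _ (ok h c)) := by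
    intro d1 d2 hd h
    rw [cosetSum_Uni i]
    refine Fintype.sum_equiv (Equiv.mulLeft₀ d1 hd) _ _ fun c => ?_
    congr 1
    unfold xr
    rw [mul_assoc, Ks_mul]
    congr 2
    ext k l; fin_cases k <;> fin_cases l <;> simp [Matrix.mul_apply, Fin.sum_univ_two]
  rw [key hd1 hA, key he1 hB]
  exact Finset.sum_congr rfl fun c _ => phi_tri hℓ h2 hf hR c hd1 he1 hde _ _

lemma tor_inv_odd [Fintype F] {ℓ : ℕ} (hℓ : ℓ.Prime) [CharP F ℓ] (h2 : (2 : F) ≠ 0) {k : Type*} [Field k] [CharP k ℓ]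
    {f : Sp a F → k} (hf : Good ℓ f) (n : ℕ) (hn : n ≤ a) (d : Fin a → Fˣ) :
    ∃ d' : Fin a → Fˣ, (∀ j : Fin a, (j : ℕ) < n → d' j = 1) ∧
      cosetSum (Uni a F) f (Je a F * tor d) = cosetSum (Uni a F) f (Je a F * tor d') := by
  induction n with
  | zero => exact ⟨d, by simp, rfl⟩
  | succ n ih =>
    obtain ⟨d', hd', hF⟩ := ih (by omega)
    rw [hF]
    let i : Fin a := ⟨n, by omega⟩
    by_cases hi : (i : ℕ) + 1 < a
    · have h3 : i ≠ ⟨(i : ℕ) + 1, hi⟩ := by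
        intro h
        have := congrArg Fin.val h
        simp at this
      set j : Fin a := ⟨(i : ℕ) + 1, hi⟩ with hj
      let r : Fin a → Fˣ := d' * (Pi.mulSingle i (d' i) * Pi.mulSingle j (d' j))⁻¹
      have hr : ∀ k, tde r (p1 i k) = 1 := by
        intro k
        fin_cases k
        · simp [p1, tde, r, Pi.mulSingle_apply, h3]
        · have : sc i = Sum.inl j := by simp [sc, hi, hj]
          simp [p1, tde, r, Pi.mulSingle_apply, h3.symm, this]
      have hok : ∀ u v : Fˣ, Ok i !![(u : F), 0; 0, (v : F)] := by
        intro u v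
        refine ⟨?_, fun h => absurd hi h⟩
        rw [Matrix.det_fin_two]; simp
      refine ⟨r * (Pi.mulSingle i 1 * Pi.mulSingle j (d' i * d' j)), ?_, ?_⟩
      · intro l hl
        have hlj : l ≠ j := by rintro rfl; simp [hj, i] at hl
        by_cases hli : l = i
        · subst hli; simp [r, Pi.mulSingle_apply, h3]
        · have : (l : ℕ) < n := by
            have : (l : ℕ) ≠ n := fun h => hli (Fin.ext h)
            omega
          simp [r, Pi.mulSingle_apply, hlj, hli, hd' l this]
      · have e1 : ∀ u v : Fˣ, tor (r * (Pi.mulSingle i u * Pi.mulSingle j v)) = tor r * Ks i _ (hok u v) := by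
          intro u v
          rw [← tor_mul]
          congr 1
          exact Subtype.ext (Km_diag hi u v).symm
        have e2 : d' = r * (Pi.mulSingle i (d' i) * Pi.mulSingle j (d' j)) := (inv_mul_cancel_right _ _).symm
        conv_lhs => rw [e2, e1]
        rw [e1, ← mul_assoc, ← mul_assoc]
        exact phi_sum hℓ h2 hf (tor_Km hr) (by simp) (by simp) (by simp) _ _
    · let r : Fin a → Fˣ := d' * (Pi.mulSingle i (d' i))⁻¹
      have hr : ∀ k, tde r (p1 i k) = 1 := by
        intro k
        fin_cases k
        · simp [p1, tde, r]
        · have : sc i = Sum.inr i := by simp [sc, hi]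
          simp [p1, tde, r, this]
      have hok : ∀ u : Fˣ, Ok i !![(u : F), 0; 0, ((u⁻¹ : Fˣ) : F)] := by
        intro u
        apply Ok.of_det
        rw [Matrix.det_fin_two]; simp
      refine ⟨r * Pi.mulSingle i 1, ?_, ?_⟩
      · intro l hl
        by_cases hli : l = i
        · subst hli; simp [r]
        · have : (l : ℕ) < n := by
            have : (l : ℕ) ≠ n := fun h => hli (Fin.ext h)
            omega
          simp [r, Pi.mulSingle_apply, hli, hd' l this]
      · have e1 : ∀ u : Fˣ, tor (r * Pi.mulSingle i u) = tor r * Ks i _ (hok u) := by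
          intro u
          rw [← tor_mul]
          congr 1
          exact Subtype.ext (Km_diag_last hi u).symm
        have e2 : d' = r * Pi.mulSingle i (d' i) := by simp [r]
        conv_lhs => rw [e2, e1]
        rw [e1, ← mul_assoc, ← mul_assoc]
        exact phi_sum hℓ h2 hf (tor_Km hr) (by simp) (by simp) (by simp) _ _

/-- Torus invariance of coset sums on the big cell. -/
theorem cosetSum_J_tor {ℓ : ℕ} [Fact ℓ.Prime] {k : Type*} [Field k] [CharP k ℓ]
    {f : Sp a (ZMod ℓ) → k} (hf : Good ℓ f) (d : Fin a → (ZMod ℓ)ˣ) :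
    cosetSum (Uni a (ZMod ℓ)) f (Je a (ZMod ℓ) * tor d) = cosetSum (Uni a (ZMod ℓ)) f (Je a (ZMod ℓ)) := by
  have hℓ : ℓ.Prime := Fact.out
  by_cases h : ℓ = 2
  · subst h
    have : d = 1 := by
      funext i
      exact Subsingleton.elim _ _
    rw [this, tor_one, mul_one]
  · have h2 : (2 : ZMod ℓ) ≠ 0 := by
      intro h0
      have : ((2 : ℕ) : ZMod ℓ) = 0 := by exact_mod_cast h0
      rw [ZMod.natCast_eq_zero_iff] at this
      exact h ((Nat.prime_dvd_prime_iff_eq hℓ Nat.prime_two).1 this)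
    obtain ⟨d', h1, h3⟩ := tor_inv_odd hℓ h2 hf a le_rfl d
    have : d' = 1 := funext fun j => h1 j j.2
    rw [h3, this, tor_one, mul_one]

end Tor

end SpSt


open Matrix

namespace SpSt

section Eich

variable {a : ℕ} {F : Type} [Field F]

lemma swap_ne (q : Ix a) : q.swap ≠ q := by rcases q with q | q <;> simp

/-- Row functional of Eichler transformations. -/
def Eal (q : Ix a) : Ix a → F := fun y => if y = q.swap then sg F q else 0
/-- Row functional of Eichler transformations. -/
def Ebe (q : Ix a) (r : Ix a → F) (c : F) : Ix a → F :=
  fun y => - sg F y * r y.swap + if y = q.swap then c * sg F q else 0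

/-- Eichler transformations minus one. -/
def EN (q : Ix a) (r : Ix a → F) (c : F) : Matrix (Ix a) (Ix a) F :=
  Matrix.vecMulVec r (Eal q) + Matrix.vecMulVec (Pi.single q 1) (Ebe q r c)

lemma EN_apply (q : Ix a) (r : Ix a → F) (c : F) (x y : Ix a) :
    EN q r c x y = r x * Eal q y + (if x = q then Ebe q r c y else 0) := by
  simp [EN, Matrix.vecMulVec_apply, Pi.single_apply]

lemma EN_sq {q : Ix a} {r : Ix a → F} (c : F) (hq : r q.swap = 0) : EN q r c * EN q r c = 0 := by
  have h1 : Eal q ⬝ᵥ r = 0 := by simp [Eal, dotProduct, hq]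
  have h2 : Eal q ⬝ᵥ (Pi.single q (1 : F)) = 0 := by
    simp [Eal, (swap_ne q).symm]
  have h3 : Ebe q r c ⬝ᵥ r = 0 := by
    simp only [Ebe, dotProduct, add_mul, Finset.sum_add_distrib]
    simp only [Fintype.sum_sum_type]
    rcases q with q | q <;> simp at hq <;> simp [hq, mul_comm]
  have h4 : Ebe q r c ⬝ᵥ (Pi.single q (1 : F)) = 0 := by
    simp [Ebe, (swap_ne q).symm, hq]
  unfold EN
  simp only [add_mul, mul_add, Matrix.vecMulVec_mul_vecMulVec, h1, h2, h3, h4]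
  ext x y
  simp [Matrix.vecMulVec_apply]

lemma EN_symm (q : Ix a) (r : Ix a → F) (c : F) :
    (J (Fin a) F * EN q r c)ᵀ = J (Fin a) F * EN q r c := by
  ext x y
  rw [Matrix.transpose_apply, J_mul_apply, J_mul_apply, EN_apply, EN_apply]
  simp only [Eal, Ebe]
  have e : ∀ z : Ix a, (z.swap = q) = (z = q.swap) := by
    intro z
    rcases z with z | z <;> rcases q with q | q <;> simp
  simp only [e]
  by_cases h1 : x = q.swap <;> by_cases h2 : y = q.swap <;> simp [h1, h2, sg_swap] <;> ring

lemma mem_of_sq {N : Matrix (Ix a) (Ix a) F} (h1 : (J (Fin a) F * N)ᵀ = J (Fin a) F * N) (h2 : N * N = 0) :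
    1 + N ∈ symplecticGroup (Fin a) F := by
  rw [SymplecticGroup.mem_iff']
  have h3 : Nᵀ * J (Fin a) F = - (J (Fin a) F * N) := by
    rw [← h1, Matrix.transpose_mul, J_transpose]; simp
  rw [Matrix.transpose_add, Matrix.transpose_one, add_mul, h3, mul_add, add_mul, Matrix.one_mul,
    add_mul, Matrix.neg_mul, Matrix.neg_mul, Matrix.mul_assoc _ N N, h2]
  simp

/-- Eichler transformations. -/
def Ei (q : Ix a) (r : Ix a → F) (c : F) (hq : r q.swap = 0) : Sp a F :=
  ⟨1 + EN q r c, mem_of_sq (EN_symm q r c) (EN_sq c hq)⟩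

lemma Ei_mem {q : Ix a} {r : Ix a → F} {c : F} (hq : r q.swap = 0)
    (h1 : ∀ x, r x ≠ 0 → rh x < rh q.swap) (h2 : c ≠ 0 → rh q < rh q.swap) : Ei q r c hq ∈ Uni a F := by
  rw [mem_Uni]
  change InN rh ((1 + EN q r c) - 1)
  rw [add_sub_cancel_left]
  intro x y hxy
  rw [EN_apply]
  have e1 : r x * Eal q y = 0 := by
    by_contra hc
    have := h1 x (left_ne_zero_of_mul hc)
    have h3 := right_ne_zero_of_mul hc
    simp only [Eal, ne_eq, ite_eq_right_iff, Classical.not_imp] at h3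
    rw [h3.1] at hxy
    omega
  rw [e1, zero_add]
  split_ifs with hx
  · subst hx
    unfold Ebe
    have e2 : r y.swap = 0 := by
      by_contra hc
      have := h1 _ hc
      rw [rh_swap, rh_swap] at this
      omega
    rw [e2]
    split_ifs with hy
    · have : c = 0 := by
        by_contra hc
        have := h2 hc
        rw [← hy] at this
        omega
      rw [this]; simp
    · simp
  · rfl

lemma mul_Ei_apply {q : Ix a} {r : Ix a → F} {c : F} (hq : r q.swap = 0) (M : Matrix (Ix a) (Ix a) F)
    (x y : Ix a) : (M * (Ei q r c hq).1) x y = M x y + (∑ z, M x z * r z) * Eal q y + M x q * Ebe q r c y := by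
  change (M * (1 + EN q r c)) x y = _
  rw [mul_add, Matrix.mul_one, Matrix.add_apply, Matrix.mul_apply]
  simp only [EN_apply, mul_add, Finset.sum_add_distrib, ← mul_assoc, ← Finset.sum_mul]
  simp [add_assoc]

lemma Ei_mul_apply {q : Ix a} {r : Ix a → F} {c : F} (hq : r q.swap = 0) (M : Matrix (Ix a) (Ix a) F)
    (x y : Ix a) : ((Ei q r c hq).1 * M) x y =
      M x y + r x * (sg F q * M q.swap y) + (if x = q then ∑ z, Ebe q r c z * M z y else 0) := by
  change ((1 + EN q r c) * M) x y = _
  rw [add_mul, Matrix.one_mul, Matrix.add_apply, Matrix.mul_apply]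
  simp only [EN_apply, add_mul, Finset.sum_add_distrib, mul_assoc, ← Finset.mul_sum]
  rw [add_assoc]
  congr 2
  · simp [Eal]
  · split_ifs <;> simp

lemma Ebe_sum (q : Ix a) (r : Ix a → F) (c : F) (M : Matrix (Ix a) (Ix a) F) (y : Ix a) :
    ∑ z, Ebe q r c z * M z y = (∑ z, - sg F z * r z.swap * M z y) + c * sg F q * M q.swap y := by
  simp only [Ebe, add_mul, Finset.sum_add_distrib]
  congr 1
  simp

end Eich

section Weyl

variable {a : ℕ} {F : Type} [Field F]

/-- The Weyl group. -/
def Wy (a : ℕ) : Subgroup (Equiv.Perm (Ix a)) where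
  carrier := {π | ∀ p, π p.swap = (π p).swap}
  mul_mem' := fun {π σ} h1 h2 p => by
    rw [Equiv.Perm.mul_apply, Equiv.Perm.mul_apply, h2 p, h1]
  one_mem' := fun p => rfl
  inv_mem' := fun {π} h p => by
    rw [Equiv.Perm.inv_eq_iff_eq, h]; simp

lemma Wy_swap (π : Wy a) (p : Ix a) : π.1 p.swap = (π.1 p).swap := π.2 p

/-- Signs in the monomial representatives. -/
def nsg (F : Type) [Field F] (π : Wy a) (y : Ix a) : F :=
  Sum.elim (fun _ => 1) (fun j => sg F (π.1 (Sum.inl j))) y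

lemma nsg_ne (π : Wy a) (y : Ix a) : nsg F π y ≠ 0 := by
  rcases y with y | y
  · simp [nsg]
  · simpa [nsg] using sg_ne _

/-- Monomial matrices. -/
def nm (F : Type) [Field F] (π : Wy a) : Matrix (Ix a) (Ix a) F :=
  fun x y => if x = π.1 y then nsg F π y else 0

lemma nm_mem (π : Wy a) : nm F π ∈ symplecticGroup (Fin a) F := by
  rw [SymplecticGroup.mem_iff']
  ext y z
  rw [Matrix.mul_apply]
  simp only [mul_J_apply, Matrix.transpose_apply]
  rw [Finset.sum_eq_single (π.1 z)]
  · simp only [nm, if_true, J_apply]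
    have e : ((π.1 z).swap = π.1 y) = (z = y.swap) := by
      rw [← Wy_swap, π.1.injective.eq_iff]
      rcases z with z | z <;> rcases y with y | y <;> simp
    simp only [e]
    split_ifs with h
    · subst h
      rcases y with y | y
      · have h1 := Wy_swap π (Sum.inl y)
        simp only [Sum.swap_inl] at h1
        simp only [nsg, Sum.swap_inl, Sum.elim_inl, Sum.elim_inr, sg_inl, mul_one, h1, sg_swap]
        rw [neg_mul, sg_sq]
      · simp only [nsg, Sum.swap_inr, Sum.elim_inl, Sum.elim_inr, sg_inr, mul_one, sg_sq, neg_neg]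
    · simp
  · intro x _ hx
    have : nm F π x z = 0 := if_neg hx
    rw [this, mul_zero]
  · simp

/-- Monomial representatives of Weyl group elements. -/
def nw (F : Type) [Field F] (π : Wy a) : Sp a F := ⟨nm F π, nm_mem π⟩

/-- Monomial elements of a given type. -/
def Mono (π : Wy a) (g : Sp a F) : Prop := ∀ x y, x ≠ π.1 y → g.1 x y = 0

lemma nw_mono (π : Wy a) : Mono π (nw F π) := fun x y h => if_neg h

lemma Mono.mul {π σ : Wy a} {g h : Sp a F} (hg : Mono π g) (hh : Mono σ h) : Mono (π * σ) (g * h) := by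
  intro x y hxy
  change (g.1 * h.1) x y = 0
  rw [Matrix.mul_apply]
  refine Finset.sum_eq_zero fun z _ => ?_
  by_cases hz : z = σ.1 y
  · rw [hg x z, zero_mul]
    rintro rfl
    apply hxy
    rw [hz]; rfl
  · rw [hh z y hz, mul_zero]

lemma Mono.inv {π : Wy a} {g : Sp a F} (hg : Mono π g) : Mono π⁻¹ g⁻¹ := by
  intro x y hxy
  rw [inv_apply, hg, mul_zero]
  intro h
  apply hxy
  rw [Wy_swap] at h
  have := Sum.swap_leftInverse.injective h
  rw [this]
  simp

lemma Mono.ne {π : Wy a} {g : Sp a F} (hg : Mono π g) (y : Ix a) : g.1 (π.1 y) y ≠ 0 := by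
  intro h
  have h1 := congrFun (congrFun (coe_inv_mul g) y) y
  rw [Matrix.mul_apply, Matrix.one_apply_eq, Finset.sum_eq_zero] at h1
  · exact zero_ne_one h1
  · intro z _
    by_cases hz : z = π.1 y
    · rw [hz, h, mul_zero]
    · rw [hg z y hz, mul_zero]

lemma Mono.tor {g : Sp a F} (hg : Mono 1 g) : ∃ d, g = tor d := by
  have hne := fun y => Mono.ne hg y
  refine ⟨fun i => Units.mk0 _ (hne (Sum.inl i)), ?_⟩
  apply Subtype.ext
  ext x y
  change _ = Matrix.diagonal (tde _) x y
  by_cases hxy : x = y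
  · subst hxy
    rw [Matrix.diagonal_apply_eq]
    rcases x with x | x
    · rfl
    · simp only [tde, Sum.elim_inr, Units.val_inv_eq_inv_val, Units.val_mk0]
      have h1 := congrFun (congrFun (coe_inv_mul g) (Sum.inl x)) (Sum.inl x)
      rw [Matrix.mul_apply, Matrix.one_apply_eq, Finset.sum_eq_single (Sum.inl x)] at h1
      · rw [inv_apply] at h1
        simp at h1
        exact eq_inv_of_mul_eq_one_left h1
      · intro z _ hz
        rw [hg z _ hz, mul_zero]
      · simp
  · rw [Matrix.diagonal_apply_ne _ hxy, hg x y hxy]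

lemma Mono.mem_Bor {g : Sp a F} (hg : Mono 1 g) : g ∈ Bor a F := by
  obtain ⟨d, rfl⟩ := hg.tor
  exact tor_mem_Bor d

lemma Mono.eq_nw {π : Wy a} {g : Sp a F} (hg : Mono π g) : ∃ d, g = nw F π * SpSt.tor d := by
  have := (nw_mono (F := F) π).inv.mul hg
  rw [inv_mul_cancel] at this
  obtain ⟨d, hd⟩ := this.tor
  exact ⟨d, by rw [← hd, mul_inv_cancel_left]⟩

end Weyl

end SpSt


open Matrix

namespace SpSt

section Bru

variable {a : ℕ} {F : Type} [Field F]

/-- If a column is monomial then a row is. -/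
lemma row_of_col {g : Sp a F} {j : Ix a} {p : Ix a} {c : F}
    (h : ∀ x, g.1 x j = if x = p then c else 0) (q : Ix a) :
    sg F j.swap * sg F p.swap * c * g.1 p.swap q = (1 : Matrix (Ix a) (Ix a) F) j.swap q := by
  have h1 := congrFun (congrFun (coe_inv_mul g) j.swap) q
  rw [Matrix.mul_apply, Finset.sum_eq_single p.swap] at h1
  · rw [inv_apply, Sum.swap_swap, Sum.swap_swap, h, if_pos rfl] at h1
    exact h1
  · intro x _ hx
    rw [inv_apply, Sum.swap_swap, h, if_neg, mul_zero, zero_mul]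
    intro hc
    apply hx
    rw [← hc, Sum.swap_swap]
  · simp

/-- Columns are monomial up to stage `k`. -/
def Stage (k : ℕ) (g : Sp a F) (p : Fin a → Ix a) (c : Fin a → F) : Prop :=
  ∀ j : Fin a, (j : ℕ) < k → c j ≠ 0 ∧ ∀ x, g.1 x (Sum.inl j) = if x = p j then c j else 0

lemma Stage.row {k : ℕ} {g : Sp a F} {p : Fin a → Ix a} {c : Fin a → F} (h : Stage k g p c)
    {j : Fin a} (hj : (j : ℕ) < k) {q : Ix a} (hq : q ≠ Sum.inr j) : g.1 (p j).swap q = 0 := by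
  have h1 := row_of_col (h j hj).2 q
  rw [Sum.swap_inl, Matrix.one_apply_ne hq.symm] at h1
  rcases mul_eq_zero.1 h1 with h2 | h2
  · exact absurd h2 (mul_ne_zero (mul_ne_zero (sg_ne _) (sg_ne _)) (h j hj).1)
  · exact h2

lemma Stage.inj {k : ℕ} {g : Sp a F} {p : Fin a → Ix a} {c : Fin a → F} (h : Stage k g p c)
    {i j : Fin a} (hi : (i : ℕ) < k) (hj : (j : ℕ) < k) (hp : p i = p j) : i = j := by
  by_contra hne
  have h1 := row_of_col (h j hj).2 (Sum.inr j)
  rw [Sum.swap_inl, Matrix.one_apply_eq, ← hp, h.row hi, mul_zero] at h1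
  · exact zero_ne_one h1
  · simpa using Ne.symm hne

lemma Stage.inj' {k : ℕ} {g : Sp a F} {p : Fin a → Ix a} {c : Fin a → F} (h : Stage k g p c)
    {i j : Fin a} (hi : (i : ℕ) < k) (hj : (j : ℕ) < k) : p i ≠ (p j).swap := by
  intro hp
  have h1 := h.row hj (q := Sum.inl i) (by simp)
  rw [← hp, (h i hi).2, if_pos rfl] at h1
  exact (h i hi).1 h1

lemma col_ne (g : Sp a F) (y : Ix a) : ∃ x, g.1 x y ≠ 0 := by
  by_contra! hc
  have h1 := congrFun (congrFun (coe_inv_mul g) y) y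
  rw [Matrix.mul_apply, Matrix.one_apply_eq, Finset.sum_eq_zero] at h1
  · exact zero_ne_one h1
  · intro z _; rw [hc, mul_zero]

/-- First half of the elimination step. -/
lemma step1 {k : ℕ} (hk : k < a) {h : Sp a F} {p : Fin a → Ix a} {c : Fin a → F} (hs : Stage k h p c) :
    ∃ u ∈ Uni a F, Stage k (h * u) p c ∧
      ∀ j : Fin a, (j : ℕ) < k → (h * u).1 (p j) (Sum.inl ⟨k, hk⟩) = 0 := by
  let r : Ix a → F := Sum.elim (fun j => if (j : ℕ) < k then h.1 (p j) (Sum.inl ⟨k, hk⟩) / c j else 0) (fun _ => 0)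
  have hr : r (Sum.swap (Sum.inr ⟨k, hk⟩)) = 0 := by simp [r]
  have hr2 : ∀ j, r (Sum.inr j) = 0 := fun j => rfl
  refine ⟨Ei (Sum.inr ⟨k, hk⟩) r 0 hr, Ei_mem _ ?_ (by simp), ?_, ?_⟩
  · intro x hx
    rcases x with x | x
    · simp only [r, Sum.elim_inl, ne_eq, ite_eq_right_iff, Classical.not_imp] at hx
      have := hx.1
      simp; omega
    · exact absurd rfl hx
  · intro j hj
    refine ⟨(hs j hj).1, fun x => ?_⟩
    change (h.1 * (Ei (Sum.inr ⟨k, hk⟩) r 0 hr).1) x (Sum.inl j) = _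
    rw [mul_Ei_apply, ← (hs j hj).2]
    have : j ≠ ⟨k, hk⟩ := by rintro rfl; simp at hj
    simp [Eal, Ebe, hr2, this]
  · intro j hj
    change (h.1 * (Ei (Sum.inr ⟨k, hk⟩) r 0 hr).1) (p j) (Sum.inl ⟨k, hk⟩) = _
    rw [mul_Ei_apply, Finset.sum_eq_single (Sum.inl j)]
    · rw [(hs j hj).2, if_pos rfl]
      simp only [Eal, Ebe, Sum.swap_inl, Sum.swap_inr, hr2, if_true, r, Sum.elim_inl, hj]
      have := (hs j hj).1
      simp
      field_simp
      ring
    · intro z _ hz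
      rcases z with z | z
      · by_cases hzk : (z : ℕ) < k
        · rw [(hs z hzk).2, if_neg, zero_mul]
          intro hc
          apply hz
          rw [hs.inj hj hzk hc]
        · simp [r, hzk]
      · rw [hr2, mul_zero]
    · simp

/-- Second half of the elimination step. -/
lemma step2 {k : ℕ} (hk : k < a) {h : Sp a F} {p : Fin a → Ix a} {c : Fin a → F} (hs : Stage k h p c)
    (h0 : ∀ j : Fin a, (j : ℕ) < k → h.1 (p j) (Sum.inl ⟨k, hk⟩) = 0) :
    ∃ u ∈ Uni a F, ∃ p' c', Stage (k + 1) (u * h) p' c' := by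
  classical
  set K : Ix a := Sum.inl ⟨k, hk⟩ with hK
  have h0' : ∀ j : Fin a, (j : ℕ) < k → h.1 (p j).swap K = 0 := fun j hj =>
    hs.row hj (by simp [hK])
  obtain ⟨y, hy⟩ := col_ne h K
  obtain ⟨t, ht, hmax⟩ := Finset.exists_max_image (Finset.univ.filter fun x => h.1 x K ≠ 0) rh
    ⟨y, by simpa using hy⟩
  have ht : h.1 t K ≠ 0 := by simpa using ht
  have hmax : ∀ x, h.1 x K ≠ 0 → rh x ≤ rh t := fun x hx => hmax x (by simpa using hx)
  let q := t.swap
  have hqt : q.swap = t := by simp [q]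
  have hqne : q ≠ t := swap_ne t
  let r : Ix a → F := fun x => if x = t ∨ x = q then 0 else - sg F q * h.1 x K / h.1 t K
  have hr : r q.swap = 0 := by simp [r, hqt]
  have hr0 : ∀ x, r x ≠ 0 → h.1 x K ≠ 0 ∧ x ≠ t := by
    intro x hx
    simp only [r, ne_eq, ite_eq_left_iff, Classical.not_imp, not_or] at hx
    refine ⟨fun hc => hx.2 (by rw [hc]; simp), hx.1.1⟩
  let S : F := ∑ z, - sg F z * r z.swap * h.1 z K
  let e : F := - (h.1 q K + S) / (sg F q * h.1 t K)
  have hu : Ei q r e hr ∈ Uni a F := by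
    refine Ei_mem _ ?_ ?_
    · intro x hx
      rw [hqt]
      obtain ⟨h1, h2⟩ := hr0 x hx
      exact lt_of_le_of_ne (hmax x h1) fun hc => h2 (rh_inj hc)
    · intro he
      rw [hqt]
      by_contra hc
      apply he
      have hq' : rh q = - rh t := rh_swap t
      have h1 : h.1 q K = 0 := by
        by_contra h2
        have := hmax q h2
        have h3 : rh q ≠ rh t := fun hc => hqne (rh_inj hc)
        omega
      have h2 : S = 0 := by
        refine Finset.sum_eq_zero fun z _ => ?_
        by_contra h3
        have h4 := hmax z (right_ne_zero_of_mul h3)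
        have h5 := right_ne_zero_of_mul (left_ne_zero_of_mul h3)
        have h6 := hmax _ (hr0 _ h5).1
        have h7 : rh z.swap ≠ rh t := fun hc => (hr0 _ h5).2 (rh_inj hc)
        rw [rh_swap] at h6 h7
        omega
      simp only [e, h1, h2]; simp
  refine ⟨_, hu, fun j => if (j : ℕ) < k then p j else t, fun j => if (j : ℕ) < k then c j else h.1 t K, ?_⟩
  intro j hj
  by_cases hjk : (j : ℕ) < k
  · simp only [hjk, if_true]
    refine ⟨(hs j hjk).1, fun x => ?_⟩
    change ((Ei q r e hr).1 * h.1) x (Sum.inl j) = _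
    rw [Ei_mul_apply, Ebe_sum, hqt, ← (hs j hjk).2]
    have h1 : h.1 t (Sum.inl j) = 0 := by
      rw [(hs j hjk).2, if_neg]
      rintro rfl
      exact ht (h0 j hjk)
    have h2 : ∑ z, - sg F z * r z.swap * h.1 z (Sum.inl j) = 0 := by
      refine Finset.sum_eq_zero fun z _ => ?_
      rw [(hs j hjk).2]
      split_ifs with hz
      · have : r z.swap = 0 := by
          by_contra hc
          apply (hr0 _ hc).1
          rw [hz]; exact h0' j hjk
        rw [this]; simp
      · simp
    rw [h1, h2]; simp
  · have hje : j = ⟨k, hk⟩ := Fin.ext (by simp; omega)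
    subst hje
    simp only [hjk, if_false]
    refine ⟨ht, fun x => ?_⟩
    change ((Ei q r e hr).1 * h.1) x K = _
    rw [Ei_mul_apply, Ebe_sum, hqt]
    change h.1 x K + r x * (sg F q * h.1 t K) + (if x = q then S + e * sg F q * h.1 t K else 0) = _
    have hsq := sg_sq (F := F) q
    by_cases h1 : x = t
    · subst h1
      simp [r, hqne.symm]
    · by_cases h2 : x = q
      · subst h2
        simp only [r, e]
        have := sg_ne (F := F) q
        simp [h1]
        field_simp
        ring
      · simp only [r, h1, h2, or_self, if_false]
        field_simp
        linear_combination - h.1 x K * hsq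

lemma bru_stage (g : Sp a F) (k : ℕ) (hk : k ≤ a) :
    ∃ u ∈ Uni a F, ∃ u' ∈ Uni a F, ∃ p c, Stage k (u * g * u') p c := by
  induction k with
  | zero => exact ⟨1, one_mem _, 1, one_mem _, fun j => Sum.inl j, fun _ => 0, fun j hj => by simp at hj⟩
  | succ k ih =>
    obtain ⟨u, hu, u', hu', p, c, hs⟩ := ih (by omega)
    obtain ⟨v, hv, hs1, h0⟩ := step1 (by omega) hs
    obtain ⟨w, hw, p', c', hs2⟩ := step2 (by omega) hs1 h0
    refine ⟨w * u, mul_mem hw hu, u' * v, mul_mem hu' hv, p', c', ?_⟩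
    simpa [mul_assoc] using hs2

lemma mem_Uni_of_cols {g : Sp a F} (h : ∀ x j, g.1 x (Sum.inl j) = (1 : Matrix (Ix a) (Ix a) F) x (Sum.inl j)) :
    g ∈ Uni a F := by
  have hrow : ∀ j q, g.1 (Sum.inr j) q = (1 : Matrix (Ix a) (Ix a) F) (Sum.inr j) q := by
    intro j q
    have := row_of_col (g := g) (j := Sum.inl j) (p := Sum.inl j) (c := 1)
      (fun x => by rw [h, Matrix.one_apply]) q
    rw [Sum.swap_inl] at this
    simpa [Matrix.one_apply, eq_comm] using this
  intro x y hxy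
  rw [Matrix.sub_apply, sub_eq_zero]
  rcases y with y | y
  · exact h x y
  · rcases x with x | x
    · exfalso
      simp at hxy
      have := x.2; have := y.2
      omega
    · exact hrow x _

/-- Bruhat decomposition. -/
theorem bruhat (g : Sp a F) : ∃ u ∈ Uni a F, ∃ u' ∈ Uni a F, ∃ (π : Wy a) (d : Fin a → Fˣ),
    g = u * (nw F π * tor d) * u' := by
  obtain ⟨u, hu, u', hu', p, c, hs⟩ := bru_stage g a le_rfl
  let f : Ix a → Ix a := Sum.elim p (fun j => (p j).swap)
  have hf : Function.Injective f := by
    intro x y hxy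
    rcases x with x | x <;> rcases y with y | y <;> simp only [f, Sum.elim_inl, Sum.elim_inr] at hxy
    · rw [hs.inj x.2 y.2 hxy]
    · exact absurd hxy (hs.inj' x.2 y.2)
    · exact absurd hxy.symm (hs.inj' y.2 x.2)
    · rw [hs.inj x.2 y.2 (Sum.swap_leftInverse.injective hxy)]
  let π : Wy a := ⟨Equiv.ofBijective f (Finite.injective_iff_bijective.1 hf), by
    intro x
    change f x.swap = (f x).swap
    rcases x with x | x <;> simp [f]⟩
  let d : Fin a → Fˣ := fun j => Units.mk0 (c j) (hs j j.2).1
  set m : Sp a F := nw F π * tor d with hm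
  have hcol : ∀ x j, m.1 x (Sum.inl j) = (u * g * u').1 x (Sum.inl j) := by
    intro x j
    rw [(hs j j.2).2]
    change (nm F π * Matrix.diagonal (tde d)) x (Sum.inl j) = _
    rw [Matrix.mul_diagonal]
    change (if x = p j then nsg F π (Sum.inl j) else 0) * c j = _
    simp [nsg]
  have hv : m⁻¹ * (u * g * u') ∈ Uni a F := by
    apply mem_Uni_of_cols
    intro x j
    change ((m⁻¹ : Sp a F).1 * (u * g * u').1) x (Sum.inl j) = _
    rw [← coe_inv_mul m, Matrix.mul_apply, Matrix.mul_apply]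
    exact Finset.sum_congr rfl fun z _ => by rw [hcol]
  refine ⟨u⁻¹, (Uni a F).inv_mem hu, m⁻¹ * (u * g * u') * u'⁻¹, mul_mem hv ((Uni a F).inv_mem hu'), π, d, ?_⟩
  rw [← hm]
  group

end Bru

end SpSt


open Matrix

namespace SpSt

section WeylB

variable {a : ℕ} {F : Type} [Field F]

/-- The permutation of a simple reflection. -/
def sp (i : Fin a) : Equiv.Perm (Ix a) :=
  if (i : ℕ) + 1 < a then Equiv.swap (Sum.inl i) (sc i) * Equiv.swap (Sum.inr i) (sc i).swap
  else Equiv.swap (Sum.inl i) (sc i)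

lemma sc_last {i : Fin a} (hi : ¬ (i : ℕ) + 1 < a) : sc i = Sum.inr i := by
  unfold sc; rw [dif_neg hi]

lemma sc_not_last {i : Fin a} (hi : (i : ℕ) + 1 < a) : sc i = Sum.inl ⟨i + 1, hi⟩ := by
  unfold sc; rw [dif_pos hi]

lemma sp_inl (i : Fin a) : sp i (Sum.inl i) = sc i := by
  unfold sp
  split_ifs with hi
  · rw [Equiv.Perm.mul_apply, Equiv.swap_apply_of_ne_of_ne (a := Sum.inr i), Equiv.swap_apply_left]
    · simp
    · rw [sc_not_last hi]; simp
  · rw [Equiv.swap_apply_left]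

lemma sp_sc (i : Fin a) : sp i (sc i) = Sum.inl i := by
  unfold sp
  split_ifs with hi
  · rw [Equiv.Perm.mul_apply, Equiv.swap_apply_of_ne_of_ne (a := Sum.inr i), Equiv.swap_apply_right]
    · rw [sc_not_last hi]; simp
    · rw [sc_not_last hi]; simp
  · rw [Equiv.swap_apply_right]

lemma sp_inr (i : Fin a) : sp i (Sum.inr i) = (sc i).swap := by
  unfold sp
  split_ifs with hi
  · rw [Equiv.Perm.mul_apply, Equiv.swap_apply_left, Equiv.swap_apply_of_ne_of_ne]
    · rw [sc_not_last hi]; simp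
    · rw [sc_not_last hi]; simp
  · rw [sc_last hi, Equiv.swap_apply_right]; rfl

lemma sp_sc_swap (i : Fin a) : sp i (sc i).swap = Sum.inr i := by
  unfold sp
  split_ifs with hi
  · rw [Equiv.Perm.mul_apply, Equiv.swap_apply_right, Equiv.swap_apply_of_ne_of_ne]
    · simp
    · rw [sc_not_last hi]; simp
  · rw [sc_last hi, Sum.swap_inr, Equiv.swap_apply_left]

lemma sp_of_ne (i : Fin a) {x : Ix a} (h1 : x ≠ Sum.inl i) (h2 : x ≠ sc i) (h3 : x ≠ Sum.inr i)
    (h4 : x ≠ (sc i).swap) : sp i x = x := by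
  unfold sp
  split_ifs with hi
  · rw [Equiv.Perm.mul_apply, Equiv.swap_apply_of_ne_of_ne h3 h4, Equiv.swap_apply_of_ne_of_ne h1 h2]
  · rw [Equiv.swap_apply_of_ne_of_ne h1 h2]

lemma sp_swap (i : Fin a) (x : Ix a) : sp i x.swap = (sp i x).swap := by
  by_cases h1 : x = Sum.inl i
  · rw [h1, sp_inl, Sum.swap_inl, sp_inr]
  by_cases h2 : x = sc i
  · rw [h2, sp_sc, sp_sc_swap, Sum.swap_inl]
  by_cases h3 : x = Sum.inr i
  · rw [h3, sp_inr, Sum.swap_inr, sp_inl, Sum.swap_swap]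
  by_cases h4 : x = (sc i).swap
  · rw [h4, sp_sc_swap, Sum.swap_swap, sp_sc, Sum.swap_inr]
  rw [sp_of_ne i h1 h2 h3 h4, sp_of_ne i]
  · intro h; apply h3; rw [← Sum.swap_swap x, h]; rfl
  · intro h; apply h4; rw [← Sum.swap_swap x, h]
  · intro h; apply h1; rw [← Sum.swap_swap x, h]; rfl
  · intro h; apply h2; rw [← Sum.swap_swap x, h, Sum.swap_swap]

lemma sp_sp (i : Fin a) (x : Ix a) : sp i (sp i x) = x := by
  by_cases h1 : x = Sum.inl i
  · rw [h1, sp_inl, sp_sc]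
  by_cases h2 : x = sc i
  · rw [h2, sp_sc, sp_inl]
  by_cases h3 : x = Sum.inr i
  · rw [h3, sp_inr, sp_sc_swap]
  by_cases h4 : x = (sc i).swap
  · rw [h4, sp_sc_swap, sp_inr]
  rw [sp_of_ne i h1 h2 h3 h4, sp_of_ne i h1 h2 h3 h4]

/-- Simple reflections of the Weyl group. -/
def ss (i : Fin a) : Wy a := ⟨sp i, sp_swap i⟩

lemma ss_sq (i : Fin a) : ss i * ss i = 1 := by
  apply Subtype.ext; ext1 x; exact sp_sp i x

/-- The longest element. -/
def w0 (a : ℕ) : Wy a := ⟨Equiv.sumComm _ _, fun x => rfl⟩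

lemma Je_mono : Mono (w0 a) (Je a F) := by
  intro x y h
  change J (Fin a) F x y = 0
  rw [J_apply, if_neg]
  rintro rfl
  apply h
  change x = x.swap.swap
  simp

lemma Em_rot {p : Fin 2 → Ix a} (hp : Function.Injective p) (x y : Ix a)
    (h : x ≠ Equiv.swap (p 0) (p 1) y) : Em p (!![0, 1; -1, 0] : Matrix (Fin 2) (Fin 2) F) x y = 0 := by
  have h01 : p 0 ≠ p 1 := fun h => by simpa using hp h
  by_cases h0 : x = p 0
  · subst h0
    rw [Em_mulVec _ _ hp, Fin.sum_univ_two, Matrix.one_apply_ne (i := p 1)]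
    · simp
    · rintro rfl; simp at h
  by_cases h1 : x = p 1
  · subst h1
    rw [Em_mulVec _ _ hp, Fin.sum_univ_two, Matrix.one_apply_ne (i := p 0)]
    · simp
    · rintro rfl; simp at h
  rw [Em_row_out _ _ (fun k => by fin_cases k <;> assumption), Matrix.one_apply_ne]
  rintro rfl
  rw [Equiv.swap_apply_of_ne_of_ne h0 h1] at h
  exact h rfl

lemma sr_mono (i : Fin a) : Mono (ss i) (sr F i) := by
  have hA : ((!![0, 1; -1, 0] : Matrix (Fin 2) (Fin 2) F)⁻¹)ᵀ = !![0, 1; -1, 0] := by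
    ext k l; fin_cases k <;> fin_cases l <;>
      simp [Matrix.inv_def, Matrix.adjugate_fin_two, Matrix.det_fin_two]
  intro x y h
  change Km i _ x y = 0
  change x ≠ sp i y at h
  unfold Km
  unfold sp at h
  split_ifs at h ⊢ with hi
  · rw [hA, Matrix.mul_apply]
    refine Finset.sum_eq_zero fun z _ => ?_
    by_cases hz : z = Equiv.swap (Sum.inr i) (sc i).swap y
    · rw [Em_rot (p1_inj i) x z, zero_mul]
      rw [hz]; exact h
    · rw [Em_rot (p2_inj i) z y hz, mul_zero]
  · exact Em_rot (p1_inj i) x y h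

/-- The entries of the signed permutation matrix. -/
def sM (p : Ix a) (x : Fin a) : ℤ :=
  Sum.elim (fun y => if x = y then 1 else 0) (fun y => if x = y then -1 else 0) p

lemma sM_swap (p : Ix a) (x : Fin a) : sM p.swap x = - sM p x := by
  rcases p with p | p <;> simp [sM] <;> split_ifs <;> simp

/-- The sign character of the Weyl group. -/
def ep (π : Wy a) : ℤ := Matrix.det (Matrix.of fun x j => sM (π.1 (Sum.inl j)) x)

lemma ep_mul (π : Wy a) (i : Fin a) : ep (π * ss i) = - ep π := by
  unfold ep
  by_cases hi : (i : ℕ) + 1 < a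
  · have hne : i ≠ ⟨i + 1, hi⟩ := by intro h; have := congrArg Fin.val h; simp at this
    have := Matrix.det_permute' (Equiv.swap i ⟨i + 1, hi⟩)
      (Matrix.of fun x j => sM (π.1 (Sum.inl j)) x)
    rw [Equiv.Perm.sign_swap hne] at this
    push_cast at this
    rw [neg_one_mul] at this
    rw [← this]
    congr 1
    ext x j
    simp only [Matrix.of_apply, Matrix.submatrix_apply, id]
    change sM (π.1 (sp i (Sum.inl j))) x = _
    congr 2
    by_cases h1 : j = i
    · subst h1
      rw [sp_inl, Equiv.swap_apply_left, sc_not_last hi]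
    by_cases h2 : j = ⟨i + 1, hi⟩
    · rw [h2, ← sc_not_last hi, sp_sc, Equiv.swap_apply_right]
    rw [Equiv.swap_apply_of_ne_of_ne h1 h2, sp_of_ne]
    · simpa using h1
    · rw [sc_not_last hi]; simpa using h2
    · simp
    · rw [sc_not_last hi]; simp
  · have := Matrix.det_updateCol_smul (Matrix.of fun x j => sM (π.1 (Sum.inl j)) x) i (-1)
      (fun x => sM (π.1 (Sum.inl i)) x)
    have e : (Matrix.of fun x j => sM (π.1 (Sum.inl j)) x).updateCol i (fun x => sM (π.1 (Sum.inl i)) x) =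
      (Matrix.of fun x j => sM (π.1 (Sum.inl j)) x) := Matrix.updateCol_eq_self _ i
    rw [e, neg_one_mul] at this
    rw [← this]
    congr 1
    ext x j
    simp only [Matrix.of_apply, Matrix.updateCol_apply]
    change sM (π.1 (sp i (Sum.inl j))) x = _
    split_ifs with h
    · subst h
      rw [sp_inl, sc_last hi]
      change sM (π.1 (Sum.inl j).swap) x = _
      rw [Wy_swap, sM_swap]; simp
    · congr 2
      rw [sp_of_ne]
      · simpa using h
      · rw [sc_last hi]; simp
      · simp
      · rw [sc_last hi]; simpa using h

lemma ep_w0 : ep (w0 a) ≠ 0 := by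
  unfold ep
  have : (Matrix.of fun x j => sM ((w0 a).1 (Sum.inl j)) x) = (-1 : Matrix (Fin a) (Fin a) ℤ) := by
    ext x j
    change (if x = j then (-1 : ℤ) else 0) = _
    rw [Matrix.neg_apply, Matrix.one_apply]
    split_ifs <;> simp
  rw [this, Matrix.det_neg]
  simp

lemma eq_w0 (π : Wy a) (h : ∀ i, ¬ rh (π.1 (Sum.inl i)) < rh (π.1 (sc i))) : π = w0 a := by
  have hd : ∀ i, rh (π.1 (sc i)) < rh (π.1 (Sum.inl i)) := by
    intro i
    refine lt_of_le_of_ne (not_lt.1 (h i)) fun he => ?_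
    exact sc_ne i (π.1.injective (rh_inj he)).symm
  have hlow : ∀ k : ℕ, ∀ j : Fin a, (j : ℕ) + k + 1 = a → (k : ℤ) + 1 ≤ rh (π.1 (Sum.inl j)) := by
    intro k
    induction k with
    | zero =>
      intro j hj
      have h1 := hd j
      rw [sc_last (by omega)] at h1
      have h2 : rh (π.1 (Sum.inr j)) = - rh (π.1 (Sum.inl j)) := by
        rw [← rh_swap, ← Wy_swap]; rfl
      simp; omega
    | succ k ih =>
      intro j hj
      have h1 := hd j
      rw [sc_not_last (by omega)] at h1
      have h2 := ih ⟨j + 1, by omega⟩ (by simp; omega)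
      push_cast; omega
  have hup : ∀ k : ℕ, ∀ hk : k < a, rh (π.1 (Sum.inl ⟨k, hk⟩)) ≤ (a : ℤ) - k := by
    intro k
    induction k with
    | zero =>
      intro hk
      rcases π.1 (Sum.inl ⟨0, hk⟩) with x | x <;> simp
      have := x.2; omega
    | succ k ih =>
      intro hk
      have h1 := hd ⟨k, by omega⟩
      rw [sc_not_last (by simpa using hk)] at h1
      have := ih (by omega)
      push_cast; simp only at h1; omega
  have hin : ∀ j, π.1 (Sum.inl j) = Sum.inr j := by
    intro j
    apply rh_inj
    have h1 := hlow (a - j - 1) j (by omega)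
    have h2 := hup j j.2
    have := j.2
    rw [rh_inr]
    simp only [Fin.eta] at h2
    omega
  apply Subtype.ext
  ext1 x
  rcases x with x | x
  · exact hin x
  · have := Wy_swap π (Sum.inl x)
    rw [hin] at this
    exact this

/-- A statistic on the Weyl group. -/
def mu (π : Wy a) : ℤ := ∑ p, rh p * rh (π.1 p)

lemma mu_lt (π : Wy a) (i : Fin a) (h : rh (π.1 (Sum.inl i)) < rh (π.1 (sc i))) :
    mu (π * ss i) < mu π := by
  have e : mu (π * ss i) = ∑ p, rh (sp i p) * rh (π.1 p) := by
    unfold mu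
    refine Fintype.sum_equiv (sp i) _ _ fun p => ?_
    rw [sp_sp]; rfl
  rw [e, ← sub_neg]
  unfold mu
  rw [← Finset.sum_sub_distrib]
  have hpos := rh_sc i
  have hsw : rh (π.1 (Sum.inr i)) = - rh (π.1 (Sum.inl i)) := by
    rw [← rh_swap, ← Wy_swap]; rfl
  have hsw' : rh (π.1 (sc i).swap) = - rh (π.1 (sc i)) := by
    rw [← rh_swap, ← Wy_swap]
  by_cases hi : (i : ℕ) + 1 < a
  · have hs : ∀ p, rh (sp i p) * rh (π.1 p) - rh p * rh (π.1 p) =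
      (if p = Sum.inl i then rh (π.1 (Sum.inl i)) else 0) + (if p = sc i then - rh (π.1 (sc i)) else 0)
      + (if p = Sum.inr i then rh (π.1 (Sum.inl i)) else 0)
      + (if p = (sc i).swap then - rh (π.1 (sc i)) else 0) := by
      intro p
      have hd : (sc i).swap ≠ Sum.inl i := by rw [sc_not_last hi]; simp
      have hd2 : (sc i).swap ≠ sc i := swap_ne _
      have hd3 : sc i ≠ Sum.inr i := by rw [sc_not_last hi]; simp
      have hd4 : (sc i).swap ≠ Sum.inr i := by
        intro h; apply sc_ne i; rw [← Sum.swap_swap (sc i), h]; rfl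
      have hv : rh (sc i) = rh (Sum.inl i) + 1 := by rw [sc_not_last hi]; simp; ring
      have hv' : rh (sc i).swap = rh (Sum.inr i) - 1 := by rw [rh_swap, hv]; simp; ring
      by_cases h1 : p = Sum.inl i
      · subst h1
        rw [sp_inl, if_pos rfl, if_neg (sc_ne i), if_neg (by simp), if_neg hd.symm, hv]; ring
      by_cases h2 : p = sc i
      · subst h2
        rw [sp_sc, if_neg h1, if_pos rfl, if_neg hd3, if_neg hd2.symm, hv]; ring
      by_cases h3 : p = Sum.inr i
      · subst h3
        rw [sp_inr, if_neg h1, if_neg h2, if_pos rfl, if_neg hd4.symm, hv', hsw]; ring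
      by_cases h4 : p = (sc i).swap
      · subst h4
        rw [sp_sc_swap, if_neg h1, if_neg h2, if_neg h3, if_pos rfl, hv', hsw']; ring
      rw [sp_of_ne i h1 h2 h3 h4, if_neg h1, if_neg h2, if_neg h3, if_neg h4]; ring
    simp only [hs, Finset.sum_add_distrib, Finset.sum_ite_eq', Finset.mem_univ, if_true]
    omega
  · rw [sc_last hi] at h
    have hs : ∀ p, rh (sp i p) * rh (π.1 p) - rh p * rh (π.1 p) =
      (if p = Sum.inl i then 2 * ((a : ℤ) - i) * rh (π.1 (Sum.inl i)) else 0)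
      + (if p = Sum.inr i then - (2 * ((a : ℤ) - i) * rh (π.1 (Sum.inr i))) else 0) := by
      intro p
      by_cases h1 : p = Sum.inl i
      · subst h1
        rw [sp_inl, if_pos rfl, if_neg (by simp), sc_last hi, rh_inl, rh_inr]; ring
      by_cases h3 : p = Sum.inr i
      · subst h3
        rw [sp_inr, if_neg h1, if_pos rfl, sc_last hi, Sum.swap_inr, rh_inl, rh_inr]; ring
      rw [sp_of_ne i h1 (by rwa [sc_last hi]) h3 (by rw [sc_last hi]; exact h1), if_neg h1, if_neg h3]; ring
    simp only [hs, Finset.sum_add_distrib, Finset.sum_ite_eq', Finset.mem_univ, if_true]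
    have h2 : (a : ℤ) - i = 1 := by have := i.2; omega
    rw [h2]
    omega

/-- Induction on Weyl group elements, going up to the longest one. -/
lemma wy_ind {P : Wy a → Prop} (h0 : P (w0 a))
    (hs : ∀ π i, rh (π.1 (Sum.inl i)) < rh (π.1 (sc i)) → P (π * ss i) → P π) (π : Wy a) : P π := by
  have hwf : WellFounded (fun π σ : Wy a => mu π < mu σ) := by
    have : IsTrans (Wy a) (fun π σ : Wy a => mu π < mu σ) := ⟨fun _ _ _ h1 h2 => lt_trans h1 h2⟩
    have : Std.Irrefl (fun π σ : Wy a => mu π < mu σ) := ⟨fun _ => lt_irrefl _⟩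
    exact Finite.wellFounded_of_trans_of_irrefl _
  induction π using hwf.induction with
  | _ π ih =>
    by_cases h : ∃ i, rh (π.1 (Sum.inl i)) < rh (π.1 (sc i))
    · obtain ⟨i, hi⟩ := h
      exact hs π i hi (ih _ (mu_lt π i hi))
    · rw [eq_w0 π (not_exists.1 h)]; exact h0

lemma xr_mem_Rad {τ : Ix a → ℤ} (hτ : Odd' τ) (i : Fin a) (hi : τ (Sum.inl i) < τ (sc i)) (c : F) :
    xr i c ∈ Rad F τ hτ := by
  rw [mem_Rad]
  have h1 : InN τ (Em (p1 i) !![1, c; 0, 1] - 1) := by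
    refine Em_inN fun k l hkl => ?_
    fin_cases k <;> fin_cases l <;> simp [p1] at hkl ⊢
    omega
  change InN τ (Km i !![1, c; 0, 1] - 1)
  unfold Km
  split_ifs
  · have h2 : InN τ (Em (p2 i) (!![1, c; 0, 1]⁻¹)ᵀ - 1) := by
      refine Em_inN fun k l hkl => ?_
      rw [p2_eq, p2_eq, hτ, hτ] at hkl
      fin_cases k <;> fin_cases l <;>
        simp [p1, Matrix.inv_def, Matrix.adjugate_fin_two, Matrix.det_fin_two] at hkl ⊢
      omega
    have : Em (p1 i) !![1, c; 0, 1] * Em (p2 i) (!![1, c; 0, 1]⁻¹)ᵀ - 1 =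
      (Em (p1 i) !![1, c; 0, 1] - 1) * Em (p2 i) (!![1, c; 0, 1]⁻¹)ᵀ + (Em (p2 i) (!![1, c; 0, 1]⁻¹)ᵀ - 1) := by
      noncomm_ring
    rw [this]
    exact (h1.mulL (InL_of_sub h2)).add h2
  · exact h1

lemma Mono.conj_apply {π : Wy a} {m : Sp a F} (hm : Mono π m) (M : Matrix (Ix a) (Ix a) F) (x y : Ix a) :
    (m.1 * M * (m⁻¹ : Sp a F).1) (π.1 x) (π.1 y) = m.1 (π.1 x) x * M x y * (m⁻¹ : Sp a F).1 y (π.1 y) := by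
  rw [Matrix.mul_apply, Finset.sum_eq_single y, Matrix.mul_apply, Finset.sum_eq_single x]
  · intro z _ hz
    rw [hm _ z, zero_mul]
    intro h; exact hz (π.1.injective h).symm
  · simp
  · intro z _ hz
    rw [hm.inv z, mul_zero]
    intro h; apply hz; rw [h]; simp
  · simp

lemma Mono.conj_Rad {π : Wy a} {m : Sp a F} (hm : Mono π m) {u : Sp a F}
    (hu : u ∈ Rad F (fun p => rh (π.1 p)) (fun p => by simp only [Wy_swap, rh_swap])) : m * u * m⁻¹ ∈ Uni a F := by
  rw [mem_Uni]
  have h1 : (m * u * m⁻¹).1 - 1 = m.1 * (u.1 - 1) * (m⁻¹ : Sp a F).1 := by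
    rw [mul_sub, sub_mul, mul_one, coe_mul_inv]; rfl
  intro x y hxy
  obtain ⟨x, rfl⟩ := π.1.surjective x
  obtain ⟨y, rfl⟩ := π.1.surjective y
  rw [h1, hm.conj_apply, hu x y hxy, mul_zero, zero_mul]

lemma Mono.conj_xr {π : Wy a} {m : Sp a F} (hm : Mono π m) (i : Fin a)
    (hi : rh (π.1 (Sum.inl i)) < rh (π.1 (sc i))) (c : F) : m * xr i c * m⁻¹ ∈ Uni a F :=
  hm.conj_Rad (xr_mem_Rad _ i hi c)

/-- The values of coset sums of good functions. -/
theorem cosetSum_bruhat {ℓ : ℕ} [Fact ℓ.Prime] {k : Type*} [Field k] [CharP k ℓ]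
    {f : Sp a (ZMod ℓ) → k} (hf : Good ℓ f) (π : Wy a) (d : Fin a → (ZMod ℓ)ˣ) (u u' : Sp a (ZMod ℓ))
    (hu : u ∈ Uni a (ZMod ℓ)) (hu' : u' ∈ Uni a (ZMod ℓ)) :
    cosetSum (Uni a (ZMod ℓ)) f (u * (nw (ZMod ℓ) π * tor d) * u') =
      if π = w0 a then cosetSum (Uni a (ZMod ℓ)) f (Je a (ZMod ℓ)) else 0 := by
  rw [cosetSum_mul_right _ _ _ hu', cosetSum_mul_left _ hf.1 _ hu]
  have hm : Mono π (nw (ZMod ℓ) π * tor d) := by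
    have h1 : Mono 1 (tor d) := by
      intro x y hxy
      exact Matrix.diagonal_apply_ne _ hxy
    simpa using (nw_mono (F := ZMod ℓ) π).mul h1
  generalize nw (ZMod ℓ) π * tor d = m at hm
  split_ifs with h
  · subst h
    have := (Je_mono (a := a) (F := ZMod ℓ)).inv.mul hm
    rw [inv_mul_cancel] at this
    obtain ⟨e, he⟩ := this.tor
    have : m = Je a (ZMod ℓ) * tor e := by rw [← he, mul_inv_cancel_left]
    rw [this]
    exact cosetSum_J_tor hf e
  · have : ∃ i, rh (π.1 (Sum.inl i)) < rh (π.1 (sc i)) := by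
      by_contra hc
      exact h (eq_w0 π (not_exists.1 hc))
    obtain ⟨i, hi⟩ := this
    have hd := hm.conj_xr i hi (1 : ZMod ℓ)
    refine cosetSum_zero (Fact.out : ℓ.Prime) _ hf m (m * xr i 1 * m⁻¹) ?_ ?_ ?_ ?_
    · intro h1
      have h2 : xr i (1 : ZMod ℓ) = 1 := by simpa using h1
      have := xr_apply i (1 : ZMod ℓ)
      rw [h2] at this
      change (1 : Matrix (Ix a) (Ix a) (ZMod ℓ)) _ _ = 1 at this
      rw [Matrix.one_apply_ne (sc_ne i)] at this
      exact zero_ne_one this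
    · rw [conj_pow, xr_pow]
      simp [xr_zero]
    · exact fun v => Par_conj_iff (Uni_le_Bor hd) v
    · have : m⁻¹ * (m * xr i 1 * m⁻¹) * m * (m * xr i 1 * m⁻¹)⁻¹ = xr i 1 * (m * xr i 1 * m⁻¹)⁻¹ := by group
      rw [this]
      exact (Uni a (ZMod ℓ)).mul_mem (xr_mem i 1) ((Uni a (ZMod ℓ)).inv_mem hd)

theorem hprop_Sp {ℓ : ℕ} [Fact ℓ.Prime] (k : Type) [Field k] [CharP k ℓ]
    (f1 f2 : Sp a (ZMod ℓ) → k) (h1 : Good ℓ f1) (h2 : Good ℓ f2) (g g' : Sp a (ZMod ℓ)) :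
    cosetSum (Uni a (ZMod ℓ)) f1 g * cosetSum (Uni a (ZMod ℓ)) f2 g' =
      cosetSum (Uni a (ZMod ℓ)) f1 g' * cosetSum (Uni a (ZMod ℓ)) f2 g := by
  obtain ⟨u, hu, u', hu', π, d, rfl⟩ := bruhat g
  obtain ⟨v, hv, v', hv', σ, e, rfl⟩ := bruhat g'
  rw [cosetSum_bruhat h1 π d u u' hu hu', cosetSum_bruhat h2 π d u u' hu hu',
    cosetSum_bruhat h1 σ e v v' hv hv', cosetSum_bruhat h2 σ e v v' hv hv']
  split_ifs <;> simp

end WeylB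

end SpSt


open Matrix

namespace SpSt

section Car

variable {a : ℕ} {F : Type} [Field F]

lemma InN_pow {M : Matrix (Ix a) (Ix a) F} (h : InN rh M) (n : ℕ) :
    ∀ p q, rh q < rh p + n → (M ^ n) p q = 0 := by
  induction n with
  | zero =>
    intro p q hpq
    rw [pow_zero, Matrix.one_apply_ne]
    rintro rfl; simp at hpq
  | succ n ih =>
    intro p q hpq
    rw [pow_succ, Matrix.mul_apply]
    refine Finset.sum_eq_zero fun r _ => ?_
    by_cases h1 : rh r < rh p + n
    · rw [ih p r h1, zero_mul]
    · rw [h r q (by push_cast at hpq; omega), mul_zero]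

lemma rh_bd (p : Ix a) : -(a : ℤ) ≤ rh p ∧ rh p ≤ a := by
  rcases p with i | i <;> have := i.2 <;> simp <;> omega

lemma Uni_pGroup {ℓ : ℕ} [Fact ℓ.Prime] [CharP F ℓ] : IsPGroup ℓ (Uni a F) := by
  rintro ⟨u, hu⟩
  have hl : ℓ.Prime := Fact.out
  refine ⟨2 * a + 1, ?_⟩
  apply Subtype.ext
  apply Subtype.ext
  change u.1 ^ (ℓ ^ (2 * a + 1)) = 1
  have h1 : u.1 = (u.1 - 1) + 1 := by simp
  by_cases ha : IsEmpty (Fin a)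
  · ext p; rcases p with p | p <;> exact ha.elim p
  have : Nonempty (Fin a) := not_isEmpty_iff.1 ha
  have : CharP (Matrix (Ix a) (Ix a) F) ℓ := inferInstance
  have : ExpChar (Matrix (Ix a) (Ix a) F) ℓ := ExpChar.prime hl
  rw [h1, add_pow_expChar_pow_of_commute (p := ℓ) (n := 2 * a + 1) (Commute.one_right _), one_pow]
  have hz : (u.1 - 1) ^ (ℓ ^ (2 * a + 1)) = 0 := by
    ext p q
    apply InN_pow hu
    have h2 : 2 * a + 1 < ℓ ^ (2 * a + 1) := Nat.lt_pow_self hl.one_lt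
    have := rh_bd p
    have := rh_bd q
    have h3 : ((2 * a + 1 : ℕ) : ℤ) < ((ℓ ^ (2 * a + 1) : ℕ) : ℤ) := by exact_mod_cast h2
    push_cast at h3 ⊢
    omega
  rw [hz, zero_add]

lemma Bor_diag_mul {g h : Sp a F} (hg : g ∈ Bor a F) (hh : h ∈ Bor a F) (p : Ix a) :
    (g * h).1 p p = g.1 p p * h.1 p p := by
  change (g.1 * h.1) p p = _
  rw [Matrix.mul_apply, Finset.sum_eq_single p]
  · intro q _ hq
    rcases lt_or_gt_of_ne (fun h => hq (rh_inj h) : rh q ≠ rh p) with h1 | h1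
    · rw [hg p q h1, zero_mul]
    · rw [hh q p h1, mul_zero]
  · simp

/-- The diagonal of an element of the Borel subgroup. -/
noncomputable def diagHom (a : ℕ) (F : Type) [Field F] : Bor a F →* (Ix a → Fˣ) where
  toFun b := fun p => Units.mk0 (b.1.1 p p) (Bor_diag_ne b.2 p)
  map_one' := by
    ext p
    change (1 : Matrix (Ix a) (Ix a) F) p p = 1
    simp
  map_mul' b c := by
    ext p
    exact Bor_diag_mul b.2 c.2 p

lemma diagHom_ker : (diagHom a F).ker = (Uni a F).subgroupOf (Bor a F) := by
  ext b
  rw [MonoidHom.mem_ker, Subgroup.mem_subgroupOf, mem_Uni_iff]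
  constructor
  · intro h
    refine ⟨b.2, fun p => ?_⟩
    have := congrArg Units.val (congrFun h p)
    exact this
  · intro h
    ext p
    exact h.2 p

lemma eq_one_of_asc (π : Wy a) (h : ∀ i, ¬ rh (π.1 (sc i)) < rh (π.1 (Sum.inl i))) : π = 1 := by
  have := eq_w0 (w0 a * π) (fun i hi => by
    change rh (π.1 (Sum.inl i)).swap < rh (π.1 (sc i)).swap at hi
    rw [rh_swap, rh_swap] at hi
    exact h i (by omega))
  simpa using this

lemma fixed_one {g : Sp a F} (h : ∀ v ∈ Uni a F, g⁻¹ * v * g ∈ Bor a F) : g ∈ Bor a F := by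
  obtain ⟨u, hu, u', hu', π, d, rfl⟩ := bruhat g
  have hm : Mono π (nw F π * tor d) := by
    have h1 : Mono 1 (tor d) := by
      intro x y hxy
      exact Matrix.diagonal_apply_ne _ hxy
    simpa using (nw_mono (F := F) π).mul h1
  generalize nw F π * tor d = m at *
  have h2 : ∀ v ∈ Uni a F, m⁻¹ * v * m ∈ Bor a F := by
    intro v hv
    have h3 := h (u * v * u⁻¹) (mul_mem (mul_mem hu hv) ((Uni a F).inv_mem hu))
    have h4 := mul_mem (mul_mem (Uni_le_Bor hu') h3) ((Bor a F).inv_mem (Uni_le_Bor hu'))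
    convert h4 using 1
    group
  have hp : π⁻¹ = 1 := by
    apply eq_one_of_asc
    intro i hi
    have h3 := h2 _ (xr_mem i 1) _ _ hi
    have h4 := hm.inv.conj_apply (xr i (1 : F)).1 (Sum.inl i) (sc i)
    rw [inv_inv] at h4
    change ((m⁻¹ : Sp a F).1 * (xr i (1 : F)).1 * m.1) _ _ = 0 at h3
    rw [h4, xr_apply] at h3
    have h5 := hm.inv.ne (Sum.inl i)
    have h6 := hm.ne ((π⁻¹).1 (sc i))
    rw [show π.1 ((π⁻¹).1 (sc i)) = sc i from by simp] at h6
    simp at h3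
    rcases h3 with h3 | h3
    · exact h5 (by simpa using h3)
    · exact h6 (by simpa using h3)
  rw [inv_eq_one] at hp
  subst hp
  exact mul_mem (mul_mem (Uni_le_Bor hu) hm.mem_Bor) (Uni_le_Bor hu')

theorem index_Bor {ℓ : ℕ} [Fact ℓ.Prime] [CharP F ℓ] [Finite F] : ¬ ℓ ∣ (Bor a F).index := by
  have hp : IsPGroup ℓ (Uni a F) := Uni_pGroup
  have hmod := hp.card_modEq_card_fixedPoints (Sp a F ⧸ Bor a F)
  have hone : Nat.card (MulAction.fixedPoints (Uni a F) (Sp a F ⧸ Bor a F)) = 1 := by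
    rw [Nat.card_eq_one_iff_unique]
    refine ⟨⟨?_⟩, ⟨⟨((1 : Sp a F) : Sp a F ⧸ Bor a F), ?_⟩⟩⟩
    · have key : ∀ x : MulAction.fixedPoints (Uni a F) (Sp a F ⧸ Bor a F),
          x.1 = ((1 : Sp a F) : Sp a F ⧸ Bor a F) := by
        rintro ⟨x, hx⟩
        induction x using QuotientGroup.induction_on with
        | H g =>
          change (g : Sp a F ⧸ Bor a F) = _
          rw [eq_comm, QuotientGroup.eq]
          rw [inv_one, one_mul]
          apply fixed_one
          intro v hv
          have := hx ⟨v, hv⟩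
          have h2 : ((v * g : Sp a F) : Sp a F ⧸ Bor a F) = (g : Sp a F ⧸ Bor a F) := this
          rw [eq_comm, QuotientGroup.eq] at h2
          rwa [mul_assoc]
      intro x y
      exact Subtype.ext ((key x).trans (key y).symm)
    · rintro ⟨v, hv⟩
      change ((v * 1 : Sp a F) : Sp a F ⧸ Bor a F) = _
      rw [eq_comm, QuotientGroup.eq]
      simpa using Uni_le_Bor hv
  rw [hone] at hmod
  intro hd
  have h2 : Nat.card (Sp a F ⧸ Bor a F) ≡ 0 [MOD ℓ] := (Nat.modEq_zero_iff_dvd).2 hd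
  have h3 := hmod.symm.trans h2
  rw [Nat.modEq_zero_iff_dvd] at h3
  exact (Fact.out : ℓ.Prime).one_lt.ne' (Nat.dvd_one.1 h3)

theorem val_card {ℓ : ℕ} [Fact ℓ.Prime] :
    padicValNat ℓ (Nat.card (Sp a (ZMod ℓ))) = padicValNat ℓ (Nat.card (Uni a (ZMod ℓ))) := by
  have hl : ℓ.Prime := Fact.out
  have h1 : ¬ ℓ ∣ (Uni a (ZMod ℓ)).index := by
    rw [← Subgroup.relIndex_mul_index (Uni_le_Bor (a := a) (F := ZMod ℓ)), hl.dvd_mul]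
    rintro (h | h)
    · rw [Subgroup.relIndex, ← diagHom_ker, Subgroup.index_ker] at h
      have h2 := h.trans (Subgroup.card_subgroup_dvd_card (diagHom a (ZMod ℓ)).range)
      rw [Nat.card_fun] at h2
      have h3 := hl.dvd_of_dvd_pow h2
      rw [Nat.card_eq_fintype_card, ZMod.card_units] at h3
      have h4 := Nat.le_of_dvd (by have := hl.two_le; omega) h3
      have := hl.two_le
      omega
    · exact index_Bor h
  rw [← Subgroup.card_mul_index (Uni a (ZMod ℓ)), padicValNat.mul Nat.card_pos.ne'
    (fun h => h1 (by rw [h]; exact dvd_zero _)), padicValNat.eq_zero_of_not_dvd h1, add_zero]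

end Car

end SpSt


open Matrix

namespace SpSt

section Stb

variable {a : ℕ} {F : Type} [Field F] [Fintype F]

/-- The Steinberg module. -/
def StV (a : ℕ) (F : Type) [Field F] [Fintype F] : Submodule ℂ (Sp a F → ℂ) where
  carrier := {φ | (∀ g, ∀ b ∈ Bor a F, φ (g * b) = φ g) ∧
    ∀ g i, φ g + ∑ c : F, φ (g * xr i c * sr F i) = 0}
  add_mem' := by
    rintro φ ψ ⟨h1, h2⟩ ⟨h3, h4⟩
    refine ⟨fun g b hb => by simp only [Pi.add_apply, h1 g b hb, h3 g b hb], fun g i => ?_⟩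
    have := congrArg₂ (· + ·) (h2 g i) (h4 g i)
    simp only [Pi.add_apply, Finset.sum_add_distrib, add_zero] at this ⊢
    rw [← this]; ring
  zero_mem' := ⟨fun _ _ _ => rfl, fun g i => by simp⟩
  smul_mem' := by
    rintro c φ ⟨h1, h2⟩
    refine ⟨fun g b hb => by simp only [Pi.smul_apply, h1 g b hb], fun g i => ?_⟩
    simp only [Pi.smul_apply, smul_eq_mul]
    rw [← Finset.mul_sum, ← mul_add, h2, mul_zero]

/-- The Steinberg representation. -/
def StR (a : ℕ) (F : Type) [Field F] [Fintype F] : Representation ℂ (Sp a F) (StV a F) where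
  toFun h :=
    { toFun := fun φ => ⟨fun g => φ.1 (h⁻¹ * g), fun g b hb => by
          have := φ.2.1 (h⁻¹ * g) b hb
          simpa only [mul_assoc] using this, fun g i => by
          have := φ.2.2 (h⁻¹ * g) i
          simpa only [mul_assoc] using this⟩
      map_add' := fun φ ψ => rfl
      map_smul' := fun c φ => rfl }
  map_one' := by
    apply LinearMap.ext; intro φ
    apply Subtype.ext; funext g
    change φ.1 (1⁻¹ * g) = φ.1 g
    simp
  map_mul' h k := by
    apply LinearMap.ext; intro φ
    apply Subtype.ext; funext g
    change φ.1 ((h * k)⁻¹ * g) = φ.1 (k⁻¹ * (h⁻¹ * g))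
    rw [_root_.mul_inv_rev, mul_assoc]

lemma StR_apply (h : Sp a F) (φ : StV a F) (g : Sp a F) : (StR a F h φ).1 g = φ.1 (h⁻¹ * g) := rfl

lemma mono_tor (d : Fin a → Fˣ) : Mono 1 (tor d : Sp a F) := by
  intro x y hxy
  exact Matrix.diagonal_apply_ne _ hxy

lemma StV_zero (φ : StV a F) (h : ∀ u ∈ Uni a F, φ.1 (u * Je a F) = 0) : φ = 0 := by
  have key : ∀ π : Wy a, ∀ u ∈ Uni a F, ∀ m : Sp a F, Mono π m → φ.1 (u * m) = 0 := by
    intro π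
    induction π using wy_ind with
    | h0 =>
      intro u hu m hm
      have := (Je_mono (a := a) (F := F)).inv.mul hm
      rw [inv_mul_cancel] at this
      have h2 := φ.2.1 (u * Je a F) _ this.mem_Bor
      rw [mul_assoc, mul_inv_cancel_left, h u hu] at h2
      exact h2
    | hs π i hi ih =>
      intro u hu m hm
      have h2 := φ.2.2 (u * m) i
      rw [Finset.sum_eq_zero, add_zero] at h2
      · exact h2
      · intro c _
        have := ih (u * (m * xr i c * m⁻¹)) (mul_mem hu (hm.conj_xr i hi c)) (m * sr F i) (hm.mul (sr_mono i))
        rw [← this]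
        congr 1
        group
  apply Subtype.ext
  funext g
  obtain ⟨u, hu, u', hu', π, d, rfl⟩ := bruhat g
  have h1 := φ.2.1 (u * (nw F π * tor d)) u' (Uni_le_Bor hu')
  rw [h1]
  refine key π u hu _ ?_
  simpa using (nw_mono (F := F) π).mul (mono_tor d)

open scoped Classical in
lemma count_Pi (i : Fin a) (y : Sp a F) :
    (if y ∈ Bor a F then (1 : ℂ) else 0) + ∑ c : F, (if y * xr i c * sr F i ∈ Bor a F then (1 : ℂ) else 0) =
      if y ∈ Pi' F i then 1 else 0 := by
  have hx : ∀ c : F, xr i c ∈ Pi' F i := fun c => Ks_mem_Pi i _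
  have hs : sr F i ∈ Pi' F i := Ks_mem_Pi i _
  by_cases hy : y ∈ Pi' F i
  · rw [if_pos hy]
    have hB : ∀ z ∈ Pi' F i, (z ∈ Bor a F ↔ z.1 (sc i) (Sum.inl i) = 0) := fun z hz =>
      ⟨fun h => h _ _ (rh_sc i), fun h => mem_Bor_of_Pi i hz h⟩
    have hz : ∀ c : F, (y * xr i c * sr F i ∈ Bor a F ↔
        c * y.1 (sc i) (Sum.inl i) + y.1 (sc i) (sc i) = 0) := by
      intro c
      rw [hB _ (mul_mem (mul_mem hy (hx c)) hs)]
      have h1 : y * xr i c * sr F i = y * Ks i (!![1, c; 0, 1] * !![0, 1; -1, 0]) ((xok i c).mul (sok i)) := by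
        rw [mul_assoc, ← Ks_mul]; rfl
      rw [h1]
      have h2 := mul_Km_col i (!![1, c; 0, 1] * !![0, 1; -1, 0]) y.1 0 (sc i)
      rw [p1_0] at h2
      change (y.1 * Km i (!![1, c; 0, 1] * !![0, 1; -1, 0]) : Matrix (Ix a) (Ix a) F) _ _ = 0 ↔ _
      rw [h2]
      simp [Matrix.mul_apply, Fin.sum_univ_two]
      rw [← neg_eq_zero]
      ring_nf
    simp only [hz, hB y hy]
    by_cases h0 : y.1 (sc i) (Sum.inl i) = 0
    · have h1 : y.1 (sc i) (sc i) ≠ 0 := Bor_diag_ne ((hB y hy).2 h0) _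
      simp [h0, h1]
    · rw [if_neg h0, zero_add, Finset.sum_eq_single (-(y.1 (sc i) (sc i)) / y.1 (sc i) (Sum.inl i))]
      · rw [if_pos]
        field_simp
        ring
      · intro c _ hc
        rw [if_neg]
        intro h
        apply hc
        field_simp
        linear_combination h
      · simp
  · rw [if_neg hy, if_neg (fun h => hy (Bor_le_Pi i h)), zero_add]
    refine Finset.sum_eq_zero fun c _ => if_neg fun h => hy ?_
    have h1 := Bor_le_Pi i h
    have h2 := mul_mem (mul_mem h1 ((Pi' F i).inv_mem hs)) ((Pi' F i).inv_mem (hx c))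
    convert h2 using 1
    group

open scoped Classical in
/-- The basic element of the Steinberg module. -/
noncomputable def stA (a : ℕ) (F : Type) [Field F] (g : Sp a F) : ℂ :=
  ∑ w : Wy a, (ep w : ℂ) * (if (nw F w)⁻¹ * g ∈ Bor a F then 1 else 0)

lemma stA_mem : stA a F ∈ StV a F := by
  classical
  constructor
  · intro g b hb
    unfold stA
    refine Finset.sum_congr rfl fun w _ => ?_
    rw [← mul_assoc]
    simp only [Subgroup.mul_mem_cancel_right _ hb]
  · intro g i
    unfold stA
    rw [Finset.sum_comm, ← Finset.sum_add_distrib]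
    have h1 : ∀ w : Wy a, (ep w : ℂ) * (if (nw F w)⁻¹ * g ∈ Bor a F then 1 else 0) +
        ∑ c : F, (ep w : ℂ) * (if (nw F w)⁻¹ * (g * xr i c * sr F i) ∈ Bor a F then 1 else 0) =
        (ep w : ℂ) * (if (nw F w)⁻¹ * g ∈ Pi' F i then 1 else 0) := by
      intro w
      rw [← Finset.mul_sum, ← mul_add, ← count_Pi i ((nw F w)⁻¹ * g)]
      simp only [mul_assoc]
    simp only [h1]
    have h2 : ∑ w : Wy a, (ep w : ℂ) * (if (nw F w)⁻¹ * g ∈ Pi' F i then (1 : ℂ) else 0) =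
        ∑ w : Wy a, - ((ep w : ℂ) * (if (nw F w)⁻¹ * g ∈ Pi' F i then (1 : ℂ) else 0)) := by
      refine Fintype.sum_equiv (Equiv.mulRight (ss i)) _ _ fun w => ?_
      rw [Equiv.coe_mulRight, ep_mul]
      have h3 : (nw F (w * ss i))⁻¹ * nw F w ∈ Pi' F i := by
        have h4 : Mono 1 ((sr F i)⁻¹ * (nw F w)⁻¹ * nw F (w * ss i)) := by
          have := ((sr_mono (F := F) i).inv.mul (nw_mono (F := F) w).inv).mul (nw_mono (F := F) (w * ss i))
          convert this using 1
          group
        have h5 := (Pi' F i).inv_mem (mul_mem (Ks_mem_Pi i (sok (F := F) i)) (Bor_le_Pi i h4.mem_Bor))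
        convert h5 using 1
        change _ = (sr F i * _)⁻¹
        group
      have h6 : (nw F (w * ss i))⁻¹ * g = ((nw F (w * ss i))⁻¹ * nw F w) * ((nw F w)⁻¹ * g) := by group
      rw [h6]
      simp only [Subgroup.mul_mem_cancel_left _ h3]
      push_cast
      ring
    rw [Finset.sum_neg_distrib] at h2
    linear_combination h2 / 2

lemma big_cell {w : Wy a} {m u : Sp a F} (hm : Mono w m) (hu : u ∈ Uni a F)
    (h : m⁻¹ * (u * Je a F) ∈ Bor a F) : w = w0 a ∧ u = 1 := by
  have key : ∀ p q, rh q < rh p → u.1 (w.1 p) q.swap = 0 := by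
    intro p q hpq
    have h1 := h p q hpq
    change ((m⁻¹ : Sp a F).1 * (u.1 * J (Fin a) F)) p q = 0 at h1
    rw [Matrix.mul_apply, Finset.sum_eq_single (w.1 p), mul_J_apply] at h1
    · have h2 := hm.inv.ne (w.1 p)
      simp at h2
      simp [sg_ne] at h1
      rcases h1 with h1 | h1
      · exact absurd (by simpa using h1) h2
      · exact h1
    · intro x _ hx
      rw [hm.inv p x, zero_mul]
      rintro rfl
      apply hx
      simp
    · simp
  have hle : ∀ p, rh p ≤ - rh (w.1 p) := by
    intro p
    by_contra hc
    have h1 := key p (w.1 p).swap (by rw [rh_swap]; omega)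
    rw [Sum.swap_swap, (mem_Uni_iff.1 hu).2] at h1
    exact one_ne_zero h1
  have heq : ∀ p, w.1 p = p.swap := by
    intro p
    have h1 := hle p
    have h2 := hle p.swap
    rw [Wy_swap, rh_swap, rh_swap] at h2
    apply rh_inj
    rw [rh_swap]
    omega
  refine ⟨Subtype.ext (Equiv.ext heq), ?_⟩
  apply Subtype.ext
  ext x y
  rcases le_or_gt (rh y) (rh x) with hxy | hxy
  · have := hu x y hxy
    rw [Matrix.sub_apply, sub_eq_zero] at this
    exact this
  · have := key x.swap y.swap (by rw [rh_swap, rh_swap]; omega)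
    rw [heq, Sum.swap_swap, Sum.swap_swap] at this
    rw [this]
    change 0 = (1 : Matrix (Ix a) (Ix a) F) x y
    rw [Matrix.one_apply_ne]
    rintro rfl
    exact lt_irrefl _ hxy

open scoped Classical in
lemma stA_apply {u : Sp a F} (hu : u ∈ Uni a F) :
    stA a F (u * Je a F) = if u = 1 then (ep (w0 a) : ℂ) else 0 := by
  unfold stA
  split_ifs with h
  · subst h
    rw [Finset.sum_eq_single (w0 a)]
    · rw [if_pos, mul_one]
      have := (nw_mono (F := F) (w0 a)).inv.mul (Je_mono (a := a) (F := F))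
      rw [inv_mul_cancel] at this
      rw [one_mul]
      exact this.mem_Bor
    · intro w _ hw
      rw [if_neg, mul_zero]
      intro h
      exact hw (big_cell (nw_mono w) hu h).1
    · simp
  · refine Finset.sum_eq_zero fun w _ => ?_
    rw [if_neg, mul_zero]
    intro h1
    exact h (big_cell (nw_mono w) hu h1).2

/-- Restriction to the big cell. -/
def stRes (a : ℕ) (F : Type) [Field F] [Fintype F] : StV a F →ₗ[ℂ] (Uni a F → ℂ) where
  toFun φ := fun u => φ.1 (u.1 * Je a F)
  map_add' := fun _ _ => rfl
  map_smul' := fun _ _ => rfl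

lemma stRes_bij : Function.Bijective (stRes a F) := by
  classical
  constructor
  · rw [injective_iff_map_eq_zero]
    intro φ h
    exact StV_zero φ fun u hu => congrFun h ⟨u, hu⟩
  · intro ψ
    have := Fintype.ofFinite (Uni a F)
    refine ⟨∑ u : Uni a F, (ψ u / (ep (w0 a) : ℂ)) • StR a F u.1 ⟨stA a F, stA_mem⟩, ?_⟩
    funext v
    rw [map_sum, Finset.sum_apply]
    have h0 : (ep (w0 a) : ℂ) ≠ 0 := by exact_mod_cast ep_w0
    have h1 : ∀ u : Uni a F, stRes a F ((ψ u / (ep (w0 a) : ℂ)) • StR a F u.1 ⟨stA a F, stA_mem⟩) v =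
        if u = v then ψ v else 0 := by
      intro u
      rw [map_smul, Pi.smul_apply]
      change _ • stA a F (u.1⁻¹ * (v.1 * Je a F)) = _
      rw [← mul_assoc, stA_apply (mul_mem ((Uni a F).inv_mem u.2) v.2)]
      by_cases h : u = v
      · subst h
        rw [if_pos (by simp), if_pos rfl, smul_eq_mul]
        field_simp
      · rw [if_neg, if_neg h, smul_zero]
        intro h2
        exact h (Subtype.ext (inv_mul_eq_one.1 h2))
    simp only [h1]
    simp

lemma finrank_StV : Module.finrank ℂ (StV a F) = Nat.card (Uni a F) := by
  have := Fintype.ofFinite (Uni a F)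
  rw [LinearEquiv.finrank_eq (LinearEquiv.ofBijective (stRes a F) stRes_bij),
    Module.finrank_fintype_fun_eq_card, Nat.card_eq_fintype_card]

open scoped Classical in
/-- Averaging over the Borel subgroup. -/
noncomputable def stAv (a : ℕ) (F : Type) [Field F] [Fintype F] : StV a F →ₗ[ℂ] StV a F :=
  ∑ b : Bor a F, StR a F b.1

lemma stAv_one (φ : StV a F) (h : φ.1 1 ≠ 0) : (stAv a F φ).1 1 ≠ 0 := by
  classical
  have h1 : (stAv a F φ).1 1 = ∑ b : Bor a F, φ.1 1 := by
    unfold stAv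
    rw [LinearMap.sum_apply]
    rw [Submodule.coe_sum, Finset.sum_apply]
    refine Finset.sum_congr rfl fun b _ => ?_
    rw [StR_apply]
    have := φ.2.1 1 b.1⁻¹ ((Bor a F).inv_mem b.2)
    rw [one_mul] at this
    rw [mul_one, this]
  rw [h1, Finset.sum_const, nsmul_eq_mul]
  refine mul_ne_zero ?_ h
  rw [Finset.card_univ]
  exact_mod_cast Fintype.card_ne_zero

lemma stAv_fixed (φ : StV a F) {b : Sp a F} (hb : b ∈ Bor a F) (g : Sp a F) :
    (stAv a F φ).1 (b * g) = (stAv a F φ).1 g := by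
  classical
  unfold stAv
  rw [LinearMap.sum_apply, Submodule.coe_sum, Finset.sum_apply, Finset.sum_apply]
  refine Fintype.sum_equiv (Equiv.mulLeft (⟨b, hb⟩⁻¹ : Bor a F)) _ _ fun c => ?_
  rw [StR_apply, StR_apply]
  change φ.1 _ = φ.1 ((b⁻¹ * c.1)⁻¹ * g)
  congr 1
  group

lemma fixed_eq {φ ψ : StV a F} (hφ : ∀ b ∈ Bor a F, ∀ g, φ.1 (b * g) = φ.1 g)
    (hψ : ∀ b ∈ Bor a F, ∀ g, ψ.1 (b * g) = ψ.1 g) (h : φ.1 (Je a F) = ψ.1 (Je a F)) : φ = ψ := by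
  rw [← sub_eq_zero]
  apply StV_zero
  intro u hu
  change φ.1 _ - ψ.1 _ = 0
  rw [hφ u (Uni_le_Bor hu), hψ u (Uni_le_Bor hu), h, sub_self]

lemma stAv_comm {T : StV a F →ₗ[ℂ] StV a F} (hT : ∀ g φ, T (StR a F g φ) = StR a F g (T φ)) (φ : StV a F) :
    T (stAv a F φ) = stAv a F (T φ) := by
  unfold stAv
  rw [LinearMap.sum_apply, LinearMap.sum_apply, map_sum]
  exact Finset.sum_congr rfl fun b _ => hT _ _

lemma exists_val {φ : StV a F} (h : φ ≠ 0) : ∃ g, (StR a F g φ).1 1 ≠ 0 := by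
  by_contra hc
  push Not at hc
  apply h
  apply Subtype.ext
  funext g
  have := hc g⁻¹
  rw [StR_apply] at this
  simpa using this

lemma st_scalar {T : StV a F →ₗ[ℂ] StV a F} (hT : ∀ g φ, T (StR a F g φ) = StR a F g (T φ)) :
    ∃ c : ℂ, T = c • LinearMap.id := by
  have hA : (⟨stA a F, stA_mem⟩ : StV a F) ≠ 0 := by
    intro h
    have h1 := congrArg (fun φ : StV a F => φ.1 (1 * Je a F)) h
    change stA a F (1 * Je a F) = 0 at h1
    rw [stA_apply (one_mem _), if_pos rfl] at h1
    exact ep_w0 (by exact_mod_cast h1)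
  obtain ⟨g, hg⟩ := exists_val hA
  set β := stAv a F (StR a F g ⟨stA a F, stA_mem⟩) with hβ
  have hβ1 : β.1 1 ≠ 0 := stAv_one _ hg
  have hβf : ∀ b ∈ Bor a F, ∀ g, β.1 (b * g) = β.1 g := fun b hb g => stAv_fixed _ hb g
  have hβJ : β.1 (Je a F) ≠ 0 := by
    intro h
    apply hβ1
    have : β = 0 := fixed_eq hβf (fun _ _ _ => rfl) h
    rw [this]; rfl
  have hmul : ∀ φ : StV a F, (∀ b ∈ Bor a F, ∀ g, φ.1 (b * g) = φ.1 g) →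
      φ = (φ.1 (Je a F) / β.1 (Je a F)) • β := by
    intro φ hφ
    apply fixed_eq hφ
    · intro b hb g
      change (φ.1 (Je a F) / β.1 (Je a F)) • β.1 (b * g) = (φ.1 (Je a F) / β.1 (Je a F)) • β.1 g
      rw [hβf b hb]
    · change _ = _ * β.1 (Je a F)
      field_simp
  have hTβ := hmul (T β) (by rw [hβ, stAv_comm hT]; exact fun b hb g => stAv_fixed _ hb g)
  refine ⟨(T β).1 (Je a F) / β.1 (Je a F), ?_⟩
  set c := (T β).1 (Je a F) / β.1 (Je a F)
  apply LinearMap.ext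
  intro φ
  by_contra hne
  have hne' : T φ - c • φ ≠ 0 := fun h => hne (sub_eq_zero.1 h)
  obtain ⟨k, hk⟩ := exists_val hne'
  have h1 := stAv_one _ hk
  apply h1
  have h2 := hmul (stAv a F (StR a F k φ)) (fun b hb g => stAv_fixed _ hb g)
  have h3 : stAv a F (StR a F k (T φ - c • φ)) = 0 := by
    rw [map_sub, map_sub, map_smul, map_smul, ← hT, ← stAv_comm hT, h2, map_smul, hTβ, smul_comm, sub_self]
  rw [h3]
  rfl

instance : Module.Finite ℂ (StV a F) := inferInstance

/-- The Steinberg representation as an object. -/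
noncomputable def St (a : ℕ) (F : Type) [Field F] [Fintype F] : FDRep ℂ (Sp a F) := FDRep.of (StR a F)

lemma St_finrank : Module.finrank ℂ (St a F) = Nat.card (Uni a F) := finrank_StV

lemma St_simple : CategoryTheory.Simple (St a F) := by
  have := Fintype.ofFinite (Sp a F)
  have hG : (Nat.card (Sp a F) : ℂ) ≠ 0 := by exact_mod_cast Nat.card_pos.ne'
  have : NeZero (Nat.card (Sp a F) : ℂ) := ⟨hG⟩
  rw [FDRep.simple_iff_end_is_rank_one, finrank_inv_eq]
  let e : (Representation.linHom (St a F).ρ (St a F).ρ).invariants :=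
    ⟨LinearMap.id, (mem_inv_iff (St a F) _).2 fun g => rfl⟩
  have he : e ≠ 0 := by
    intro h
    have h2 : (LinearMap.id : St a F →ₗ[ℂ] St a F) = 0 := congrArg Subtype.val h
    have h3 : Subsingleton (St a F) := ⟨fun x y => by
      have hx := LinearMap.congr_fun h2 x
      have hy := LinearMap.congr_fun h2 y
      exact hx.trans hy.symm⟩
    have h4 := St_finrank (a := a) (F := F)
    rw [Module.finrank_zero_of_subsingleton] at h4
    exact Nat.card_pos.ne h4
  refine (finrank_eq_one_iff_of_nonzero' e he).2 ?_
  rintro ⟨T, hT⟩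
  rw [mem_inv_iff] at hT
  obtain ⟨c, hc⟩ := st_scalar (T := T) (fun g φ => LinearMap.congr_fun (hT g) φ)
  exact ⟨c, Subtype.ext hc.symm⟩

end Stb

end SpSt

theorem Sp_defect_zero_count (ℓ : ℕ) (hℓ : ℓ.Prime) (a : ℕ) (ha : 1 ≤ a) :
    Set.ncard { f : Matrix.symplecticGroup (Fin a) (ZMod ℓ) → ℂ |
      ∃ V : FDRep ℂ (Matrix.symplecticGroup (Fin a) (ZMod ℓ)),
        CategoryTheory.Simple V ∧ V.character = f ∧
        padicValNat ℓ (Module.finrank ℂ V) =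
          padicValNat ℓ (Nat.card (Matrix.symplecticGroup (Fin a) (ZMod ℓ))) } = 1 := by
  haveI : Fact ℓ.Prime := ⟨hℓ⟩
  have hSt : padicValNat ℓ (Module.finrank ℂ (SpSt.St a (ZMod ℓ))) =
      padicValNat ℓ (Nat.card (Matrix.symplecticGroup (Fin a) (ZMod ℓ))) := by
    rw [SpSt.St_finrank, SpSt.val_card]
  rw [Set.ncard_eq_one]
  refine ⟨(SpSt.St a (ZMod ℓ)).character, ?_⟩
  ext f
  rw [Set.mem_singleton_iff]
  constructor
  · rintro ⟨V, sV, rfl, hV⟩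
    letI := Fintype.ofFinite (SpSt.Sp a (ZMod ℓ))
    exact SpSt.char_unique hℓ (SpSt.Uni a (ZMod ℓ)) SpSt.Uni_pGroup
      (fun k _ _ f1 f2 h1 h2 g g' => SpSt.hprop_Sp k f1 f2 h1 h2 g g') V (SpSt.St a (ZMod ℓ)) sV
      SpSt.St_simple hV hSt
  · rintro rfl
    exact ⟨SpSt.St a (ZMod ℓ), SpSt.St_simple, rfl, hSt⟩
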